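/- Let R be a complete regular local domain of mixed characteristic p with F-finite residue field. Then the wepf closure is trivial on R: for every ideal I of R, I^wepf = I. -/

import Mathlib

open IsLocalRing TensorProduct
set_option synthInstance.maxHeartbeats 1000000
set_option maxHeartbeats 1000000

/-- The absolute integral closure `R⁺` of a domain `R`: the integral closure of `R`
in an algebraic closure of its fraction field. -/
noncomputable abbrev RPlus (R : Type) [CommRing R] [IsDomain R] : Type :=
  ↥(integralClosure R (AlgebraicClosure (FractionRing R)))

/-- The (full) extended plus closure of an ideal `I` of `R`. -/
def epfIdeal (p : ℕ) (R : Type) [CommRing R] [IsDomain R] (I : Ideal R) : Set R :=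
  {u | ∃ c : R, c ≠ 0 ∧ ∀ n N : ℕ, 0 < n → 0 < N →
    ∀ d : RPlus R, d ^ n = algebraMap R (RPlus R) c →
      d * algebraMap R (RPlus R) u ∈
        Ideal.map (algebraMap R (RPlus R)) I ⊔ Ideal.span {(p : RPlus R) ^ N}}

/-- The weak epf closure of an ideal `I` of `R`: `I^wepf = ⋂_{N ≥ 1} (I + p^N R)^epf`. -/
def wepfIdeal (p : ℕ) (R : Type) [CommRing R] [IsDomain R] (I : Ideal R) : Set R :=
  {u | ∀ N : ℕ, 0 < N → u ∈ epfIdeal p R (I ⊔ Ideal.span {(p : R) ^ N})}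

/-- A field `k` of characteristic `p` is F-finite if it is a finite module over
its subfield `k^p` of `p`-th powers. -/
def FFinite (p : ℕ) (k : Type) [Field k] : Prop :=
  ∃ (m : ℕ) (s : Fin m → k), ∀ a : k, ∃ c : Fin m → k, a = ∑ i, (c i) ^ p * s i

/-!
Adjoining to `R` all `p`-power roots of a regular system of parameters and of lifts of a `p`-basis
of the residue field gives a flat tower `R → H` of complete regular local rings, along which
Frobenius modulo `p` becomes surjective. The `p`-adic completion of `H` is perfectoid: it is an
untilt `W(E) / (p + [t] w)` of a perfect ring `E`.

Suppose `u ∈ J^epf`, where `p ^ N ∈ J`, is witnessed by `c`, and take `d ∈ R⁺` with `d ^ n = c` and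
`d u ∈ J R⁺`. This membership takes place in a finite `R`-algebra `A ⊆ R⁺`, and some `g ≠ 0` in `R`
moves `A` into a monogenic algebra `R[X] / (f)` with `f` monic. By André's flatness lemma there is
an untilt `T`, faithfully flat over `R` modulo `p`, in which `f` has a root and `g` has compatible
`p`-power roots. The image of `A` in `T[1/g]` is then almost integral over `T`, so that it lies in
`T` up to `p`-power roots of `g p`. If `u ∉ J`, flatness forces the image of `d`, multiplied by such
roots, into `𝔪 T`. Choosing `n` with `c ∉ 𝔪 ^ n`, one obtains that all `p`-power roots of `g p` have
`n`-th power in `𝔪 T`, which contradicts `g p ≠ 0` by flatness and Krull's intersection theorem.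
Hence `u ∈ J`, and a further application of Krull's theorem to `J = I + p ^ N R` concludes.
-/

open scoped Matrix nonZeroDivisors

/-! ### Flatness modulo an element -/

section FlatModulo

variable {A B C : Type*} [CommRing A] [CommRing B] [CommRing C] {f : A →+* B} {π : A}

/-- `FlatModulo f π` says that `B / f(π)B` is flat over `A / πA`, in the form of the equational
criterion: every relation `∑ f(aᵢ) bᵢ ≡ 0 (mod π)` is, modulo `π`, a consequence of relations
between the `aᵢ` in `A`. -/
def FlatModulo (f : A →+* B) (π : A) : Prop :=
  ∀ (ι : Type) [Fintype ι] (a : ι → A) (b : ι → B), f π ∣ f ∘ a ⬝ᵥ b →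
    ∃ (κ : Type) (_ : Fintype κ) (α : Matrix ι κ A) (w : κ → B) (e : ι → B),
      b = α.map f *ᵥ w + f π • e ∧ ∀ j, π ∣ (a ᵥ* α) j

theorem map_comp_dotProduct_map_mulVec {ι κ : Type*} [Fintype ι] [Fintype κ]
    (f : A →+* B) (a : ι → A) (α : Matrix ι κ A) (w : κ → B) :
    f ∘ a ⬝ᵥ α.map f *ᵥ w = f ∘ (a ᵥ* α) ⬝ᵥ w := by
  rw [Matrix.dotProduct_mulVec]
  congr 1
  ext j
  simp [Matrix.vecMul, map_sum, dotProduct]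

namespace FlatModulo

theorem mul {ρ : A} (hρ : FlatModulo f ρ) (hπ : FlatModulo f π) (hreg : f ρ ∈ B⁰) :
    FlatModulo f (ρ * π) := by
  intro ι _ a b ⟨y, hy⟩
  obtain ⟨κ, _, α, w, e, rfl, hα⟩ := hρ ι a b ⟨f π * y, by rw [hy, map_mul, mul_assoc]⟩
  choose c hc using hα
  have hac : a ᵥ* α = ρ • c := funext hc
  have hcw : f π ∣ f ∘ Sum.elim c a ⬝ᵥ Sum.elim w e := by
    refine ⟨y, (mul_cancel_left_mem_nonZeroDivisors hreg).1 ?_⟩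
    rw [← mul_assoc, ← map_mul, ← hy, dotProduct_add, map_comp_dotProduct_map_mulVec, hac,
      dotProduct_smul, Sum.comp_elim, sumElim_dotProduct_sumElim]
    simp [dotProduct, Finset.mul_sum, mul_add, mul_assoc]
  obtain ⟨μ, _, β, v, e', hwe, hβ⟩ := hπ _ _ _ hcw
  obtain ⟨β₁, β₂, rfl⟩ : ∃ β₁ β₂, β = Matrix.fromRows β₁ β₂ := ⟨_, _, β.fromRows_toRows.symm⟩
  have hw : w = β₁.map f *ᵥ v + f π • (e' ∘ Sum.inl) := by
    ext j; simpa [Matrix.mulVec, dotProduct] using congrFun hwe (Sum.inl j)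
  have he : e = β₂.map f *ᵥ v + f π • (e' ∘ Sum.inr) := by
    ext i; simpa [Matrix.mulVec, dotProduct] using congrFun hwe (Sum.inr i)
  refine ⟨μ ⊕ κ, inferInstance, Matrix.fromCols (α * β₁ + ρ • β₂) (π • α),
    Sum.elim v (e' ∘ Sum.inl), e' ∘ Sum.inr, ?_, ?_⟩
  · have hmap : (Matrix.fromCols (α * β₁ + ρ • β₂) (π • α)).map f =
        Matrix.fromCols (α.map f * β₁.map f + f ρ • β₂.map f) (f π • α.map f) := by
      ext i (l | j) <;> simp [Matrix.mul_apply]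
    rw [hw, he, hmap]
    simp only [Matrix.fromCols_mulVec, Sum.elim_comp_inl, Sum.elim_comp_inr, Matrix.mulVec_add,
      Matrix.mulVec_smul, Matrix.add_mulVec, Matrix.smul_mulVec, Matrix.mulVec_mulVec, map_mul]
    module
  · simp only [Matrix.vecMul_fromRows, Sum.elim_comp_inl, Sum.elim_comp_inr] at hβ
    rw [Matrix.vecMul_fromCols]
    simp only [Matrix.vecMul_add, Matrix.vecMul_smul, ← Matrix.vecMul_vecMul, hac,
      Matrix.smul_vecMul, ← smul_add]
    rintro (l | j)
    · exact mul_dvd_mul_left ρ (hβ l)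
    · exact ⟨c j, by simp; ring⟩

theorem pow (h : FlatModulo f π) (hreg : f π ∈ B⁰) (n : ℕ) : FlatModulo f (π ^ (n + 1)) := by
  induction n with
  | zero => simpa using h
  | succ n ih => rw [pow_succ]; exact ih.mul h (by rw [map_pow]; exact pow_mem hreg _)

theorem comp {g : B →+* C} (hf : FlatModulo f π) (hg : FlatModulo g (f π)) :
    FlatModulo (g.comp f) π := by
  intro ι _ a c hac
  obtain ⟨κ, _, β, w, e, hc, hβ⟩ := hg ι (f ∘ a) c hac
  choose κ' _ α v e' hb hα using fun j => hf ι a (fun i => β i j) (hβ j)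
  refine ⟨Σ j, κ' j, inferInstance, .of fun i jk => α jk.1 i jk.2,
    fun jk => g (v jk.1 jk.2) * w jk.1, fun i => ∑ j, g (e' j i) * w j + e i, ?_,
    fun ⟨j, k⟩ => hα j k⟩
  ext i
  have hβi (j : κ) : β i j = ∑ k, f (α j i k) * v j k + f π * e' j i := congrFun (hb j) i
  simp only [hc, Matrix.mulVec, dotProduct, Matrix.map_apply, Matrix.of_apply, hβi, Pi.add_apply,
    Pi.smul_apply, smul_eq_mul, RingHom.comp_apply, Fintype.sum_sigma, map_add, map_sum, map_mul,
    add_mul, Finset.sum_add_distrib, Finset.sum_mul, Finset.mul_sum, mul_add, mul_assoc, add_assoc]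

theorem of_flat (h : f.Flat) (π : A) : FlatModulo f π := by
  intro ι _ a b ⟨y, hy⟩
  algebraize [f]
  obtain ⟨k, α, w, hα, hrel⟩ := Module.Flat.isTrivialRelation_of_sum_smul_eq_zero (R := A) (M := B)
    (f := fun i : Option ι => i.elim (-π) a) (x := fun i => i.elim y b) (by
      have : ∑ i, f (a i) * b i = f π * y := hy
      simp [Fintype.sum_option, Algebra.smul_def, RingHom.algebraMap_toAlgebra, this])
  refine ⟨Fin k, inferInstance, .of fun i j => α (some i) j, w, 0, ?_, fun j => ⟨α none j, ?_⟩⟩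
  · ext i
    simpa [Matrix.mulVec, dotProduct, Algebra.smul_def, RingHom.algebraMap_toAlgebra]
      using hα (some i)
  · have := hrel j
    simp only [Fintype.sum_option, Option.elim_none, Option.elim_some] at this
    exact (eq_neg_of_add_eq_zero_right this).trans (by ring)

theorem of_bijective_mod (hsurj : ∀ b, ∃ a, f π ∣ b - f a) (hinj : ∀ a, f π ∣ f a → π ∣ a) :
    FlatModulo f π := by
  intro ι _ a b hab
  choose β e he using fun i => hsurj (b i)
  have hb : b = f ∘ β + f π • e := funext fun i => by simp [← he]
  refine ⟨Unit, inferInstance, .of fun i _ => β i, fun _ => 1, e, ?_, fun _ => hinj _ ?_⟩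
  · simpa [Matrix.mulVec, dotProduct, funext_iff] using congrFun hb
  · rw [hb, dotProduct_add, dotProduct_smul, ← RingHom.map_dotProduct] at hab
    exact (dvd_add_left (dvd_mul_right _ _)).1 hab

theorem iff_of_reduction {Q Q' : Type*} [CommRing Q] [CommRing Q'] {q : A →+* Q} {q' : B →+* Q'}
    {k : Q →+* Q'} (hk : ∀ a, k (q a) = q' (f a)) (hq : Function.Surjective q)
    (hq' : Function.Surjective q') (hker : ∀ a, q a = 0 ↔ π ∣ a)
    (hker' : ∀ b, q' b = 0 ↔ f π ∣ b) : FlatModulo f π ↔ FlatModulo k 0 := by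
  have hdot {ι : Type} [Fintype ι] (a : ι → A) (b : ι → B) :
      q' (f ∘ a ⬝ᵥ b) = k ∘ q ∘ a ⬝ᵥ q' ∘ b := by
    simp [dotProduct, hk]
  have hmul {ι κ : Type} [Fintype κ] (α : Matrix ι κ A) (w : κ → B) :
      q' ∘ (α.map f *ᵥ w) = (α.map q).map k *ᵥ q' ∘ w := by
    ext i; simp [Matrix.mulVec, dotProduct, hk]
  refine ⟨fun h ι _ a b hab => ?_, fun h ι _ a b hab => ?_⟩
  · obtain ⟨a, rfl⟩ := hq.comp_left a
    obtain ⟨b, rfl⟩ := hq'.comp_left b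
    rw [map_zero, zero_dvd_iff] at hab
    obtain ⟨κ, _, α, w, e, hb, hα⟩ := h ι a b ((hker' _).1 ((hdot a b).trans hab))
    refine ⟨κ, inferInstance, α.map q, q' ∘ w, 0, ?_, fun j => zero_dvd_iff.2 ?_⟩
    · rw [smul_zero, add_zero, ← hmul, hb]
      ext i
      simp [(hker' (f π)).2 dvd_rfl]
    · rw [← RingHom.map_vecMul, (hker _).2 (hα j)]
  · rw [← hker', hdot, ← zero_dvd_iff, ← map_zero k] at hab
    obtain ⟨κ, _, α, w, e, hb, hα⟩ := h ι _ _ hab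
    obtain ⟨α, rfl⟩ : ∃ α' : Matrix ι κ A, α'.map q = α :=
      ⟨α.map (Function.surjInv hq), by ext; simp [Function.surjInv_eq hq]⟩
    obtain ⟨w, rfl⟩ := hq'.comp_left w
    have hdvd (i : ι) : f π ∣ b i - (α.map f *ᵥ w) i := by
      rw [← hker', map_sub, sub_eq_zero, ← Function.comp_apply (f := q'), hb,
        ← Function.comp_apply (f := q'), hmul]
      simp
    choose e he using hdvd
    refine ⟨κ, inferInstance, α, w, e, funext fun i => ?_, fun j => (hker _).1 ?_⟩
    · rw [Pi.add_apply, Pi.smul_apply, smul_eq_mul, ← he, add_sub_cancel]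
    · rw [RingHom.map_vecMul, zero_dvd_iff.1 (hα j)]

theorem exists_eq_sum_of_mul_mem_map (h : FlatModulo f π) {J : Ideal A} (hJ : π ∈ J) {u : A}
    {b : B} (hb : f u * b ∈ J.map f) :
    ∃ (κ : Type) (_ : Fintype κ) (α : κ → A) (w : κ → B),
      b = ∑ j, f (α j) * w j ∧ ∀ j, u * α j ∈ J := by
  obtain ⟨n, s, g, hs⟩ := (Submodule.mem_span_set' (R := B)).1 hb
  choose x hxJ hx using fun i => (g i).2
  obtain ⟨κ, _, α, w, e, hα, hrel⟩ := h (Option (Fin n)) (fun o => o.elim u (fun i => - x i))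
    (fun o => o.elim b s) (by
      rw [dotProduct, Fintype.sum_option]
      simp [← hs, hx, mul_comm])
  refine ⟨Option κ, inferInstance, fun o => o.elim π (α none), fun o => o.elim (e none) w, ?_, ?_⟩
  · rw [Fintype.sum_option, add_comm]
    exact congrFun hα none
  · rintro (_ | j)
    · exact J.mul_mem_left _ hJ
    have hsum := J.mem_of_dvd (hrel j) hJ
    simp only [Matrix.vecMul, dotProduct, Fintype.sum_option, Option.elim_none, Option.elim_some]
      at hsum
    exact (J.add_mem_iff_left (J.sum_mem fun i _ =>
      J.mul_mem_right _ (J.neg_mem (hxJ i)))).1 hsum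

theorem mem_map_of_mul_mem_map (h : FlatModulo f π) {J J' : Ideal A} (hJ : π ∈ J) {u : A} {b : B}
    (hb : f u * b ∈ J.map f) (hJ' : ∀ a, u * a ∈ J → a ∈ J') : b ∈ J'.map f := by
  obtain ⟨κ, _, α, w, rfl, hα⟩ := h.exists_eq_sum_of_mul_mem_map hJ hb
  exact Ideal.sum_mem _ fun j _ => Ideal.mul_mem_right _ _ (Ideal.mem_map_of_mem f (hJ' _ (hα j)))

variable [IsLocalRing A]

theorem mem_map_maximalIdeal (h : FlatModulo f π) {J : Ideal A} (hJ : π ∈ J) {u : A} {b : B}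
    (hb : f u * b ∈ J.map f) (hu : u ∉ J) : b ∈ (maximalIdeal A).map f :=
  h.mem_map_of_mul_mem_map hJ hb fun _ ha hunit => hu ((J.mul_unit_mem_iff_mem hunit).1 ha)

theorem mem_of_map_mem_map (h : FlatModulo f π) (hm : (maximalIdeal A).map f ≠ ⊤) {J : Ideal A}
    (hJ : π ∈ J) {u : A} (hu : f u ∈ J.map f) : u ∈ J := by
  by_contra huJ
  exact hm ((Ideal.eq_top_iff_one _).2 (h.mem_map_maximalIdeal hJ (b := 1) (by simpa using hu) huJ))

end FlatModulo

/-- `FaithfulModulo f π` is the faithfulness half of faithful flatness of `A / πA → B / f(π)B`: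
no proper ideal of `A` containing `π` generates the unit ideal of `B`. -/
def FaithfulModulo (f : A →+* B) (π : A) : Prop :=
  ∀ ⦃𝔞 : Ideal A⦄, π ∈ 𝔞 → 𝔞.map f = ⊤ → 𝔞 = ⊤

namespace FaithfulModulo

theorem comp {g : B →+* C} (hf : FaithfulModulo f π) (hg : FaithfulModulo g (f π)) :
    FaithfulModulo (g.comp f) π := fun 𝔞 hπ htop =>
  hf hπ (hg (Ideal.mem_map_of_mem f hπ) (by rwa [Ideal.map_map]))

theorem iff_of_reduction {Q Q' : Type*} [CommRing Q] [CommRing Q'] {q : A →+* Q} {q' : B →+* Q'}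
    {k : Q →+* Q'} (hk : ∀ a, k (q a) = q' (f a)) (hq : Function.Surjective q)
    (hq' : Function.Surjective q') (hker : ∀ a, q a = 0 ↔ π ∣ a)
    (hker' : ∀ b, q' b = 0 ↔ f π ∣ b) : FaithfulModulo f π ↔ FaithfulModulo k 0 := by
  have hcomp : k.comp q = q'.comp f := RingHom.ext hk
  refine ⟨fun h 𝔟 _ htop => ?_, fun h 𝔞 hπ htop => ?_⟩
  · have hπ : π ∈ 𝔟.comap q := by rw [Ideal.mem_comap, (hker π).2 dvd_rfl]; exact 𝔟.zero_mem
    have hmap : ((𝔟.comap q).map f).map q' = ⊤ := by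
      rw [Ideal.map_map, ← hcomp, ← Ideal.map_map, Ideal.map_comap_of_surjective q hq, htop]
    have hker'_le : RingHom.ker q' ≤ (𝔟.comap q).map f := fun b hb =>
      Ideal.mem_of_dvd _ ((hker' b).1 hb) (Ideal.mem_map_of_mem f hπ)
    rw [Ideal.map_eq_top_iff_of_ker_le q' hker'_le (q'.isIntegral_of_surjective hq')] at hmap
    rw [← Ideal.map_comap_of_surjective q hq 𝔟, h hπ hmap, Ideal.map_top]
  · have hmap : (𝔞.map q).map k = ⊤ := by
      rw [Ideal.map_map, hcomp, ← Ideal.map_map, htop, Ideal.map_top]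
    have hker_le : RingHom.ker q ≤ 𝔞 := fun a ha => 𝔞.mem_of_dvd ((hker a).1 ha) hπ
    exact (Ideal.map_eq_top_iff_of_ker_le q hker_le (q.isIntegral_of_surjective hq)).1
      (h (zero_mem _) hmap)

end FaithfulModulo
end FlatModulo

/-! ### Untilts of perfect rings -/

section Untilts

open WittVector

section WittVector

variable {p : ℕ} [Fact p.Prime] {E : Type*} [CommRing E]

theorem constantCoeff_teichmuller (a : E) : constantCoeff (teichmuller p a) = a :=
  teichmuller_coeff_zero p a

theorem constantCoeff_natCast_self [CharP E p] : constantCoeff (p : WittVector p E) = 0 := by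
  rw [map_natCast, CharP.cast_eq_zero]

variable [CharP E p] [PerfectRing E p]

theorem natCast_dvd_of_constantCoeff_eq_zero {x : WittVector p E} (h : constantCoeff x = 0) :
    (p : WittVector p E) ∣ x :=
  Ideal.mem_span_singleton.1 ((mem_span_p_iff_coeff_zero_eq_zero x).2 h)

theorem exists_eq_teichmuller_add_natCast_mul (x : WittVector p E) :
    ∃ y, x = teichmuller p (constantCoeff x) + p * y := by
  obtain ⟨y, hy⟩ := natCast_dvd_of_constantCoeff_eq_zero
    (x := x - teichmuller p (constantCoeff x))
    (by rw [map_sub, constantCoeff_teichmuller, sub_self])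
  exact ⟨y, by rw [← hy, add_sub_cancel]⟩

theorem natCast_mem_nonZeroDivisors_wittVector : (p : WittVector p E) ∈ (WittVector p E)⁰ :=
  mem_nonZeroDivisors_iff_right.2 eq_zero_of_p_mul_eq_zero

theorem isUnit_of_isUnit_constantCoeff {x : WittVector p E} (h : IsUnit (constantCoeff x)) :
    IsUnit x := by
  obtain ⟨e, he⟩ := h.exists_right_inv
  have hcoeff : constantCoeff (x * teichmuller p e - 1) = 0 := by
    rw [map_sub, map_mul, constantCoeff_teichmuller, he, map_one, sub_self]
  have hjac : x * teichmuller p e - 1 ∈ (⊥ : Ideal (WittVector p E)).jacobson :=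
    IsAdicComplete.le_jacobson_bot (Ideal.span {(p : WittVector p E)})
      (Ideal.mem_span_singleton.2 (natCast_dvd_of_constantCoeff_eq_zero hcoeff))
  have hu := Ideal.mem_jacobson_bot.1 hjac 1
  rw [mul_one, sub_add_cancel] at hu
  exact isUnit_of_mul_isUnit_left hu

end WittVector

/-- A presentation `T ≅ W(E) / (p + [t] w)` of `T` as an untilt of the perfect ring `E` of
characteristic `p`, where `t` is a nonzerodivisor and `w` is a unit; `theta` is the projection.
Neither ring is required to be adically complete. -/
structure Untilt (p : ℕ) [Fact p.Prime] (E T : Type*) [CommRing E] [CharP E p] [PerfectRing E p]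
    [CommRing T] where
  theta : WittVector p E →+* T
  t : E
  w : (WittVector p E)ˣ
  theta_surjective : Function.Surjective theta
  ker_theta : RingHom.ker theta =
    Ideal.span {(p : WittVector p E) + teichmuller p t * (w : WittVector p E)}
  t_mem_nonZeroDivisors : t ∈ E⁰

namespace Untilt

variable {p : ℕ} [Fact p.Prime] {E T : Type*} [CommRing E] [CharP E p] [PerfectRing E p]
  [CommRing T] (P : Untilt p E T)

/-- The multiplicative map `a ↦ a♯ = θ([a])`. -/
noncomputable def sharp : E →* T := P.theta.toMonoidHom.comp (teichmuller p)

theorem sharp_apply (a : E) : P.sharp a = P.theta (teichmuller p a) := rfl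

theorem theta_eq_zero_iff (x : WittVector p E) :
    P.theta x = 0 ↔ (p : WittVector p E) + teichmuller p P.t * (P.w : WittVector p E) ∣ x := by
  rw [← RingHom.mem_ker, P.ker_theta, Ideal.mem_span_singleton]

theorem constantCoeff_generator_mul (z : WittVector p E) :
    constantCoeff (((p : WittVector p E) + teichmuller p P.t * (P.w : WittVector p E)) * z) =
      P.t * (constantCoeff (P.w : WittVector p E) * constantCoeff z) := by
  rw [map_mul, map_add, map_mul, constantCoeff_natCast_self, constantCoeff_teichmuller, zero_add,
    mul_assoc]

theorem associated_sharp_t : Associated (P.sharp P.t) (p : T) := by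
  have h := (P.theta_eq_zero_iff _).2 dvd_rfl
  rw [map_add, map_mul, map_natCast] at h
  refine ⟨-(Units.map P.theta.toMonoidHom P.w), ?_⟩
  rw [eq_neg_of_add_eq_zero_left h]
  simp [sharp_apply]

theorem exists_eq_sharp_add_natCast_mul (x : T) : ∃ a b, x = P.sharp a + p * b := by
  obtain ⟨x, rfl⟩ := P.theta_surjective x
  obtain ⟨y, hy⟩ := exists_eq_teichmuller_add_natCast_mul x
  exact ⟨constantCoeff x, P.theta y, by
    conv_lhs => rw [hy]
    rw [map_add, map_mul, map_natCast, sharp_apply]⟩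

theorem ker_theta_le_ker_mk_constantCoeff : RingHom.ker P.theta ≤
    RingHom.ker ((Ideal.Quotient.mk (Ideal.span {P.t})).comp constantCoeff) := by
  intro x hx
  obtain ⟨z, rfl⟩ := (P.theta_eq_zero_iff x).1 hx
  rw [RingHom.mem_ker, RingHom.comp_apply, constantCoeff_generator_mul,
    Ideal.Quotient.eq_zero_iff_mem, Ideal.mem_span_singleton]
  exact dvd_mul_right _ _

/-- The map `T → T / p ≅ E / t`. -/
noncomputable def reduction : T →+* E ⧸ Ideal.span {P.t} :=
  P.theta.liftOfSurjective P.theta_surjective ⟨_, P.ker_theta_le_ker_mk_constantCoeff⟩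

theorem reduction_theta (x : WittVector p E) :
    P.reduction (P.theta x) = Ideal.Quotient.mk _ (constantCoeff x) :=
  P.theta.liftOfRightInverse_comp_apply _ _ ⟨_, P.ker_theta_le_ker_mk_constantCoeff⟩ x

theorem reduction_sharp (a : E) : P.reduction (P.sharp a) = Ideal.Quotient.mk _ a := by
  rw [sharp_apply, reduction_theta, constantCoeff_teichmuller]

theorem reduction_natCast : P.reduction (p : T) = 0 := by
  rw [map_natCast, ← map_natCast (Ideal.Quotient.mk (Ideal.span {P.t})), CharP.cast_eq_zero,
    map_zero]

theorem reduction_surjective : Function.Surjective P.reduction := fun x => by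
  obtain ⟨a, rfl⟩ := Ideal.Quotient.mk_surjective x
  exact ⟨P.sharp a, P.reduction_sharp a⟩

theorem reduction_eq_zero_iff (x : T) : P.reduction x = 0 ↔ (p : T) ∣ x := by
  refine ⟨fun h => ?_, ?_⟩
  · obtain ⟨a, b, rfl⟩ := P.exists_eq_sharp_add_natCast_mul x
    rw [map_add, map_mul, reduction_natCast, zero_mul, add_zero, reduction_sharp,
      Ideal.Quotient.eq_zero_iff_mem, Ideal.mem_span_singleton] at h
    exact dvd_add (P.associated_sharp_t.symm.dvd.trans (map_dvd _ h)) (dvd_mul_right _ _)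
  · rintro ⟨y, rfl⟩
    rw [map_mul, reduction_natCast, zero_mul]

theorem natCast_dvd_sharp_iff (a : E) : (p : T) ∣ P.sharp a ↔ P.t ∣ a := by
  rw [← P.reduction_eq_zero_iff, reduction_sharp, Ideal.Quotient.eq_zero_iff_mem,
    Ideal.mem_span_singleton]

theorem natCast_dvd_sub_iff (x y : T) : (p : T) ∣ x - y ↔ P.reduction x = P.reduction y := by
  rw [← P.reduction_eq_zero_iff, map_sub, sub_eq_zero]

include P in
theorem natCast_mem_nonZeroDivisors : (p : T) ∈ T⁰ := by
  refine mem_nonZeroDivisors_iff_left.2 fun x hx => ?_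
  obtain ⟨y, rfl⟩ := P.theta_surjective x
  rw [← map_natCast P.theta, ← map_mul, theta_eq_zero_iff] at hx
  obtain ⟨z, hz⟩ := hx
  have hz0 : constantCoeff z = 0 := by
    have h : P.t * (constantCoeff (P.w : WittVector p E) * constantCoeff z) = 0 := by
      rw [← constantCoeff_generator_mul, ← hz, map_mul, constantCoeff_natCast_self, zero_mul]
    exact (P.w.isUnit.map constantCoeff).mul_right_eq_zero.1
      ((mul_left_mem_nonZeroDivisors_eq_zero_iff P.t_mem_nonZeroDivisors).1 h)
  obtain ⟨v, rfl⟩ := natCast_dvd_of_constantCoeff_eq_zero hz0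
  rw [theta_eq_zero_iff]
  refine ⟨v, (mul_cancel_left_mem_nonZeroDivisors natCast_mem_nonZeroDivisors_wittVector).1 ?_⟩
  rw [hz]
  ring

theorem sharp_mem_nonZeroDivisors {s : E} {n : ℕ} (hs : s ∣ P.t ^ n) : P.sharp s ∈ T⁰ := by
  obtain ⟨u, hu⟩ := hs
  have hpow : P.sharp P.t ^ n ∈ T⁰ := by
    obtain ⟨u, hu⟩ := P.associated_sharp_t
    exact pow_mem (mul_mem_nonZeroDivisors.1 (hu ▸ P.natCast_mem_nonZeroDivisors)).1 n
  rw [← map_pow, hu, map_mul] at hpow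
  exact (mul_mem_nonZeroDivisors.1 hpow).1

section BaseChange

variable {E' : Type*} [CommRing E'] [CharP E' p] [PerfectRing E' p] (h : E →+* E')

/-- The untilt of `E'` obtained from the untilt `T` of `E` by base change along `E → E'`. -/
abbrev BaseChange : Type _ :=
  WittVector p E' ⧸ Ideal.span
    {(p : WittVector p E') + teichmuller p (h P.t) * WittVector.map h P.w}

/-- The presentation of `P.BaseChange h` by `h(t)` and the image of `w`. -/
noncomputable def baseChange (ht : h P.t ∈ E'⁰) : Untilt p E' (P.BaseChange h) where
  theta := Ideal.Quotient.mk _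
  t := h P.t
  w := Units.map (WittVector.map h).toMonoidHom P.w
  theta_surjective := Ideal.Quotient.mk_surjective
  ker_theta := Ideal.mk_ker
  t_mem_nonZeroDivisors := ht

omit [CharP E' p] [PerfectRing E' p] in
theorem ker_theta_le_ker_mk_map : RingHom.ker P.theta ≤
    RingHom.ker ((Ideal.Quotient.mk _ : WittVector p E' →+* P.BaseChange h).comp
      (WittVector.map h)) := by
  intro x hx
  obtain ⟨z, rfl⟩ := (P.theta_eq_zero_iff x).1 hx
  rw [RingHom.mem_ker, RingHom.comp_apply, Ideal.Quotient.eq_zero_iff_mem,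
    Ideal.mem_span_singleton, map_mul, map_add, map_mul, map_natCast, map_teichmuller]
  exact dvd_mul_right _ _

/-- The canonical map `T → P.BaseChange h`. -/
noncomputable def baseChangeMap : T →+* P.BaseChange h :=
  P.theta.liftOfSurjective P.theta_surjective ⟨_, P.ker_theta_le_ker_mk_map h⟩

variable {h} (ht : h P.t ∈ E'⁰)

theorem baseChangeMap_theta (x : WittVector p E) :
    P.baseChangeMap h (P.theta x) = (P.baseChange h ht).theta (WittVector.map h x) :=
  P.theta.liftOfRightInverse_comp_apply _ _ ⟨_, P.ker_theta_le_ker_mk_map h⟩ x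

theorem baseChangeMap_sharp (a : E) :
    P.baseChangeMap h (P.sharp a) = (P.baseChange h ht).sharp (h a) := by
  rw [sharp_apply, P.baseChangeMap_theta ht, map_teichmuller, sharp_apply]

theorem reduction_baseChangeMap (x : T) :
    Ideal.quotientMap (Ideal.span {h P.t}) h
        (Ideal.span_singleton_le_iff_mem _ |>.2 <| Ideal.mem_span_singleton_self _)
        (P.reduction x) = (P.baseChange h ht).reduction (P.baseChangeMap h x) := by
  obtain ⟨x, rfl⟩ := P.theta_surjective x
  rw [reduction_theta, P.baseChangeMap_theta ht, reduction_theta, Ideal.quotientMap_mk]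
  rfl

include ht in
theorem flatModulo_baseChangeMap (hflat : FlatModulo h P.t) :
    FlatModulo (P.baseChangeMap h) (p : T) := by
  rw [FlatModulo.iff_of_reduction (P.reduction_baseChangeMap ht) P.reduction_surjective
    (P.baseChange h ht).reduction_surjective P.reduction_eq_zero_iff
    fun x => (map_natCast (P.baseChangeMap h) p).symm ▸ (P.baseChange h ht).reduction_eq_zero_iff x]
  refine (FlatModulo.iff_of_reduction (q' := Ideal.Quotient.mk (Ideal.span {h P.t}))
    (fun _ => Ideal.quotientMap_mk) Ideal.Quotient.mk_surjective Ideal.Quotient.mk_surjective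
    (fun a => ?_) (fun b => ?_)).1 hflat <;>
  rw [Ideal.Quotient.eq_zero_iff_mem, Ideal.mem_span_singleton]

include ht in
theorem faithfulModulo_baseChangeMap (hfaithful : FaithfulModulo h P.t) :
    FaithfulModulo (P.baseChangeMap h) (p : T) := by
  rw [FaithfulModulo.iff_of_reduction (P.reduction_baseChangeMap ht) P.reduction_surjective
    (P.baseChange h ht).reduction_surjective P.reduction_eq_zero_iff
    fun x => (map_natCast (P.baseChangeMap h) p).symm ▸ (P.baseChange h ht).reduction_eq_zero_iff x]
  refine (FaithfulModulo.iff_of_reduction (q' := Ideal.Quotient.mk (Ideal.span {h P.t}))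
    (fun _ => Ideal.quotientMap_mk) Ideal.Quotient.mk_surjective Ideal.Quotient.mk_surjective
    (fun a => ?_) (fun b => ?_)).1 hfaithful <;>
  rw [Ideal.Quotient.eq_zero_iff_mem, Ideal.mem_span_singleton]

end BaseChange
end Untilt

end Untilts

/-! ### Almost integral elements of an untilt -/

section PowRoot

variable {p : ℕ} [hp : Fact p.Prime] {E E' : Type*} [CommRing E] [CharP E p] [PerfectRing E p]
  [CommRing E'] [CharP E' p] [PerfectRing E' p]

/-- The `p ^ r`-th root map of a perfect ring of characteristic `p`. -/
noncomputable def powRoot (p : ℕ) [Fact p.Prime] {E : Type*} [CommRing E] [CharP E p]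
    [PerfectRing E p] (r : ℕ) : E ≃+* E := (iterateFrobeniusEquiv E p r).symm

theorem powRoot_pow (r : ℕ) (a : E) : powRoot p r a ^ p ^ r = a :=
  (iterateFrobeniusEquiv E p r).apply_symm_apply a

theorem powRoot_eq_of_pow_eq {r : ℕ} {a b : E} (h : b ^ p ^ r = a) : powRoot p r a = b :=
  (iterateFrobeniusEquiv E p r).symm_apply_eq.2 h.symm

theorem powRoot_zero_apply (a : E) : powRoot p 0 a = a :=
  powRoot_eq_of_pow_eq (by rw [pow_zero, pow_one])

theorem powRoot_add_pow (r s : ℕ) (a : E) : powRoot p (r + s) a ^ p ^ s = powRoot p r a := by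
  refine (powRoot_eq_of_pow_eq ?_).symm
  rw [← pow_mul, ← pow_add, add_comm s r, powRoot_pow]

theorem map_powRoot (f : E →+* E') (r : ℕ) (a : E) : f (powRoot p r a) = powRoot p r (f a) :=
  (powRoot_eq_of_pow_eq (by rw [← map_pow, powRoot_pow])).symm

theorem dvd_of_pow_dvd_pow {r : ℕ} {a b : E} (h : a ^ p ^ r ∣ b ^ p ^ r) : a ∣ b := by
  simpa only [powRoot_eq_of_pow_eq rfl] using map_dvd (powRoot p r) h

theorem powRoot_dvd_self (r : ℕ) (a : E) : powRoot p r a ∣ a := by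
  conv_rhs => rw [← powRoot_pow (p := p) r a]
  exact dvd_pow_self _ (pow_ne_zero _ hp.out.ne_zero)

theorem powRoot_pow_dvd_powRoot {r s n : ℕ} (h : n * p ^ r ≤ p ^ s) (a : E) :
    powRoot p s a ^ n ∣ powRoot p r a := by
  refine dvd_of_pow_dvd_pow (p := p) (r := r) ?_
  rw [powRoot_pow, ← pow_mul]
  conv_rhs => rw [← powRoot_pow (p := p) s a]
  exact pow_dvd_pow _ h

end PowRoot

section PerfectClosure

variable {p : ℕ} [hp : Fact p.Prime] {K : Type*} [CommRing K] [CharP K p]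

theorem exists_pow_eq_perfectClosure_of (x : PerfectClosure K p) :
    ∃ n a, x ^ p ^ n = PerfectClosure.of K p a := by
  induction x using PerfectClosure.induction_on with
  | _ x =>
    refine ⟨x.1, x.2, ?_⟩
    rw [← iterate_frobenius, PerfectClosure.iterate_frobenius_mk]

theorem exists_pow_eq_pow_of_perfectClosure_of_eq {a b : K}
    (h : PerfectClosure.of K p a = PerfectClosure.of K p b) : ∃ n, a ^ p ^ n = b ^ p ^ n := by
  rw [PerfectClosure.of_apply, PerfectClosure.of_apply, PerfectClosure.mk_eq_iff] at h
  simpa [iterate_frobenius] using h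

theorem perfectClosure_of_mem_nonZeroDivisors {t : K} (ht : t ∈ K⁰) :
    PerfectClosure.of K p t ∈ (PerfectClosure K p)⁰ := by
  refine mem_nonZeroDivisors_iff_left.2 fun x hx => ?_
  obtain ⟨n, a, ha⟩ := exists_pow_eq_perfectClosure_of x
  have hpos (m : ℕ) : p ^ m ≠ 0 := pow_ne_zero _ hp.out.ne_zero
  have hta : PerfectClosure.of K p (t ^ p ^ n * a) = PerfectClosure.of K p 0 := by
    rw [map_mul, ← ha, map_pow, ← mul_pow, hx, map_zero, zero_pow (hpos n)]
  obtain ⟨m, hm⟩ := exists_pow_eq_pow_of_perfectClosure_of_eq hta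
  rw [zero_pow (hpos m), mul_pow, ← pow_mul,
    mul_left_mem_nonZeroDivisors_eq_zero_iff (pow_mem ht _)] at hm
  have hx0 : x ^ p ^ (n + m) = 0 := by rw [pow_add, pow_mul, ha, ← map_pow, hm, map_zero]
  rw [← powRoot_eq_of_pow_eq hx0, map_zero]

end PerfectClosure

section RationalIdeal

open Polynomial

variable {E : Type*} [CommRing E]

/-- The `t`-saturation of `(γ X - t ^ k)`, so that `E[X] / rationalIdeal t γ k` is the image of
`E[X]` in `E[1/t][X] / (γ X - t ^ k)`: the functions on the locus `|t ^ k| ≤ |γ|`. -/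
def rationalIdeal (t γ : E) (k : ℕ) : Ideal E[X] where
  carrier := {f | ∃ i h, C (t ^ i) * f = (C γ * X - C (t ^ k)) * h}
  zero_mem' := ⟨0, 0, by simp⟩
  add_mem' := by
    rintro a b ⟨i, h, hi⟩ ⟨j, g, hj⟩
    refine ⟨i + j, C (t ^ j) * h + C (t ^ i) * g, ?_⟩
    rw [pow_add, C_mul]
    linear_combination C (t ^ j) * hi + C (t ^ i) * hj
  smul_mem' := by
    rintro c a ⟨i, h, hi⟩
    refine ⟨i, c * h, ?_⟩
    rw [smul_eq_mul]
    linear_combination c * hi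

variable {t γ : E} {k : ℕ}

theorem mk_C_mem_nonZeroDivisors_quotient_rationalIdeal (t γ : E) (k : ℕ) :
    Ideal.Quotient.mk (rationalIdeal t γ k) (C t) ∈ (E[X] ⧸ rationalIdeal t γ k)⁰ := by
  refine mem_nonZeroDivisors_iff_left.2 fun f hf => ?_
  obtain ⟨f, rfl⟩ := Ideal.Quotient.mk_surjective f
  rw [← map_mul, Ideal.Quotient.eq_zero_iff_mem] at hf
  obtain ⟨i, h, hi⟩ := hf
  exact Ideal.Quotient.eq_zero_iff_mem.2 ⟨i + 1, h, by rw [← hi, pow_succ, C_mul, mul_assoc]⟩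

theorem pow_dvd_of_C_pow_mul_eq {b : E} {i q : ℕ} {F H : E[X]}
    (h : C (t ^ i) * (C b - C (t ^ q) * F) = (C γ * X - C (t ^ k)) * H) (j : ℕ) :
    t ^ (q + i) ∣ γ ^ j * t ^ i * b + t ^ (k * (j + 1)) * H.coeff j := by
  induction j with
  | zero =>
    have hcoeff := congrArg (coeff · 0) h
    simp only [coeff_C_mul, coeff_sub, sub_mul, mul_assoc, coeff_C_zero, coeff_X_mul_zero] at hcoeff
    exact ⟨F.coeff 0, by linear_combination hcoeff⟩
  | succ j ih =>
    have hcoeff := congrArg (coeff · (j + 1)) h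
    simp only [coeff_C_mul, coeff_sub, sub_mul, mul_assoc, coeff_C_succ, coeff_X_mul] at hcoeff
    obtain ⟨y, hy⟩ := ih
    refine ⟨γ * y + t ^ (k * (j + 1)) * F.coeff (j + 1), ?_⟩
    linear_combination γ * hy + t ^ (k * (j + 1)) * hcoeff

variable {p : ℕ} [hp : Fact p.Prime] [CharP E p]

theorem exists_C_pow_mul_eq_of_mem_rationalIdeal {N : ℕ} {a : E} {f : E[X]}
    (hf : C (a ^ p ^ N) - C (t ^ p ^ N) * f ∈ rationalIdeal t γ k) :
    ∃ i, ∀ e, ∃ F H : E[X], C (t ^ i) * (C (a ^ p ^ (N + e)) - C (t ^ p ^ (N + e)) * F) =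
      (C γ * X - C (t ^ k)) * H := by
  obtain ⟨i, h, hi⟩ := hf
  refine ⟨i, fun e => ⟨f ^ p ^ e, h * (C (a ^ p ^ N) - C (t ^ p ^ N) * f) ^ (p ^ e - 1), ?_⟩⟩
  have hfrob : C (a ^ p ^ (N + e)) - C (t ^ p ^ (N + e)) * f ^ p ^ e =
      (C (a ^ p ^ N) - C (t ^ p ^ N) * f) ^ p ^ e := by
    rw [sub_pow_char_pow, mul_pow, ← C_pow, ← C_pow, ← pow_mul, ← pow_mul, ← pow_add]
  rw [hfrob, ← Nat.sub_add_cancel (Nat.one_le_pow e p hp.out.pos), pow_succ', ← mul_assoc, hi,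
    Nat.add_sub_cancel, mul_assoc]

theorem dvd_powRoot_mul_of_mem_rationalIdeal [PerfectRing E p] (ht : t ∈ E⁰) {s N : ℕ}
    (hk : 2 * p ^ s ≤ k) {a : E} {f : E[X]}
    (hf : C (a ^ p ^ N) - C (t ^ p ^ N) * f ∈ rationalIdeal t γ k) : t ∣ powRoot p s γ * a := by
  obtain ⟨i, hi⟩ := exists_C_pow_mul_eq_of_mem_rationalIdeal hf
  -- At exponent `Q = p ^ (N + i) ≥ i` the term in `H` is divisible by `t ^ (Q * p ^ s + i)`.
  obtain ⟨F, H, hFH⟩ := hi (i + s)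
  have hexp : p ^ (N + (i + s)) = p ^ s * p ^ (N + i) := by ring
  have hle : i ≤ p ^ s * p ^ (N + i) :=
    calc i ≤ p ^ i := (Nat.lt_pow_self hp.out.one_lt).le
      _ ≤ p ^ s * p ^ (N + i) := by rw [← pow_add]; exact Nat.pow_le_pow_right hp.out.pos (by omega)
  have hH : t ^ (p ^ (N + (i + s)) + i) ∣ t ^ (k * (p ^ (N + i) + 1)) * H.coeff (p ^ (N + i)) := by
    refine Dvd.dvd.mul_right (pow_dvd_pow t ?_) _
    have := Nat.mul_le_mul_right (p ^ (N + i)) hk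
    rw [hexp]
    nlinarith
  obtain ⟨y, hy⟩ := (dvd_add_left hH).1 (pow_dvd_of_C_pow_mul_eq hFH (p ^ (N + i)))
  have hdvd : γ ^ p ^ (N + i) * a ^ p ^ (N + (i + s)) = t ^ p ^ (N + (i + s)) * y := by
    refine (mul_cancel_left_mem_nonZeroDivisors (pow_mem ht i)).1 ?_
    linear_combination hy
  refine dvd_of_pow_dvd_pow (p := p) (r := N + (i + s)) ⟨y, ?_⟩
  rw [mul_pow, ← hdvd]
  congr 1
  rw [hexp, pow_mul, powRoot_pow]

end RationalIdeal

section BijectiveModUpTo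

variable {A B : Type*} [CommRing A] [CommRing B] {f : A →+* B} {π g : A}

/-- The map `A / π → B / f(π)` induced by `f` has kernel and cokernel killed by `g`. -/
structure BijectiveModUpTo (f : A →+* B) (π g : A) : Prop where
  exists_eq : ∀ x, ∃ a y, f g * x = f a + f π * y
  dvd_mul : ∀ a, f π ∣ f a → π ∣ g * a

namespace BijectiveModUpTo

theorem exists_pow_mul_eq (h : BijectiveModUpTo f π g) (n : ℕ) (x : B) :
    ∃ a y, f g ^ n * x = f a + f π ^ n * y := by
  induction n with
  | zero => exact ⟨0, x, by simp⟩
  | succ n ih =>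
    obtain ⟨a, y, hay⟩ := ih
    obtain ⟨b, z, hbz⟩ := h.exists_eq y
    refine ⟨g * a + π ^ n * b, z, ?_⟩
    rw [map_add, map_mul, map_mul, map_pow]
    linear_combination f g * hay + f π ^ n * hbz

theorem pow_dvd_pow_mul (h : BijectiveModUpTo f π g) (hπ : f π ∈ B⁰) (n : ℕ) {a : A}
    (ha : f π ^ n ∣ f a) : π ^ n ∣ g ^ n * a := by
  induction n generalizing a with
  | zero => simp
  | succ n ih =>
    obtain ⟨b, hb⟩ := h.dvd_mul a ((dvd_pow_self _ n.succ_ne_zero).trans ha)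
    have hfb : f π ^ n ∣ f b := by
      obtain ⟨y, hy⟩ := ha
      refine ⟨f g * y, (mul_cancel_left_mem_nonZeroDivisors hπ).1 ?_⟩
      rw [← map_mul, ← hb, map_mul, hy]
      ring
    obtain ⟨z, hz⟩ := ih hfb
    refine ⟨z, ?_⟩
    linear_combination g ^ n * hb + π * hz

theorem exists_pow_mul_eq_mul_add (h : BijectiveModUpTo f π g) (hπ : f π ∈ B⁰) (n : ℕ)
    {c x : A} {w : B} (hw : f c * w = f x) : ∃ a b, g ^ (2 * n) * x = c * a + π ^ n * b := by
  obtain ⟨a, y, hay⟩ := h.exists_pow_mul_eq n w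
  obtain ⟨z, hz⟩ := h.pow_dvd_pow_mul hπ n (a := g ^ n * x - c * a) <| by
    refine ⟨f c * y, ?_⟩
    simp only [map_sub, map_mul, map_pow]
    linear_combination f c * hay - f g ^ n * hw
  exact ⟨g ^ n * a, z, by linear_combination hz⟩

end BijectiveModUpTo

variable {p : ℕ} [Fact p.Prime] {E E' T : Type*} [CommRing E] [CharP E p] [PerfectRing E p]
  [CommRing T] [CommRing E'] [CharP E' p] [PerfectRing E' p]

theorem Untilt.bijectiveModUpTo_baseChangeMap (P : Untilt p E T) {h : E →+* E'}
    (ht : h P.t ∈ E'⁰) {g : E} (hg : BijectiveModUpTo h P.t g) :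
    BijectiveModUpTo (P.baseChangeMap h) (p : T) (P.sharp g) where
  exists_eq x := by
    obtain ⟨e, y, rfl⟩ := (P.baseChange h ht).exists_eq_sharp_add_natCast_mul x
    obtain ⟨a, z, haz⟩ := hg.exists_eq e
    obtain ⟨v, hv⟩ := ((P.baseChange h ht).natCast_dvd_sub_iff
      (P.baseChangeMap h (P.sharp g) * (P.baseChange h ht).sharp e)
      (P.baseChangeMap h (P.sharp a))).2 <| by
        rw [P.baseChangeMap_sharp ht, P.baseChangeMap_sharp ht, ← map_mul, reduction_sharp,
          reduction_sharp, haz, Ideal.Quotient.eq, add_sub_cancel_left]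
        exact Ideal.mul_mem_right _ _ (Ideal.mem_span_singleton_self _)
    refine ⟨P.sharp a, v + P.baseChangeMap h (P.sharp g) * y, ?_⟩
    rw [map_natCast]
    linear_combination hv
  dvd_mul x hx := by
    obtain ⟨a, y, rfl⟩ := P.exists_eq_sharp_add_natCast_mul x
    rw [map_add, map_mul, dvd_add_left (dvd_mul_right _ _), map_natCast,
      P.baseChangeMap_sharp ht, natCast_dvd_sharp_iff] at hx
    rw [mul_add, dvd_add_left ((dvd_mul_right _ _).mul_left _), ← map_mul, natCast_dvd_sharp_iff]
    exact hg.dvd_mul a hx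

end BijectiveModUpTo

section RationalLocalization

open Polynomial

variable {p : ℕ} [hp : Fact p.Prime] {E : Type*} [CommRing E] {t γ : E} {k : ℕ}
  [CharP (E[X] ⧸ rationalIdeal t γ k) p]

/-- The perfection of the ring of functions on the locus `|t ^ k| ≤ |γ|`. -/
abbrev RationalLocalization (p : ℕ) [Fact p.Prime] (t γ : E) (k : ℕ)
    [CharP (E[X] ⧸ rationalIdeal t γ k) p] : Type _ :=
  PerfectClosure (E[X] ⧸ rationalIdeal t γ k) p

namespace RationalLocalization

/-- The map sending a polynomial `f(X)` to the function `f(t ^ k / γ)`. -/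
noncomputable def evalMap (p : ℕ) [Fact p.Prime] (t γ : E) (k : ℕ)
    [CharP (E[X] ⧸ rationalIdeal t γ k) p] : E[X] →+* RationalLocalization p t γ k :=
  (PerfectClosure.of _ p).comp (Ideal.Quotient.mk _)

/-- The structure map `E → RationalLocalization p t γ k`. -/
noncomputable def map (p : ℕ) [Fact p.Prime] (t γ : E) (k : ℕ)
    [CharP (E[X] ⧸ rationalIdeal t γ k) p] : E →+* RationalLocalization p t γ k :=
  (evalMap p t γ k).comp C

theorem map_apply (a : E) : map p t γ k a = evalMap p t γ k (C a) := rfl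

theorem map_mul_evalMap_X : map p t γ k γ * evalMap p t γ k X = map p t γ k t ^ k := by
  rw [map_apply, map_apply, ← map_mul, ← map_pow, ← sub_eq_zero, ← map_sub]
  refine (congrArg (PerfectClosure.of _ p) (Ideal.Quotient.eq_zero_iff_mem.2 ?_)).trans (map_zero _)
  exact ⟨0, 1, by simp⟩

theorem map_mem_nonZeroDivisors : map p t γ k t ∈ (RationalLocalization p t γ k)⁰ :=
  perfectClosure_of_mem_nonZeroDivisors (mk_C_mem_nonZeroDivisors_quotient_rationalIdeal t γ k)

variable [CharP E p] [PerfectRing E p]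

theorem map_powRoot_mul_powRoot_evalMap_X (r : ℕ) :
    map p t γ k (powRoot p r γ) * powRoot p r (evalMap p t γ k X) =
      map p t γ k (powRoot p r t) ^ k := by
  rw [map_powRoot, map_powRoot, ← map_mul, ← map_pow, map_mul_evalMap_X]

variable {s : ℕ} (hk : 2 * p ^ s ≤ k)

include hk in
theorem exists_map_mul_powRoot_pow_eq (n m : ℕ) : ∃ a y, map p t γ k (powRoot p s γ) *
    powRoot p (s + n) (evalMap p t γ k X) ^ m = map p t γ k a + map p t γ k t * y := by
  have hX := map_powRoot_mul_powRoot_evalMap_X (p := p) (t := t) (γ := γ) (k := k) (s + n)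
  rw [← powRoot_add_pow s n γ, map_pow]
  rcases le_total m (p ^ n) with hm | hm
  · obtain ⟨e, he⟩ := Nat.exists_eq_add_of_le hm
    refine ⟨powRoot p (s + n) t ^ (k * m) * powRoot p (s + n) γ ^ e, 0, ?_⟩
    rw [he, map_mul, map_pow, pow_mul, ← hX, map_pow]
    ring
  · obtain ⟨e, rfl⟩ := Nat.exists_eq_add_of_le hm
    obtain ⟨v, hv⟩ : t ∣ powRoot p (s + n) t ^ (k * p ^ n) := by
      conv_lhs => rw [← powRoot_pow (p := p) (s + n) t]
      refine pow_dvd_pow _ ?_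
      rw [pow_add]
      exact Nat.mul_le_mul_right _ (by omega)
    refine ⟨0, map p t γ k v * powRoot p (s + n) (evalMap p t γ k X) ^ e, ?_⟩
    rw [map_zero, zero_add, ← mul_assoc, ← map_mul, ← hv, map_pow, pow_mul, ← hX]
    ring

include hk in
theorem exists_map_mul_powRoot_evalMap_eq (n : ℕ) (f : E[X]) : ∃ a y, map p t γ k (powRoot p s γ) *
    powRoot p (s + n) (evalMap p t γ k f) = map p t γ k a + map p t γ k t * y := by
  induction f using Polynomial.induction_on' with
  | add f g hf hg =>
    obtain ⟨a, y, hay⟩ := hf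
    obtain ⟨b, z, hbz⟩ := hg
    refine ⟨a + b, y + z, ?_⟩
    simp only [map_add]
    linear_combination hay + hbz
  | monomial m c =>
    obtain ⟨a, y, hay⟩ := exists_map_mul_powRoot_pow_eq (t := t) (γ := γ) hk n m
    refine ⟨powRoot p (s + n) c * a, map p t γ k (powRoot p (s + n) c) * y, ?_⟩
    rw [← C_mul_X_pow_eq_monomial, map_mul, map_mul, map_pow, map_pow, ← map_apply, ← map_powRoot,
      map_mul]
    linear_combination map p t γ k (powRoot p (s + n) c) * hay

theorem bijectiveModUpTo_map (ht : t ∈ E⁰) (hk : 2 * p ^ s ≤ k) :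
    BijectiveModUpTo (map p t γ k) t (powRoot p s γ) where
  exists_eq x := by
    obtain ⟨n, f, hx⟩ := exists_pow_eq_perfectClosure_of x
    obtain ⟨f, rfl⟩ := Ideal.Quotient.mk_surjective f
    have hroot : powRoot p (s + n) (evalMap p t γ k (f ^ p ^ s)) = x :=
      powRoot_eq_of_pow_eq (by rw [add_comm, pow_add, pow_mul, hx, map_pow]; rfl)
    rw [← hroot]
    exact exists_map_mul_powRoot_evalMap_eq hk n _
  dvd_mul a := by
    rintro ⟨x, hax⟩
    obtain ⟨n, f, hx⟩ := exists_pow_eq_perfectClosure_of x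
    obtain ⟨f, rfl⟩ := Ideal.Quotient.mk_surjective f
    have hpow : evalMap p t γ k (C (a ^ p ^ n)) = evalMap p t γ k (C (t ^ p ^ n) * f) := by
      rw [map_mul, ← map_apply, ← map_apply, map_pow, map_pow, hax, mul_pow, hx]
      rfl
    obtain ⟨m, hm⟩ := exists_pow_eq_pow_of_perfectClosure_of_eq hpow
    rw [← map_pow, ← C_pow, ← map_pow, Ideal.Quotient.eq, mul_pow, ← C_pow, ← pow_mul, ← pow_mul,
      ← pow_add] at hm
    exact dvd_powRoot_mul_of_mem_rationalIdeal ht hk hm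

end RationalLocalization

end RationalLocalization

namespace Untilt

variable {p : ℕ} [hp : Fact p.Prime] {E T : Type*} [CommRing E] [CharP E p] [PerfectRing E p]
  [CommRing T] (P : Untilt p E T)

theorem sharp_powRoot_dvd_natCast (r : ℕ) : P.sharp (powRoot p r P.t) ∣ (p : T) :=
  (map_dvd P.sharp (powRoot_dvd_self r P.t)).trans P.associated_sharp_t.dvd

theorem sharp_powRoot_succ_dvd_of_dvd_pow {r : ℕ} {x : T}
    (h : P.sharp (powRoot p r P.t) ∣ x ^ p) : P.sharp (powRoot p (r + 1) P.t) ∣ x := by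
  obtain ⟨a, b, rfl⟩ := P.exists_eq_sharp_add_natCast_mul x
  obtain ⟨y, hy⟩ := h
  obtain ⟨c, hc⟩ := Ideal.Quotient.mk_surjective (P.reduction y)
  have hred := congrArg P.reduction hy
  rw [map_pow, map_add, map_mul, reduction_natCast, zero_mul, add_zero, map_mul, reduction_sharp,
    reduction_sharp, ← hc, ← map_mul, ← map_pow, Ideal.Quotient.eq,
    Ideal.mem_span_singleton] at hred
  have hap : powRoot p r P.t ∣ a ^ p :=
    (dvd_sub_left (dvd_mul_right _ _)).1 ((powRoot_dvd_self r P.t).trans hred)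
  have ha : powRoot p (r + 1) P.t ∣ a := by
    refine dvd_of_pow_dvd_pow (p := p) (r := 1) ?_
    rwa [powRoot_add_pow, pow_one]
  exact dvd_add (map_dvd P.sharp ha) ((P.sharp_powRoot_dvd_natCast _).mul_right _)

theorem sharp_powRoot_succ_pow_dvd_of_dvd_pow {r n : ℕ} {x : T}
    (h : P.sharp (powRoot p r P.t) ^ n ∣ x ^ p) : P.sharp (powRoot p (r + 1) P.t) ^ n ∣ x := by
  induction n generalizing x with
  | zero => simp
  | succ n ih =>
    obtain ⟨x, rfl⟩ :=
      P.sharp_powRoot_succ_dvd_of_dvd_pow ((dvd_pow_self _ n.succ_ne_zero).trans h)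
    have hroot : P.sharp (powRoot p (r + 1) P.t) ^ p = P.sharp (powRoot p r P.t) := by
      rw [← map_pow, ← powRoot_add_pow r 1 P.t, pow_one]
    have hreg : P.sharp (powRoot p r P.t) ∈ T⁰ :=
      P.sharp_mem_nonZeroDivisors (n := 1) (by simpa using powRoot_dvd_self r P.t)
    rw [mul_pow, hroot, pow_succ', dvd_cancel_left_mem_nonZeroDivisors hreg] at h
    rw [pow_succ']
    exact mul_dvd_mul_left _ (ih h)

theorem sharp_powRoot_pow_dvd_of_dvd_pow (r : ℕ) {m n : ℕ} {x : T}
    (h : P.sharp (powRoot p m P.t) ^ n ∣ x ^ p ^ r) :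
    P.sharp (powRoot p (m + r) P.t) ^ n ∣ x := by
  induction r generalizing m with
  | zero => simpa using h
  | succ r ih =>
    rw [pow_succ, pow_mul] at h
    simpa only [add_right_comm, add_assoc] using ih (P.sharp_powRoot_succ_pow_dvd_of_dvd_pow h)

theorem exists_sharp_mul_eq_of_dvd_pow {γ l : E} {k n : ℕ} (hl : γ * l = P.t ^ k) {y : T}
    (hy : P.sharp γ ^ (p ^ n - 1) ∣ y ^ p ^ n) :
    ∃ w, P.sharp γ * w = P.sharp (powRoot p n P.t) ^ k * y := by
  obtain ⟨q, hq⟩ : ∃ q, p ^ n = q + 1 :=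
    ⟨p ^ n - 1, (Nat.sub_add_cancel (Nat.one_le_pow _ _ hp.out.pos)).symm⟩
  have hsharp : P.sharp γ * P.sharp l = P.sharp P.t ^ k := by rw [← map_mul, hl, map_pow]
  obtain ⟨w, hw⟩ : P.sharp (powRoot p (0 + n) P.t) ^ (k * q) ∣ P.sharp l * y := by
    refine P.sharp_powRoot_pow_dvd_of_dvd_pow n ?_
    obtain ⟨b, hb⟩ := hy
    rw [powRoot_zero_apply, mul_pow, hb, hq, Nat.add_sub_cancel, pow_mul, ← hsharp]
    exact ⟨P.sharp l * b, by ring⟩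
  rw [zero_add] at hw
  have hroot : P.sharp (powRoot p n P.t) ^ (q + 1) = P.sharp P.t := by
    rw [← hq, ← map_pow, powRoot_pow]
  have hreg : P.sharp (powRoot p n P.t) ^ (k * q) ∈ T⁰ :=
    pow_mem (P.sharp_mem_nonZeroDivisors (n := 1) (by simpa using powRoot_dvd_self n P.t)) _
  refine ⟨w, (mul_cancel_left_mem_nonZeroDivisors hreg).1 ?_⟩
  calc P.sharp (powRoot p n P.t) ^ (k * q) * (P.sharp γ * w)
      = P.sharp γ * P.sharp l * y := by linear_combination -P.sharp γ * hw
    _ = P.sharp (powRoot p n P.t) ^ (k * q) * (P.sharp (powRoot p n P.t) ^ k * y) := by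
      rw [hsharp, ← hroot]; ring

-- On the locus `|t ^ k| ≤ |γ|` the function `y / γ♯` is bounded, hence integral up to a root of
-- `t`, and the functions on that locus agree with those on the whole space up to roots of `γ`.
theorem exists_sharp_powRoot_pow_mul_eq {γ : E} {y : T} {k n s : ℕ} (hk : 2 * p ^ s ≤ k)
    (hy : P.sharp γ ^ (p ^ n - 1) ∣ y ^ p ^ n) (N : ℕ) :
    ∃ a b, P.sharp (powRoot p s γ) ^ (2 * N) * (P.sharp (powRoot p n P.t) ^ k * y) =
      P.sharp γ * a + p ^ N * b := by
  by_cases htop : rationalIdeal P.t γ k = ⊤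
  · have hdvd : P.t ∣ powRoot p s γ * 1 :=
      dvd_powRoot_mul_of_mem_rationalIdeal (N := 0) (f := 0) P.t_mem_nonZeroDivisors hk
        (htop ▸ Submodule.mem_top)
    rw [mul_one, ← P.natCast_dvd_sharp_iff] at hdvd
    obtain ⟨u, hu⟩ := hdvd
    refine ⟨0, p ^ N * u ^ (2 * N) * (P.sharp (powRoot p n P.t) ^ k * y), ?_⟩
    rw [hu]
    ring
  have : Nontrivial (Polynomial E ⧸ rationalIdeal P.t γ k) := Ideal.Quotient.nontrivial_iff.2 htop
  have : CharP (Polynomial E ⧸ rationalIdeal P.t γ k) p :=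
    (CharP.charP_iff_prime_eq_zero hp.out).2 <| by
      rw [← map_natCast (Ideal.Quotient.mk _), CharP.cast_eq_zero, map_zero]
  have ht := RationalLocalization.map_mem_nonZeroDivisors (p := p) (t := P.t) (γ := γ) (k := k)
  set j := RationalLocalization.map p P.t γ k
  obtain ⟨w, hw⟩ := (P.baseChange j ht).exists_sharp_mul_eq_of_dvd_pow (y := P.baseChangeMap j y)
    (n := n) RationalLocalization.map_mul_evalMap_X <| by
      simpa only [map_pow, P.baseChangeMap_sharp ht] using map_dvd (P.baseChangeMap j) hy
  refine (P.bijectiveModUpTo_baseChangeMap ht (RationalLocalization.bijectiveModUpTo_map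
    P.t_mem_nonZeroDivisors hk)).exists_pow_mul_eq_mul_add ?_ N (w := w) ?_
  · rw [map_natCast]
    exact (P.baseChange j ht).natCast_mem_nonZeroDivisors
  · rw [map_mul, map_pow, P.baseChangeMap_sharp ht, P.baseChangeMap_sharp ht, hw, map_powRoot]
    rfl

theorem exists_sharp_powRoot_mul_eq (γ : E) (y : T)
    (hy : ∀ r, P.sharp γ ^ (p ^ r - 1) ∣ y ^ p ^ r) (r N : ℕ) :
    ∃ a b, P.sharp (powRoot p r (γ * P.t)) * y = P.sharp γ * a + p ^ N * b := by
  have exists_le_pow (m : ℕ) : ∃ n, m ≤ p ^ n := ⟨m, (Nat.lt_pow_self hp.out.one_lt).le⟩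
  obtain ⟨s, hs⟩ := exists_le_pow (2 * N * p ^ r)
  obtain ⟨n, hn⟩ := exists_le_pow (2 * p ^ s * p ^ r)
  obtain ⟨a, b, hab⟩ := P.exists_sharp_powRoot_pow_mul_eq (γ := γ) le_rfl (hy n) N
  obtain ⟨u, hu⟩ := powRoot_pow_dvd_powRoot hs γ
  obtain ⟨v, hv⟩ := powRoot_pow_dvd_powRoot hn P.t
  refine ⟨P.sharp u * P.sharp v * a, P.sharp u * P.sharp v * b, ?_⟩
  rw [map_mul, hu, hv, map_mul, map_mul, map_mul, map_pow, map_pow]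
  linear_combination P.sharp u * P.sharp v * hab

end Untilt

/-! ### Roots of monic polynomials in flat extensions of an untilt -/

theorem map_eq_of_dvd_sub {A B : Type*} [CommRing A] [NonAssocSemiring B] {f : A →+* B}
    {s x y : A} (hs : f s = 0) (h : s ∣ x - y) : f x = f y := by
  obtain ⟨c, hc⟩ := h
  rw [sub_eq_iff_eq_add'.1 hc, map_add, map_mul, hs, zero_mul, add_zero]

theorem eq_top_of_linearMap_one_eq_one {A B : Type*} [CommRing A] [CommRing B] [Algebra A B]
    (φ : B →ₗ[A] A) (hφ : φ 1 = 1) {𝔞 : Ideal A} (h : 𝔞.map (algebraMap A B) = ⊤) : 𝔞 = ⊤ := by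
  have hone : (1 : B) ∈ 𝔞 • (⊤ : Submodule A B) := by
    rw [Ideal.smul_top_eq_map, h]
    exact Submodule.mem_top
  have himage := Submodule.mem_map_of_mem (f := φ) hone
  rw [Submodule.map_smul'', hφ] at himage
  have hle : 𝔞 • Submodule.map φ ⊤ ≤ 𝔞 := Submodule.smul_le.2 fun a ha x _ => 𝔞.mul_mem_right x ha
  exact (Ideal.eq_top_iff_one 𝔞).2 (hle himage)

section NormalForm

open MvPolynomial

variable {σ Z : Type*} [CommRing Z] (p : ℕ) (β : σ → Z) (S : Set σ)

/-- The ideal of relations `X n ^ p = β n`, for `n ∈ S`, adjoining `p`-th roots of the `β n`. -/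
noncomputable def powRootIdeal : Ideal (MvPolynomial σ Z) :=
  Ideal.span ((fun n => X n ^ p - C (β n)) '' S)

open Classical in
/-- The reduced representative of `X n ^ k` modulo `powRootIdeal p β S`. -/
noncomputable def normalFormXPow (n : σ) (k : ℕ) : MvPolynomial σ Z :=
  if n ∈ S then C (β n) ^ (k / p) * X n ^ (k % p) else X n ^ k

/-- The projection onto the span of the monomials whose exponents on `S` are less than `p`, along
`powRootIdeal p β S`. -/
noncomputable def normalForm : MvPolynomial σ Z →ₗ[Z] MvPolynomial σ Z :=
  (basisMonomials σ Z).constr Z fun α => α.prod (normalFormXPow p β S)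

theorem normalFormXPow_zero (n : σ) : normalFormXPow p β S n 0 = 1 := by simp [normalFormXPow]

theorem normalForm_monomial (α : σ →₀ ℕ) (c : Z) :
    normalForm p β S (monomial α c) = C c * α.prod (normalFormXPow p β S) := by
  have hmonomial : monomial α c = c • basisMonomials σ Z α := by
    rw [coe_basisMonomials, smul_monomial, smul_eq_mul, mul_one]
  rw [hmonomial, map_smul, normalForm, Module.Basis.constr_basis, smul_eq_C_mul]

theorem normalForm_one : normalForm p β S 1 = 1 := by
  simpa using normalForm_monomial p β S 0 1

theorem normalForm_C_mul (c : Z) (f : MvPolynomial σ Z) :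
    normalForm p β S (C c * f) = C c * normalForm p β S f := by
  rw [← smul_eq_C_mul, map_smul, smul_eq_C_mul]

variable {p β S}

theorem normalForm_X_pow_mul {n : σ} {m : ℕ} {u : MvPolynomial σ Z}
    (h : ∀ k, normalFormXPow p β S n (k + m) = u * normalFormXPow p β S n k)
    (f : MvPolynomial σ Z) : normalForm p β S (X n ^ m * f) = u * normalForm p β S f := by
  induction f using MvPolynomial.induction_on' with
  | add f g hf hg => rw [mul_add, map_add, hf, hg, map_add, mul_add]
  | monomial α c =>
    have happly : (Finsupp.single n m + α) n = α n + m := by simp [add_comm]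
    have herase : (Finsupp.single n m + α).erase n = α.erase n := by simp [Finsupp.erase_add]
    rw [X_pow_eq_monomial, monomial_mul, one_mul, normalForm_monomial, normalForm_monomial,
      ← Finsupp.mul_prod_erase' α n _ fun i => normalFormXPow_zero p β S i,
      ← Finsupp.mul_prod_erase' (Finsupp.single n m + α) n _ fun i => normalFormXPow_zero p β S i,
      happly, herase, h]
    ring

theorem normalForm_X_pow_mul_of_mem (hp : 0 < p) {n : σ} (hn : n ∈ S) (f : MvPolynomial σ Z) :
    normalForm p β S (X n ^ p * f) = C (β n) * normalForm p β S f := by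
  refine normalForm_X_pow_mul (fun k => ?_) f
  simp only [normalFormXPow, hn, if_true, Nat.add_div_right _ hp, Nat.add_mod_right]
  ring

theorem normalForm_X_pow_mul_of_notMem {n : σ} (hn : n ∉ S) (m : ℕ) (f : MvPolynomial σ Z) :
    normalForm p β S (X n ^ m * f) = X n ^ m * normalForm p β S f := by
  refine normalForm_X_pow_mul (fun k => ?_) f
  simp only [normalFormXPow, hn, if_false]
  ring

theorem normalForm_eq_zero_of_mem (hp : 0 < p) {f : MvPolynomial σ Z}
    (hf : f ∈ powRootIdeal p β S) : normalForm p β S f = 0 := by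
  suffices h : ∀ a, normalForm p β S (a * f) = 0 by simpa using h 1
  refine Submodule.span_induction ?_ (by simp) ?_ ?_ hf
  · rintro _ ⟨n, hn, rfl⟩ a
    rw [mul_sub, map_sub, mul_comm a, mul_comm a, normalForm_X_pow_mul_of_mem hp hn,
      normalForm_C_mul, sub_self]
  · intro x y _ _ hx hy a
    rw [mul_add, map_add, hx, hy, add_zero]
  · intro b x _ hx a
    rw [smul_eq_mul, ← mul_assoc, hx]

theorem mk_normalFormXPow (n : σ) (k : ℕ) :
    Ideal.Quotient.mk (powRootIdeal p β S) (normalFormXPow p β S n k) =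
      Ideal.Quotient.mk (powRootIdeal p β S) (X n ^ k) := by
  by_cases hn : n ∈ S
  · have hroot : Ideal.Quotient.mk (powRootIdeal p β S) (X n ^ p) =
        Ideal.Quotient.mk (powRootIdeal p β S) (C (β n)) :=
      Ideal.Quotient.eq.2 (Ideal.subset_span ⟨n, hn, rfl⟩)
    conv_rhs => rw [← Nat.div_add_mod k p, pow_add, pow_mul, map_mul, map_pow, hroot]
    simp only [normalFormXPow, hn, if_true, map_mul, map_pow]
  · simp only [normalFormXPow, hn, if_false]

theorem mk_normalForm (f : MvPolynomial σ Z) :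
    Ideal.Quotient.mk (powRootIdeal p β S) (normalForm p β S f) =
      Ideal.Quotient.mk (powRootIdeal p β S) f := by
  induction f using MvPolynomial.induction_on' with
  | add f g hf hg => rw [map_add, map_add, hf, hg, map_add]
  | monomial α c =>
    rw [normalForm_monomial, monomial_eq, map_mul, map_mul, map_finsuppProd, map_finsuppProd]
    congr 1
    exact Finset.prod_congr rfl fun n _ => mk_normalFormXPow n _

theorem X_pow_sub_C_mem_nonZeroDivisors (hp : 0 < p) (n : σ) (b : Z) :
    (X n ^ p - C b : MvPolynomial σ Z) ∈ (MvPolynomial σ Z)⁰ := by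
  refine mem_nonZeroDivisors_iff_left.2 fun a h => ?_
  by_contra ha
  obtain ⟨α, hα, hmax⟩ := Finset.exists_max_image a.support (fun α => α n)
    (Finset.nonempty_iff_ne_empty.2 (MvPolynomial.support_eq_empty.not.2 ha))
  have hcoeff : coeff (Finsupp.single n p + α) a = 0 := by
    by_contra hne
    have := hmax _ (MvPolynomial.mem_support_iff.2 hne)
    simp only [Finsupp.add_apply, Finsupp.single_eq_same] at this
    omega
  rw [sub_mul, sub_eq_zero] at h
  have hα0 := congrArg (coeff (Finsupp.single n p + α)) h
  rw [coeff_C_mul, X_pow_eq_monomial, coeff_monomial_mul, one_mul, hcoeff, mul_zero] at hα0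
  exact MvPolynomial.mem_support_iff.1 hα hα0

theorem mem_powRootIdeal_of_mul_mem (hp : 0 < p) {n : σ} (hn : n ∉ S) {a : MvPolynomial σ Z}
    (h : (X n ^ p - C (β n)) * a ∈ powRootIdeal p β S) : a ∈ powRootIdeal p β S := by
  have hzero := normalForm_eq_zero_of_mem hp h
  rw [sub_mul, map_sub, normalForm_X_pow_mul_of_notMem hn, normalForm_C_mul, ← sub_mul,
    mul_left_mem_nonZeroDivisors_eq_zero_iff (X_pow_sub_C_mem_nonZeroDivisors hp n _)] at hzero
  rw [← Ideal.Quotient.eq_zero_iff_mem, ← mk_normalForm, hzero, map_zero]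

variable (β S)

/-- The `Z`-linear section of the quotient map by `powRootIdeal p β S` given by normal forms. -/
noncomputable def normalFormSection (hp : 0 < p) :
    (MvPolynomial σ Z ⧸ powRootIdeal p β S) →ₗ[Z] MvPolynomial σ Z :=
  (Submodule.restrictScalars Z (powRootIdeal p β S)).liftQ (normalForm p β S) fun _ hf =>
    normalForm_eq_zero_of_mem hp hf

theorem normalFormSection_mk (hp : 0 < p) (f : MvPolynomial σ Z) :
    normalFormSection β S hp (Ideal.Quotient.mk _ f) = normalForm p β S f := rfl

theorem flat_quotient_powRootIdeal (hp : 0 < p) :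
    Module.Flat Z (MvPolynomial σ Z ⧸ powRootIdeal p β S) := by
  refine Module.Flat.of_retract (normalFormSection β S hp)
    (Ideal.Quotient.mkₐ Z (powRootIdeal p β S)).toLinearMap (LinearMap.ext fun x => ?_)
  obtain ⟨f, rfl⟩ := Ideal.Quotient.mk_surjective x
  exact mk_normalForm f

theorem eq_top_of_map_quotient_powRootIdeal_eq_top (hp : 0 < p) {𝔟 : Ideal Z}
    (h : 𝔟.map (algebraMap Z (MvPolynomial σ Z ⧸ powRootIdeal p β S)) = ⊤) : 𝔟 = ⊤ := by
  refine eq_top_of_linearMap_one_eq_one (lcoeff Z 0 ∘ₗ normalFormSection β S hp) ?_ h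
  rw [LinearMap.comp_apply, ← map_one (Ideal.Quotient.mk _), normalFormSection_mk, normalForm_one]
  exact coeff_zero_one

end NormalForm

section RegularSequence

theorem algebraMap_mem_nonZeroDivisors_of_flat {A B : Type*} [CommRing A] [CommRing B]
    [Algebra A B] [Module.Flat A B] {a : A} (ha : a ∈ A⁰) : algebraMap A B a ∈ B⁰ := by
  refine mem_nonZeroDivisors_iff_left.2 fun b hb => ?_
  exact (Module.Flat.isSMulRegular_of_nonZeroDivisors (M := B) ha).right_eq_zero_of_smul
    ((Algebra.smul_def a b).trans hb)

theorem C_mem_nonZeroDivisors {σ A : Type*} [CommRing A] {a : A} (ha : a ∈ A⁰) :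
    MvPolynomial.C a ∈ (MvPolynomial σ A)⁰ :=
  algebraMap_mem_nonZeroDivisors_of_flat ha

variable {A : Type*} [CommRing A] {t : A} {e : ℕ → A}

theorem span_image_Iio_succ (n : ℕ) :
    Ideal.span (e '' Set.Iio (n + 1)) = Ideal.span {e n} ⊔ Ideal.span (e '' Set.Iio n) := by
  rw [← Ideal.span_union, Set.singleton_union, ← Set.image_insert_eq]
  congr 2
  ext m
  simp only [Set.mem_Iio, Set.mem_insert_iff]
  omega

theorem mem_span_image_Iio_of_mul_mem (ht : t ∈ A⁰)
    (he : ∀ n a, e n * a ∈ Ideal.span (e '' Set.Iio n) ⊔ Ideal.span {t} →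
      a ∈ Ideal.span (e '' Set.Iio n) ⊔ Ideal.span {t}) {n : ℕ} {a : A}
    (h : t * a ∈ Ideal.span (e '' Set.Iio n)) : a ∈ Ideal.span (e '' Set.Iio n) := by
  induction n generalizing a with
  | zero => simpa [mul_left_mem_nonZeroDivisors_eq_zero_iff ht] using h
  | succ n ih =>
    rw [span_image_Iio_succ, Ideal.mem_span_singleton_sup] at h ⊢
    obtain ⟨c, i, hi, hci⟩ := h
    have hc : c ∈ Ideal.span {t} ⊔ Ideal.span (e '' Set.Iio n) := by
      rw [sup_comm]
      refine he n c ?_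
      rw [show e n * c = t * a - i by linear_combination hci]
      exact Ideal.sub_mem _ (Ideal.mem_sup_right
        (Ideal.mul_mem_right _ _ (Ideal.mem_span_singleton_self t))) (Ideal.mem_sup_left hi)
    obtain ⟨c', i', hi', rfl⟩ := Ideal.mem_span_singleton_sup.1 hc
    refine ⟨c', a - c' * e n, ih ?_, by ring⟩
    rw [show t * (a - c' * e n) = i + e n * i' by linear_combination -hci]
    exact Ideal.add_mem _ hi (Ideal.mul_mem_left _ _ hi')

theorem mem_span_range_of_mul_mem (ht : t ∈ A⁰)
    (he : ∀ n a, e n * a ∈ Ideal.span (e '' Set.Iio n) ⊔ Ideal.span {t} →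
      a ∈ Ideal.span (e '' Set.Iio n) ⊔ Ideal.span {t}) {a : A}
    (h : t * a ∈ Ideal.span (Set.range e)) : a ∈ Ideal.span (Set.range e) := by
  have hmono : Monotone fun n => Ideal.span (e '' Set.Iio n) := fun m n hmn =>
    Ideal.span_mono (Set.image_mono (Set.Iio_subset_Iio hmn))
  have hsup : Ideal.span (Set.range e) = ⨆ n, Ideal.span (e '' Set.Iio n) := by
    rw [← Ideal.span_iUnion, ← Set.image_iUnion, Set.iUnion_Iio, Set.image_univ]
  rw [hsup, Submodule.mem_iSup_of_directed _ hmono.directed_le] at h ⊢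
  exact h.imp fun n => mem_span_image_Iio_of_mul_mem ht he

end RegularSequence

section Deformation

open Polynomial

variable {E : Type*} [CommRing E]

/-- The special fibre of the quotient of `E[X]` by the monic polynomial `f`, modulo `t`. -/
abbrev SpecialFibre (t : E) (f : E[X]) : Type _ :=
  AdjoinRoot (f.map (Ideal.Quotient.mk (Ideal.span {t})))

/-- The reduction map from `E[X]` to `SpecialFibre t f`. -/
noncomputable def specialize (t : E) (f : E[X]) : E[X] →+* SpecialFibre t f :=
  (AdjoinRoot.mk _).comp (mapRingHom (Ideal.Quotient.mk (Ideal.span {t})))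

theorem specialize_surjective (t : E) (f : E[X]) : Function.Surjective (specialize t f) :=
  AdjoinRoot.mk_surjective.comp (Polynomial.map_surjective _ Ideal.Quotient.mk_surjective)

theorem ker_mapRingHom_mk_span_singleton (t : E) :
    RingHom.ker (mapRingHom (Ideal.Quotient.mk (Ideal.span {t}))) = Ideal.span {C t} := by
  rw [ker_mapRingHom, Ideal.mk_ker, Ideal.map_span, Set.image_singleton]

theorem ker_specialize (t : E) (f : E[X]) :
    RingHom.ker (specialize t f) = Ideal.span {C t} ⊔ Ideal.span {f} := by
  have hker : RingHom.ker (AdjoinRoot.mk (f.map (Ideal.Quotient.mk (Ideal.span {t})))) =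
      (Ideal.span {f}).map (mapRingHom (Ideal.Quotient.mk (Ideal.span {t}))) := by
    rw [Ideal.map_span, Set.image_singleton]
    exact Ideal.mk_ker
  rw [specialize, ← RingHom.comap_ker, hker, Ideal.comap_map_of_surjective'
    _ (Polynomial.map_surjective _ Ideal.Quotient.mk_surjective),
    ker_mapRingHom_mk_span_singleton, sup_comm]

theorem specialize_C (t : E) (f : E[X]) (a : E) :
    specialize t f (C a) = algebraMap _ _ (Ideal.Quotient.mk (Ideal.span {t}) a) := by
  rw [specialize, RingHom.comp_apply, coe_mapRingHom, map_C]
  rfl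

theorem eq_top_of_map_specialFibre_eq_top {t : E} {f : E[X]} (hf : f.Monic)
    (hdeg : 0 < f.natDegree) {𝔟 : Ideal (E ⧸ Ideal.span {t})}
    (h : 𝔟.map (algebraMap _ (SpecialFibre t f)) = ⊤) : 𝔟 = ⊤ := by
  nontriviality E ⧸ Ideal.span {t}
  have : Module.Free (E ⧸ Ideal.span {t}) (SpecialFibre t f) := (hf.map _).free_adjoinRoot
  have : Nontrivial (SpecialFibre t f) := by
    refine nontrivial_of_ne 1 0 ?_
    rw [← map_one (AdjoinRoot.mk _), Ne, AdjoinRoot.mk_eq_zero]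
    exact (hf.map _).not_dvd_of_natDegree_lt one_ne_zero (by simpa [hf.natDegree_map] using hdeg)
  rw [← Ideal.comap_map_eq_self_of_faithfullyFlat (B := SpecialFibre t f) 𝔟, h, Ideal.comap_top]

/-- The quotient of `E[X][Y₀, Y₁, …]` by the relations `e n`. -/
def RelationQuotient (e : ℕ → MvPolynomial ℕ E[X]) : Type _ :=
  MvPolynomial ℕ E[X] ⧸ Ideal.span (Set.range e)

noncomputable instance (e : ℕ → MvPolynomial ℕ E[X]) : CommRing (RelationQuotient e) :=
  inferInstanceAs (CommRing (MvPolynomial ℕ E[X] ⧸ Ideal.span (Set.range e)))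

/-- The quotient map onto `RelationQuotient e`. -/
noncomputable def relationQuotientMk (e : ℕ → MvPolynomial ℕ E[X]) :
    MvPolynomial ℕ E[X] →+* RelationQuotient e :=
  Ideal.Quotient.mk _

theorem relationQuotientMk_surjective (e : ℕ → MvPolynomial ℕ E[X]) :
    Function.Surjective (relationQuotientMk e) :=
  Ideal.Quotient.mk_surjective

theorem ker_relationQuotientMk (e : ℕ → MvPolynomial ℕ E[X]) :
    RingHom.ker (relationQuotientMk e) = Ideal.span (Set.range e) :=
  Ideal.mk_ker

/-- The structure map of `RelationQuotient e`. -/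
noncomputable def toRelationQuotient (e : ℕ → MvPolynomial ℕ E[X]) : E →+* RelationQuotient e :=
  (relationQuotientMk e).comp (algebraMap E _)

/-- Relations `e n` in `E[X][Y₀, Y₁, …]` that agree modulo `t` with the triangular system
`b₀ = 0`, `Yₙ ^ p = bₙ₊₁`, where `b₀` is monic of positive degree. -/
structure IsTriangularModulo (t : E) (p : ℕ) (b : ℕ → E[X]) (e : ℕ → MvPolynomial ℕ E[X]) :
    Prop where
  monic : (b 0).Monic
  natDegree_pos : 0 < (b 0).natDegree
  dvd_zero : algebraMap E _ t ∣ e 0 - MvPolynomial.C (b 0)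
  dvd_succ : ∀ n, algebraMap E _ t ∣ e (n + 1) - (MvPolynomial.C (b (n + 1)) - MvPolynomial.X n ^ p)

namespace IsTriangularModulo

variable {t : E} {p : ℕ} {b : ℕ → E[X]} {e : ℕ → MvPolynomial ℕ E[X]}

variable (t b) in
/-- The right-hand sides `bₙ₊₁` of the relations `Yₙ ^ p = bₙ₊₁` modulo `t` and `b₀`. -/
noncomputable def radicand (n : ℕ) : SpecialFibre t (b 0) := specialize t (b 0) (b (n + 1))

variable (t b) in
theorem map_specialize_algebraMap (a : E) :
    MvPolynomial.map (specialize t (b 0)) (algebraMap E (MvPolynomial ℕ E[X]) a) =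
      algebraMap _ _ (Ideal.Quotient.mk (Ideal.span {t}) a) := by
  rw [MvPolynomial.algebraMap_apply, MvPolynomial.map_C, MvPolynomial.algebraMap_apply,
    ← specialize_C]
  rfl

variable (t b) in
theorem map_specialize_algebraMap_self :
    MvPolynomial.map (specialize t (b 0)) (algebraMap E (MvPolynomial ℕ E[X]) t) = 0 := by
  rw [map_specialize_algebraMap, Ideal.Quotient.eq_zero_iff_mem.2 (Ideal.mem_span_singleton_self t),
    map_zero]

variable (h : IsTriangularModulo t p b e)
include h

theorem map_specialize_succ (n : ℕ) : MvPolynomial.map (specialize t (b 0)) (e (n + 1)) =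
    -(MvPolynomial.X n ^ p - MvPolynomial.C (radicand t b n)) := by
  rw [map_eq_of_dvd_sub (map_specialize_algebraMap_self t b) (h.dvd_succ n), map_sub, map_pow,
    MvPolynomial.map_X, MvPolynomial.map_C, neg_sub, radicand]

theorem ker_map_specialize :
    RingHom.ker (MvPolynomial.map (σ := ℕ) (specialize t (b 0))) =
      Ideal.span {algebraMap E _ t} ⊔ Ideal.span {e 0} := by
  obtain ⟨y, hy⟩ := h.dvd_zero
  rw [MvPolynomial.ker_map, ker_specialize, Ideal.map_sup, Ideal.map_span, Ideal.map_span,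
    Set.image_singleton, Set.image_singleton, sub_eq_iff_eq_add'.1 hy, ← Ideal.span_insert,
    ← Ideal.span_insert, Ideal.span_pair_add_left_mul]
  rfl

theorem comap_powRootIdeal (S : Set ℕ) :
    (powRootIdeal p (radicand t b) S).comap (MvPolynomial.map (specialize t (b 0))) =
      Ideal.span (e '' insert 0 (Nat.succ '' S)) ⊔ Ideal.span {algebraMap E _ t} := by
  have hmap : powRootIdeal p (radicand t b) S =
      (Ideal.span (e '' (Nat.succ '' S))).map (MvPolynomial.map (specialize t (b 0))) := by
    refine (Submodule.span_neg _).symm.trans ?_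
    rw [← Set.image_neg_eq_neg, Ideal.map_span, Set.image_image, Set.image_image, Set.image_image]
    exact congrArg Ideal.span (Set.image_congr fun n _ => (h.map_specialize_succ n).symm)
  rw [hmap, Ideal.comap_map_of_surjective' _
    (MvPolynomial.map_surjective _ (specialize_surjective t (b 0))), h.ker_map_specialize,
    Set.image_insert_eq, Ideal.span_insert, ← sup_assoc, sup_comm]
  ac_rfl

theorem mem_span_of_zero_mul_mem {a : MvPolynomial ℕ E[X]}
    (ha : e 0 * a ∈ Ideal.span {algebraMap E _ t}) : a ∈ Ideal.span {algebraMap E _ t} := by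
  let r : MvPolynomial ℕ E[X] →+* MvPolynomial ℕ (E ⧸ Ideal.span {t})[X] :=
    MvPolynomial.map (mapRingHom (Ideal.Quotient.mk (Ideal.span {t})))
  have hker : RingHom.ker r = Ideal.span {algebraMap E _ t} := by
    rw [MvPolynomial.ker_map, ker_mapRingHom_mk_span_singleton, Ideal.map_span,
      Set.image_singleton]
    rfl
  have ht : r (algebraMap E _ t) = 0 := by
    rw [← RingHom.mem_ker, hker]
    exact Ideal.mem_span_singleton_self _
  have hreg : MvPolynomial.C ((b 0).map (Ideal.Quotient.mk (Ideal.span {t}))) ∈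
      (MvPolynomial ℕ (E ⧸ Ideal.span {t})[X])⁰ :=
    C_mem_nonZeroDivisors (h.monic.map _).mem_nonZeroDivisors
  have hr : r (e 0) = MvPolynomial.C ((b 0).map (Ideal.Quotient.mk (Ideal.span {t}))) := by
    rw [map_eq_of_dvd_sub ht h.dvd_zero, MvPolynomial.map_C, coe_mapRingHom]
  rwa [← hker, RingHom.mem_ker, map_mul, hr, mul_left_mem_nonZeroDivisors_eq_zero_iff hreg,
    ← RingHom.mem_ker, hker] at ha

theorem mem_of_mul_mem (hp : 0 < p) (n : ℕ) (a : MvPolynomial ℕ E[X])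
    (ha : e n * a ∈ Ideal.span (e '' Set.Iio n) ⊔ Ideal.span {algebraMap E _ t}) :
    a ∈ Ideal.span (e '' Set.Iio n) ⊔ Ideal.span {algebraMap E _ t} := by
  cases n with
  | zero =>
    have hbot : Ideal.span (e '' Set.Iio 0) = ⊥ := by simp
    rw [hbot, bot_sup_eq] at ha ⊢
    exact h.mem_span_of_zero_mul_mem ha
  | succ n =>
    have hIio : Set.Iio (n + 1) = insert 0 (Nat.succ '' Set.Iio n) := by
      ext (_ | m) <;> simp
    rw [hIio, ← h.comap_powRootIdeal, Ideal.mem_comap] at ha ⊢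
    rw [map_mul, h.map_specialize_succ, neg_mul, Ideal.neg_mem_iff] at ha
    exact mem_powRootIdeal_of_mul_mem hp (by simp) ha

theorem toRelationQuotient_mem_nonZeroDivisors (hp : 0 < p) (ht : t ∈ E⁰) :
    toRelationQuotient e t ∈ (RelationQuotient e)⁰ := by
  refine mem_nonZeroDivisors_iff_left.2 fun a ha => ?_
  obtain ⟨a, rfl⟩ := relationQuotientMk_surjective e a
  rw [toRelationQuotient, RingHom.comp_apply, ← map_mul, ← RingHom.mem_ker,
    ker_relationQuotientMk] at ha
  rw [← RingHom.mem_ker, ker_relationQuotientMk]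
  exact mem_span_range_of_mul_mem (algebraMap_mem_nonZeroDivisors_of_flat ht)
    (h.mem_of_mul_mem hp) ha

theorem comap_powRootIdeal_univ :
    (powRootIdeal p (radicand t b) Set.univ).comap (MvPolynomial.map (specialize t (b 0))) =
      Ideal.span (Set.range e) ⊔ Ideal.span {algebraMap E _ t} := by
  have huniv : insert 0 (Nat.succ '' Set.univ) = Set.univ := by
    ext (_ | m) <;> simp
  rw [h.comap_powRootIdeal, huniv, Set.image_univ]

/-- The reduction modulo `t` of the deformed system, onto the triangular one. -/
noncomputable def reduction : RelationQuotient e →+*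
    MvPolynomial ℕ (SpecialFibre t (b 0)) ⧸ powRootIdeal p (radicand t b) Set.univ :=
  Ideal.quotientMap _ (MvPolynomial.map (specialize t (b 0)))
    (le_sup_left.trans_eq h.comap_powRootIdeal_univ.symm)

theorem reduction_surjective : Function.Surjective h.reduction :=
  Ideal.quotientMap_surjective (MvPolynomial.map_surjective _ (specialize_surjective t (b 0)))

theorem reduction_toRelationQuotient (a : E) :
    h.reduction (toRelationQuotient e a) = algebraMap _ _ (Ideal.Quotient.mk (Ideal.span {t}) a) :=
  congrArg (Ideal.Quotient.mk _) (map_specialize_algebraMap t b a)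

theorem reduction_eq_zero_iff (x : RelationQuotient e) :
    h.reduction x = 0 ↔ toRelationQuotient e t ∣ x := by
  obtain ⟨x, rfl⟩ := relationQuotientMk_surjective e x
  calc h.reduction (relationQuotientMk e x) = 0
      ↔ x ∈ Ideal.span (Set.range e) ⊔ Ideal.span {algebraMap E _ t} := by
        rw [← h.comap_powRootIdeal_univ]
        exact Ideal.Quotient.eq_zero_iff_mem
    _ ↔ relationQuotientMk e x ∈ (Ideal.span {algebraMap E _ t}).map (relationQuotientMk e) := by
        rw [sup_comm]
        exact Ideal.mem_quotient_iff_mem_sup.symm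
    _ ↔ toRelationQuotient e t ∣ relationQuotientMk e x := by
        rw [Ideal.map_span, Set.image_singleton, Ideal.mem_span_singleton]
        rfl

theorem flatModulo (hp : 0 < p) :
    FlatModulo (toRelationQuotient e) t := by
  have := flat_quotient_powRootIdeal (radicand t b) Set.univ hp
  have : Module.Free (E ⧸ Ideal.span {t}) (SpecialFibre t (b 0)) := (h.monic.map _).free_adjoinRoot
  refine (FlatModulo.iff_of_reduction (fun a => (h.reduction_toRelationQuotient a).symm)
    Ideal.Quotient.mk_surjective h.reduction_surjective
    (fun a => Ideal.Quotient.eq_zero_iff_mem.trans Ideal.mem_span_singleton)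
    h.reduction_eq_zero_iff).2 (.of_flat ?_ 0)
  rw [RingHom.flat_algebraMap_iff]
  exact Module.Flat.trans _ (SpecialFibre t (b 0)) _

theorem faithfulModulo (hp : 0 < p) : FaithfulModulo (toRelationQuotient e) t :=
  (FaithfulModulo.iff_of_reduction (fun a => (h.reduction_toRelationQuotient a).symm)
    Ideal.Quotient.mk_surjective h.reduction_surjective
    (fun a => Ideal.Quotient.eq_zero_iff_mem.trans Ideal.mem_span_singleton)
    h.reduction_eq_zero_iff).2 fun 𝔞 _ htop => by
  rw [IsScalarTower.algebraMap_eq _ (SpecialFibre t (b 0)), ← Ideal.map_map] at htop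
  exact eq_top_of_map_specialFibre_eq_top h.monic h.natDegree_pos
    (eq_top_of_map_quotient_powRootIdeal_eq_top _ _ hp htop)

end IsTriangularModulo

end Deformation

section PerfectClosureComp

variable {p : ℕ} [hp : Fact p.Prime] {E G : Type*} [CommRing E] [CommRing G] [CharP G p]
  {f : E →+* G} {t : E}

theorem exists_forall_pow_eq_perfectClosure_of {ι : Type*} [Finite ι]
    (b : ι → PerfectClosure G p) :
    ∃ n, ∃ a : ι → G, ∀ i, b i ^ p ^ n = PerfectClosure.of G p (a i) := by
  have := Fintype.ofFinite ι
  choose N a ha using fun i => exists_pow_eq_perfectClosure_of (p := p) (b i)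
  refine ⟨∑ i, N i, fun i => a i ^ p ^ (∑ j, N j - N i), fun i => ?_⟩
  rw [map_pow, ← ha, ← pow_mul, ← pow_add,
    Nat.add_sub_cancel' (Finset.single_le_sum (fun _ _ => Nat.zero_le _) (Finset.mem_univ i))]

theorem exists_pow_dvd_dotProduct_of_dvd {ι : Type*} [Fintype ι] {c : G} {a : ι → G}
    {b : ι → PerfectClosure G p}
    (h : PerfectClosure.of G p c ∣ PerfectClosure.of G p ∘ a ⬝ᵥ b) :
    ∃ n, ∃ β : ι → G, (∀ i, b i ^ p ^ n = PerfectClosure.of G p (β i)) ∧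
      c ^ p ^ n ∣ (fun i => a i ^ p ^ n) ⬝ᵥ β := by
  obtain ⟨y, hy⟩ := h
  obtain ⟨n, β, hβ⟩ := exists_forall_pow_eq_perfectClosure_of fun i : Option ι => i.elim y b
  have hof : PerfectClosure.of G p (∑ i, a i ^ p ^ n * β (some i)) =
      PerfectClosure.of G p (c ^ p ^ n * β none) := by
    simp only [map_sum, map_mul, map_pow, ← hβ, Option.elim_none, Option.elim_some, ← mul_pow,
      ← sum_pow_char_pow]
    exact congrArg (· ^ p ^ n) hy
  obtain ⟨m, hm⟩ := exists_pow_eq_pow_of_perfectClosure_of_eq hof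
  refine ⟨n + m, fun i => β (some i) ^ p ^ m, fun i => ?_, β none ^ p ^ m, ?_⟩
  · rw [pow_add, pow_mul, map_pow, ← hβ, Option.elim_some]
  · rw [pow_add, pow_mul, ← mul_pow, ← hm, sum_pow_char_pow]
    simp only [dotProduct, mul_pow, pow_mul]

theorem flatModulo_perfectClosure_of_comp [CharP E p] [PerfectRing E p]
    (hf : ∀ n, FlatModulo f (t ^ p ^ n)) : FlatModulo ((PerfectClosure.of G p).comp f) t := by
  intro ι _ a b hab
  obtain ⟨n, β, hβ, hdvd⟩ := exists_pow_dvd_dotProduct_of_dvd (a := f ∘ a) hab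
  obtain ⟨κ, _, α, w, e, hrel, hα⟩ := hf n ι (fun i => a i ^ p ^ n) β (by
    simpa only [Function.comp_def, map_pow] using hdvd)
  refine ⟨κ, inferInstance, α.map (powRoot p n), fun j => powRoot p n (PerfectClosure.of G p (w j)),
    fun i => powRoot p n (PerfectClosure.of G p (e i)), ?_, fun j => ?_⟩
  · ext i
    have hi : β i = ∑ j, f (α i j) * w j + f t ^ p ^ n * e i := by
      simpa [Matrix.mulVec, dotProduct] using congrFun hrel i
    have hroot (x : E) : powRoot p n (PerfectClosure.of G p (f x)) =
        PerfectClosure.of G p (f (powRoot p n x)) :=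
      (map_powRoot ((PerfectClosure.of G p).comp f) n x).symm
    rw [← powRoot_eq_of_pow_eq (hβ i), hi]
    simp [Matrix.mulVec, dotProduct, hroot, powRoot_eq_of_pow_eq rfl]
  · refine dvd_of_pow_dvd_pow (p := p) (r := n) ?_
    convert hα j using 1
    simp [Matrix.vecMul, dotProduct, sum_pow_char_pow, mul_pow, powRoot_pow]

theorem faithfulModulo_perfectClosure_of_comp (hf : FaithfulModulo f t) :
    FaithfulModulo ((PerfectClosure.of G p).comp f) t := by
  intro 𝔞 ht htop
  have hpos (m : ℕ) : 0 < p ^ m := pow_pos hp.out.pos _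
  obtain ⟨k, s, g, hs⟩ := (Submodule.mem_span_set' (R := PerfectClosure G p)).1
    ((Ideal.eq_top_iff_one _).1 htop)
  choose x hx𝔞 hx using fun i => (g i).2
  obtain ⟨n, β, hβ⟩ := exists_forall_pow_eq_perfectClosure_of s
  have hof : PerfectClosure.of G p (∑ i, β i * f (x i) ^ p ^ n) = PerfectClosure.of G p 1 := by
    rw [map_one, ← one_pow (p ^ n), ← hs, sum_pow_char_pow, map_sum]
    simp only [smul_eq_mul, ← hx, mul_pow, hβ, map_mul, map_pow, RingHom.comp_apply]
  obtain ⟨m, hm⟩ := exists_pow_eq_pow_of_perfectClosure_of_eq hof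
  refine hf ht ((Ideal.eq_top_iff_one _).2 ?_)
  rw [← one_pow (p ^ m), ← hm]
  refine Ideal.pow_mem_of_mem _ (Ideal.sum_mem _ fun i _ => Ideal.mul_mem_left _ _ ?_) _ (hpos m)
  exact Ideal.pow_mem_of_mem _ (Ideal.mem_map_of_mem f (hx𝔞 i)) _ (hpos n)

end PerfectClosureComp

section AdjoinRoot

open WittVector Polynomial

universe u

variable {p : ℕ} [hp : Fact p.Prime]

theorem dvd_coeff_add_teichmuller_mul_sub {C : Type*} [CommRing C] (t : C) (x y z : WittVector p C)
    (n : ℕ) : t ∣ ((x + teichmuller p t * z) * y).coeff n - (x * y).coeff n := by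
  have ht : Ideal.Quotient.mk (Ideal.span {t}) t = 0 :=
    Ideal.Quotient.eq_zero_iff_mem.2 (Ideal.mem_span_singleton_self t)
  rw [← Ideal.mem_span_singleton, ← Ideal.Quotient.eq, ← map_coeff, ← map_coeff]
  simp [ht]

variable {E : Type u} [CommRing E]

/-- The Witt vector `F([X])` over `E[X]`, for a polynomial `F` over `W(E)`. -/
noncomputable def evalTeichmullerX (F : (WittVector p E)[X]) : WittVector p E[X] :=
  F.eval₂ (WittVector.map C) (teichmuller p X)

theorem evalTeichmullerX_coeff_zero (F : (WittVector p E)[X]) :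
    (evalTeichmullerX F).coeff 0 = F.map WittVector.constantCoeff := by
  have hcomp : (WittVector.constantCoeff (p := p)).comp (WittVector.map (C : E →+* E[X])) =
      C.comp WittVector.constantCoeff := RingHom.ext fun _ => rfl
  change WittVector.constantCoeff (evalTeichmullerX F) = _
  rw [evalTeichmullerX, hom_eval₂, hcomp, constantCoeff_teichmuller]
  rfl

/-- The `n`-th Witt component of the equation `F([X]) = (p + [t] w) · (Y₀, Y₁, …)`. Modulo `t` the
right-hand side is `(0, Y₀ ^ p, Y₁ ^ p, …)`, so the equations become triangular. -/
noncomputable def rootRelation (t : E) (w : WittVector p E) (F : (WittVector p E)[X]) (n : ℕ) :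
    MvPolynomial ℕ E[X] :=
  MvPolynomial.C ((evalTeichmullerX F).coeff n) -
    (WittVector.map (algebraMap E (MvPolynomial ℕ E[X]))
      ((p : WittVector p E) + teichmuller p t * w) * mk p MvPolynomial.X).coeff n

variable {t : E} {w : WittVector p E} {F : (WittVector p E)[X]}

theorem isTriangularModulo_rootRelation [CharP E p] (hF : F.Monic) (hFd : 0 < F.natDegree) :
    IsTriangularModulo t p (evalTeichmullerX F).coeff (rootRelation t w F) := by
  have : Nontrivial E := CharP.nontrivial_of_char_ne_one hp.out.ne_one
  have hmod (n : ℕ) : algebraMap E (MvPolynomial ℕ E[X]) t ∣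
      rootRelation t w F n - (MvPolynomial.C ((evalTeichmullerX F).coeff n) -
        (mk p MvPolynomial.X * (p : WittVector p (MvPolynomial ℕ E[X]))).coeff n) := by
    rw [rootRelation, sub_sub_sub_cancel_left, dvd_sub_comm, mul_comm (mk p _),
      map_add, map_mul, map_teichmuller, map_natCast]
    exact dvd_coeff_add_teichmuller_mul_sub _ _ _ _ n
  have hmonic := hF.map (WittVector.constantCoeff (p := p) (R := E))
  refine ⟨?_, ?_, ?_, fun n => ?_⟩
  · rwa [evalTeichmullerX_coeff_zero]
  · rwa [evalTeichmullerX_coeff_zero, hF.natDegree_map]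
  · simpa only [mul_charP_coeff_zero, sub_zero] using hmod 0
  · simpa only [mul_charP_coeff_succ, coeff_mk] using hmod (n + 1)

theorem map_relationQuotientMk_evalTeichmullerX :
    WittVector.map ((relationQuotientMk (rootRelation t w F)).comp MvPolynomial.C)
        (evalTeichmullerX F) =
      WittVector.map (toRelationQuotient (rootRelation t w F))
          ((p : WittVector p E) + teichmuller p t * w) *
        WittVector.map (relationQuotientMk (rootRelation t w F)) (mk p MvPolynomial.X) := by
  ext n
  have hn : rootRelation t w F n ∈ RingHom.ker (relationQuotientMk (rootRelation t w F)) := by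
    rw [ker_relationQuotientMk]
    exact Ideal.subset_span ⟨n, rfl⟩
  rw [RingHom.mem_ker, rootRelation, map_sub, sub_eq_zero] at hn
  rw [toRelationQuotient, map_coeff, RingHom.comp_apply, hn, ← map_coeff, map_mul]
  rfl

theorem exists_perfectRing_dvd_eval₂_teichmuller [CharP E p] [PerfectRing E p] (ht : t ∈ E⁰)
    (htu : ¬IsUnit t) (w : WittVector p E) (hF : F.Monic) (hFd : 0 < F.natDegree) :
    ∃ (E' : Type u) (_ : CommRing E') (_ : CharP E' p) (_ : PerfectRing E' p) (h : E →+* E')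
      (z : E'), h t ∈ E'⁰ ∧ FlatModulo h t ∧ FaithfulModulo h t ∧
        WittVector.map h ((p : WittVector p E) + teichmuller p t * w) ∣
          F.eval₂ (WittVector.map h) (teichmuller p z) := by
  let G := RelationQuotient (rootRelation t w F)
  let mk : MvPolynomial ℕ E[X] →+* G := relationQuotientMk _
  let f : E →+* G := toRelationQuotient _
  have hrel := isTriangularModulo_rootRelation (t := t) (w := w) hF hFd
  have hfaithful : FaithfulModulo f t := hrel.faithfulModulo hp.out.pos
  have hft : f t ∈ G⁰ := hrel.toRelationQuotient_mem_nonZeroDivisors hp.out.pos ht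
  have hflat (n : ℕ) : FlatModulo f (t ^ p ^ n) := by
    rw [← Nat.sub_add_cancel (Nat.one_le_pow n p hp.out.pos)]
    exact (hrel.flatModulo hp.out.pos).pow hft _
  have : Nontrivial G := by
    by_contra hG
    rw [not_nontrivial_iff_subsingleton] at hG
    exact htu (Ideal.span_singleton_eq_top.1
      (hfaithful (Ideal.mem_span_singleton_self t) (Subsingleton.elim _ _)))
  have : CharP G p := (CharP.charP_iff_prime_eq_zero hp.out).2 (by
    rw [← map_natCast f, CharP.cast_eq_zero, map_zero])
  let of := PerfectClosure.of G p
  refine ⟨PerfectClosure G p, inferInstance, inferInstance, inferInstance, of.comp f,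
    of (mk (MvPolynomial.C X)), perfectClosure_of_mem_nonZeroDivisors hft,
    flatModulo_perfectClosure_of_comp hflat, faithfulModulo_perfectClosure_of_comp hfaithful, ?_⟩
  have heval : F.eval₂ (WittVector.map (of.comp f)) (teichmuller p (of (mk (MvPolynomial.C X)))) =
      WittVector.map of (WittVector.map (mk.comp MvPolynomial.C) (evalTeichmullerX F)) := by
    rw [evalTeichmullerX, hom_eval₂, hom_eval₂, map_teichmuller, map_teichmuller]
    rfl
  rw [heval, map_relationQuotientMk_evalTeichmullerX, map_mul]
  exact Dvd.intro _ rfl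

theorem Untilt.exists_eval₂_sharp_eq_zero {T : Type*} [CommRing T] [CharP E p] [PerfectRing E p]
    (P : Untilt p E T) (hT : ¬IsUnit (p : T)) {F : T[X]} (hF : F.Monic) (hFd : 0 < F.natDegree) :
    ∃ (E' T' : Type u) (_ : CommRing E') (_ : CharP E' p) (_ : PerfectRing E' p) (_ : CommRing T')
      (P' : Untilt p E' T') (Θ : T →+* T') (z : E'),
      FlatModulo Θ (p : T) ∧ FaithfulModulo Θ (p : T) ∧ F.eval₂ Θ (P'.sharp z) = 0 := by
  have htu : ¬IsUnit P.t := fun h => hT (P.associated_sharp_t.isUnit (h.map P.sharp))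
  obtain ⟨F, rfl, hdeg, hF⟩ := lifts_and_natDegree_eq_and_monic
    ((mem_lifts F).2 (map_surjective P.theta P.theta_surjective F)) hF
  obtain ⟨E', _, _, _, h, z, ht, hflat, hfaithful, hdvd⟩ :=
    exists_perfectRing_dvd_eval₂_teichmuller P.t_mem_nonZeroDivisors htu P.w hF (by rwa [hdeg])
  refine ⟨E', P.BaseChange h, _, _, _, _, P.baseChange h ht, P.baseChangeMap h, z,
    P.flatModulo_baseChangeMap ht hflat, P.faithfulModulo_baseChangeMap ht hfaithful, ?_⟩
  have hcomp : (P.baseChangeMap h).comp P.theta =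
      (P.baseChange h ht).theta.comp (WittVector.map h) :=
    RingHom.ext (P.baseChangeMap_theta ht)
  rw [eval₂_map, hcomp, sharp_apply, ← hom_eval₂]
  have hzero := map_dvd (P.baseChange h ht).theta hdvd
  rwa [← P.baseChangeMap_theta ht, (P.theta_eq_zero_iff _).2 dvd_rfl, map_zero, zero_dvd_iff]
    at hzero

end AdjoinRoot

/-! ### Triviality of the closure over a base with a flat untilt -/

section PrimitiveElement

open Polynomial

variable {R K Ω : Type*} [CommRing R] [Field K] [Algebra R K]
  [Field Ω] [Algebra K Ω]

theorem exists_adjoin_eq_adjoin_simple [CharZero K] {S : Set Ω} (hS : S.Finite)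
    (hint : ∀ x ∈ S, IsIntegral K x) :
    ∃ α : Ω, IsIntegral K α ∧ IntermediateField.adjoin K S = IntermediateField.adjoin K {α} := by
  have : Finite S := hS
  have : FiniteDimensional K (IntermediateField.adjoin K S) :=
    IntermediateField.finiteDimensional_adjoin hint
  obtain ⟨α, hα⟩ := Field.exists_primitive_element K (IntermediateField.adjoin K S)
  refine ⟨α, (Algebra.IsIntegral.isIntegral (R := K) α).algebraMap, ?_⟩
  rw [← IntermediateField.lift_adjoin_simple, hα, IntermediateField.lift_top]

variable [IsDomain R] [IsFractionRing R K]

variable (R) in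
theorem exists_adjoin_simple_eq_and_monic_map_eq_minpoly {α : Ω} (hα : IsIntegral K α) :
    ∃ z : Ω, IntermediateField.adjoin K {z} = IntermediateField.adjoin K {α} ∧ IsIntegral K z ∧
      ∃ f : R[X], f.Monic ∧ f.map (algebraMap R K) = minpoly K z := by
  set μ := minpoly K α
  have hμ : μ.Monic := minpoly.monic hα
  let c := IsLocalization.commonDenom R⁰ μ.support μ.coeff
  let b := algebraMap R K c
  have hb : b ≠ 0 := IsFractionRing.to_map_ne_zero_of_mem_nonZeroDivisors c.2
  obtain ⟨f, hfμ, -, hf⟩ := lifts_and_natDegree_eq_and_monic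
    (IsLocalization.scaleRoots_commonDenom_mem_lifts R⁰ μ ⟨1, by simp [hμ.leadingCoeff]⟩)
    ((monic_scaleRoots_iff _).2 hμ)
  set z := algebraMap K Ω b * α with hzα
  have hz : IsIntegral K z := isIntegral_algebraMap.mul hα
  have hαz : α = algebraMap K Ω b⁻¹ * z := by
    rw [hzα, ← mul_assoc, ← map_mul, inv_mul_cancel₀ hb, map_one, one_mul]
  have hadjoin : IntermediateField.adjoin K {z} = IntermediateField.adjoin K {α} := by
    refine le_antisymm (IntermediateField.adjoin_simple_le_iff.2 ?_)
      (IntermediateField.adjoin_simple_le_iff.2 ?_)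
    · exact mul_mem (algebraMap_mem _ b) (IntermediateField.mem_adjoin_simple_self K α)
    · rw [hαz]
      exact mul_mem (algebraMap_mem _ b⁻¹) (IntermediateField.mem_adjoin_simple_self K z)
  refine ⟨z, hadjoin, hz, f, hf, eq_of_monic_of_dvd_of_natDegree_le (minpoly.monic hz) (hf.map _)
    (minpoly.dvd K _ ?_) ?_⟩
  · rw [hfμ]
    exact scaleRoots_aeval_eq_zero (minpoly.aeval K α)
  · rw [hfμ, natDegree_scaleRoots, ← IntermediateField.adjoin.finrank hz, hadjoin,
      IntermediateField.adjoin.finrank hα]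

variable [Algebra R Ω] [IsScalarTower R K Ω]

variable (R) in
theorem exists_smul_mem_adjoin_of_mem_adjoin_simple {z x : Ω} (hz : IsIntegral K z)
    (hx : x ∈ IntermediateField.adjoin K {z}) : ∃ g : R, g ≠ 0 ∧ g • x ∈ Algebra.adjoin R {z} := by
  rw [← IntermediateField.mem_toSubalgebra,
    IntermediateField.adjoin_simple_toSubalgebra_of_isAlgebraic hz.isAlgebraic,
    Algebra.adjoin_singleton_eq_range_aeval] at hx
  obtain ⟨G, rfl⟩ := hx
  obtain ⟨g, hg, hgG⟩ := IsLocalization.integerNormalization_spec R⁰ G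
  refine ⟨g, nonZeroDivisors.ne_zero hg, ?_⟩
  rw [Algebra.adjoin_singleton_eq_range_aeval]
  refine ⟨IsLocalization.integerNormalization R⁰ G, ?_⟩
  change aeval z _ = g • aeval z G
  rw [← aeval_map_algebraMap K, hgG, ← algebraMap_smul K, map_smul, algebraMap_smul]

theorem exists_smul_mem_of_mem_span {M : Type*} [AddCommGroup M] [Module R M]
    {N : Submodule R M} {s : Finset M} (h : ∀ x ∈ s, ∃ g : R, g ≠ 0 ∧ g • x ∈ N) :
    ∃ g : R, g ≠ 0 ∧ ∀ x ∈ Submodule.span R (s : Set M), g • x ∈ N := by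
  classical
  choose! g hg0 hg using h
  refine ⟨∏ x ∈ s, g x, Finset.prod_ne_zero_iff.2 hg0, fun x hx => ?_⟩
  have hspan : Submodule.span R (s : Set M) ≤ N.comap (LinearMap.lsmul R M (∏ x ∈ s, g x)) :=
    Submodule.span_le.2 fun y hy => by
      rw [SetLike.mem_coe, Submodule.mem_comap, LinearMap.lsmul_apply,
        ← Finset.prod_erase_mul s g hy, mul_smul]
      exact N.smul_mem _ (hg y hy)
  exact hspan hx

variable (K) in
include K in
theorem exists_adjoinRoot_smul_mem_range [CharZero R] (A : Subalgebra R Ω) [Module.Finite R A] :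
    ∃ f : R[X], f.Monic ∧ 0 < f.natDegree ∧ ∃ ι : AdjoinRoot f →ₐ[R] Ω, Function.Injective ι ∧
      ∃ g : R, g ≠ 0 ∧ ∀ x ∈ A, g • x ∈ ι.range := by
  have : CharZero K := charZero_of_injective_algebraMap (IsFractionRing.injective R K)
  obtain ⟨s, hs⟩ : (Subalgebra.toSubmodule A).FG := Module.Finite.iff_fg.1 ‹_›
  have hint (x : Ω) (hx : x ∈ s) : IsIntegral R x := by
    have hxA : x ∈ A := (Subalgebra.mem_toSubmodule _).1 (hs ▸ Submodule.subset_span hx)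
    exact (Algebra.IsIntegral.isIntegral (R := R) (⟨x, hxA⟩ : A)).map A.val
  obtain ⟨α, hα, hsα⟩ :=
    exists_adjoin_eq_adjoin_simple (K := K) s.finite_toSet fun x hx => (hint x hx).tower_top
  obtain ⟨z, hzα, hz, f, hf, hfz⟩ := exists_adjoin_simple_eq_and_monic_map_eq_minpoly R hα
  have hroot : aeval z f = 0 := by rw [← aeval_map_algebraMap K, hfz, minpoly.aeval]
  let ι : AdjoinRoot f →ₐ[R] Ω := AdjoinRoot.liftAlgHom f (Algebra.ofId R Ω) z hroot
  have hιmk (G : R[X]) : ι (AdjoinRoot.mk f G) = aeval z G := rfl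
  obtain ⟨g, hg0, hg⟩ := exists_smul_mem_of_mem_span (R := R) (s := s)
    (N := Subalgebra.toSubmodule (Algebra.adjoin R {z})) fun x hx =>
      exists_smul_mem_adjoin_of_mem_adjoin_simple R hz
        (hzα ▸ hsα ▸ IntermediateField.subset_adjoin K _ hx)
  refine ⟨f, hf, ?_, ι, (injective_iff_map_eq_zero ι).2 fun x hx => ?_, g, hg0, fun x hx => ?_⟩
  · rw [← hf.natDegree_map (algebraMap R K), hfz]
    exact minpoly.natDegree_pos hz
  · obtain ⟨G, rfl⟩ := AdjoinRoot.mk_surjective x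
    rw [hιmk, ← aeval_map_algebraMap K] at hx
    rw [AdjoinRoot.mk_eq_zero, ← map_dvd_map _ (IsFractionRing.injective R K) hf, hfz]
    exact minpoly.dvd K z hx
  · have hzι : Algebra.adjoin R {z} ≤ ι.range :=
      Algebra.adjoin_singleton_le ⟨AdjoinRoot.root f, AdjoinRoot.liftAlgHom_root _ _ _ _⟩
    exact hzι (hg x (by rwa [hs]))

variable (K) in
include K in
/-- `G` is multiplication by `g`, which moves `A` into the monogenic algebra `R[X] / (f)`. -/
theorem exists_linearMap_adjoinRoot [CharZero R] {A : Type*} [CommRing A] [Algebra R A]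
    [Module.Finite R A] (i : A →ₐ[R] Ω) :
    ∃ f : R[X], f.Monic ∧ 0 < f.natDegree ∧ ∃ g : R, g ≠ 0 ∧ ∃ G : A →ₗ[R] AdjoinRoot f,
      G 1 = algebraMap R _ g ∧ ∀ x y, G x * G y = g • G (x * y) := by
  have : Module.Finite R i.range := .of_surjective i.rangeRestrict.toLinearMap
    i.rangeRestrict_surjective
  obtain ⟨f, hf, hf0, ι, hι, g, hg0, hg⟩ := exists_adjoinRoot_smul_mem_range K i.range
  have hgi (x : A) : g • i x ∈ ι.range := hg _ ⟨x, rfl⟩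
  let G : A →ₗ[R] AdjoinRoot f := (AlgEquiv.ofInjective ι hι).symm.toLinearMap ∘ₗ
    (g • i.toLinearMap).codRestrict (Subalgebra.toSubmodule ι.range) hgi
  have hιG (x : A) : ι (G x) = g • i x :=
    congrArg Subtype.val ((AlgEquiv.ofInjective ι hι).apply_symm_apply ⟨g • i x, hgi x⟩)
  refine ⟨f, hf, hf0, g, hg0, G, hι ?_, fun x y => hι ?_⟩
  · rw [hιG, AlgHom.commutes, map_one, Algebra.algebraMap_eq_smul_one]
  · rw [map_mul, map_smul, hιG, hιG, hιG, map_mul, smul_mul_smul_comm, mul_smul]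

theorem pow_succ_eq_smul_of_mul_eq_smul {R A B : Type*} [CommSemiring R] [Semiring A] [Semiring B]
    [Algebra R B] {g : R} {G : A → B} (hG : ∀ x y, G x * G y = g • G (x * y)) (x : A) (n : ℕ) :
    G x ^ (n + 1) = g ^ n • G (x ^ (n + 1)) := by
  induction n with
  | zero => simp
  | succ n ih => rw [pow_succ, ih, smul_mul_assoc, hG, smul_smul, ← pow_succ, ← pow_succ]

end PrimitiveElement

section Descent

variable {R T : Type*} [CommRing R] [CommRing T] {φ : R →+* T} {π : R}

theorem exists_pow_dvd_of_pow_dvd_mul [IsDomain R] [IsNoetherianRing R] (π : R) {g : R}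
    (hg : g ≠ 0) (k : ℕ) : ∃ N, ∀ a, π ^ N ∣ g * a → π ^ k ∣ a := by
  obtain ⟨m, hm⟩ :=
    Ideal.exists_pow_inf_eq_pow_smul (Ideal.span {π}) (Ideal.span {g} : Submodule R R)
  refine ⟨m + k, fun a ha => ?_⟩
  have hga : g * a ∈ (Ideal.span {π} ^ (m + k) • ⊤ ⊓ Ideal.span {g} : Submodule R R) := by
    refine ⟨?_, Ideal.mul_mem_right _ _ (Ideal.mem_span_singleton_self _)⟩
    simpa [Ideal.span_singleton_pow, Ideal.mem_span_singleton] using ha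
  rw [hm _ (Nat.le_add_right _ _), Nat.add_sub_cancel_left] at hga
  have hle : Ideal.span {π} ^ k • (Ideal.span {π} ^ m • ⊤ ⊓ Ideal.span {g} : Submodule R R) ≤
      Ideal.span {π ^ k * g} := by
    rw [← Ideal.span_singleton_mul_span_singleton, ← Ideal.span_singleton_pow]
    exact Submodule.smul_mono le_rfl inf_le_right
  have hdvd := Ideal.mem_span_singleton.1 (hle hga)
  rw [mul_comm (π ^ k)] at hdvd
  exact (mul_dvd_mul_iff_left hg).1 hdvd

theorem FlatModulo.exists_pow_dvd_of_pow_dvd_mul [IsDomain R] [IsNoetherianRing R]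
    (h : FlatModulo φ π) (hπ : φ π ∈ T⁰) {g : R} (hg : g ≠ 0) (k : ℕ) :
    ∃ N, ∀ b, φ π ^ N ∣ φ g * b → φ π ^ k ∣ b := by
  obtain ⟨N, hN⟩ := _root_.exists_pow_dvd_of_pow_dvd_mul π hg k
  refine ⟨N + 1, fun b hb => ?_⟩
  have hb' : φ g * b ∈ (Ideal.span {π ^ (N + 1)}).map φ := by
    rwa [Ideal.map_span, Set.image_singleton, Ideal.mem_span_singleton, map_pow]
  have hcolon (a : R) (ha : g * a ∈ Ideal.span {π ^ (N + 1)}) : a ∈ Ideal.span {π ^ k} := by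
    rw [Ideal.mem_span_singleton] at ha ⊢
    exact hN a ((pow_dvd_pow π N.le_succ).trans ha)
  have hmem := (h.pow hπ N).mem_map_of_mul_mem_map (Ideal.mem_span_singleton_self _) hb' hcolon
  rwa [Ideal.map_span, Set.image_singleton, Ideal.mem_span_singleton, map_pow] at hmem

theorem FaithfulModulo.not_isUnit_map (h : FaithfulModulo φ π) (hπ : ¬ IsUnit π) :
    ¬ IsUnit (φ π) := fun hu => hπ <| Ideal.span_singleton_eq_top.1 <|
  h (Ideal.mem_span_singleton_self π) <| by
    rwa [Ideal.map_span, Set.image_singleton, Ideal.span_singleton_eq_top]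

theorem FaithfulModulo.nontrivial (h : FaithfulModulo φ π) (hπ : ¬ IsUnit π) : Nontrivial T := by
  by_contra hT
  rw [not_nontrivial_iff_subsingleton] at hT
  exact h.not_isUnit_map hπ (isUnit_of_subsingleton _)

variable [IsLocalRing R]

theorem FaithfulModulo.map_maximalIdeal_ne_top (h : FaithfulModulo φ π)
    (hπ : π ∈ maximalIdeal R) : (maximalIdeal R).map φ ≠ ⊤ := fun htop =>
  (maximalIdeal.isMaximal R).ne_top (h hπ htop)

variable {J : Ideal R} {g u c : R} {ρ y₀ a₀ b₀ : T} {m n N : ℕ}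

theorem FlatModulo.mem_map_maximalIdeal_of_mul_eq_sum {ι : Type*} [Fintype ι] {j : ι → R}
    {y a b : ι → T} (h : FlatModulo φ (π ^ m)) (hπJ : π ^ m ∈ J) (hu : u ∉ J)
    (hj : ∀ i, j i ∈ J) (hg : ∀ b, φ π ^ N ∣ φ g * b → φ π ^ m ∣ b)
    (h₀ : ρ * y₀ = φ g * a₀ + φ π ^ N * b₀) (hy : ∀ i, ρ * y i = φ g * a i + φ π ^ N * b i)
    (hrel : y₀ * φ u = ∑ i, φ (j i) * y i) : a₀ ∈ (maximalIdeal R).map φ := by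
  have hsum : φ g * ∑ i, φ (j i) * a i = ρ * (y₀ * φ u) - φ π ^ N * ∑ i, φ (j i) * b i := by
    rw [hrel, Finset.mul_sum, Finset.mul_sum, Finset.mul_sum, ← Finset.sum_sub_distrib]
    exact Finset.sum_congr rfl fun i _ => by linear_combination -φ (j i) * hy i
  have hdvd : φ π ^ m ∣ φ u * a₀ - ∑ i, φ (j i) * a i :=
    hg _ ⟨∑ i, φ (j i) * b i - b₀ * φ u, by linear_combination -φ u * h₀ - hsum⟩
  refine h.mem_map_maximalIdeal hπJ ?_ hu
  rw [← sub_add_cancel (φ u * a₀) (∑ i, φ (j i) * a i)]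
  refine add_mem (Ideal.mem_of_dvd _ hdvd ?_)
    (sum_mem fun i _ => Ideal.mul_mem_right _ _ (Ideal.mem_map_of_mem φ (hj i)))
  rw [← map_pow]
  exact Ideal.mem_map_of_mem φ hπJ

theorem FlatModulo.pow_mem_map_maximalIdeal_of_pow_eq (h : FlatModulo φ (π ^ n))
    (hπ : π ∈ maximalIdeal R) (hc : c ∉ maximalIdeal R ^ n)
    (hg : ∀ b, φ π ^ N ∣ φ g ^ n * b → φ π ^ n ∣ b)
    (h₀ : ρ * y₀ = φ g * a₀ + φ π ^ N * b₀) (hpow : y₀ ^ n = φ g ^ n * φ c)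
    (ha₀ : a₀ ∈ (maximalIdeal R).map φ) : ρ ^ n ∈ (maximalIdeal R).map φ := by
  have hdvd : φ π ^ n ∣ φ c * ρ ^ n - a₀ ^ n := by
    refine hg _ ?_
    have hcalc : φ g ^ n * (φ c * ρ ^ n - a₀ ^ n) = (ρ * y₀) ^ n - (φ g * a₀) ^ n := by
      rw [mul_pow ρ, hpow]; ring
    rw [hcalc]
    exact .trans ⟨b₀, by rw [h₀]; ring⟩ (sub_dvd_pow_sub_pow _ _ n)
  refine h.mem_map_maximalIdeal (Ideal.pow_mem_pow hπ n) ?_ hc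
  rw [← sub_add_cancel (φ c * ρ ^ n) (a₀ ^ n), Ideal.map_pow]
  refine add_mem (Ideal.mem_of_dvd _ hdvd ?_) (Ideal.pow_mem_pow ha₀ n)
  exact Ideal.pow_mem_pow (Ideal.mem_map_of_mem φ hπ) n

theorem exists_notMem_maximalIdeal_pow [IsNoetherianRing R] (hc : c ≠ 0) :
    ∃ n, c ∉ maximalIdeal R ^ n := by
  by_contra! hmem
  refine hc ?_
  rwa [← Ideal.mem_iInf, Ideal.iInf_pow_eq_bot_of_isLocalRing _
    (maximalIdeal.isMaximal R).ne_top, Ideal.mem_bot] at hmem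

theorem mem_of_forall_mem_sup_span_pow [IsNoetherianRing R] (hπ : π ∈ maximalIdeal R)
    (h : ∀ N : ℕ, u ∈ J ⊔ Ideal.span {π ^ (N + 1)}) : u ∈ J := by
  have hproper : Ideal.span {π} ≠ ⊤ := fun htop =>
    (mem_maximalIdeal _).1 hπ (Ideal.span_singleton_eq_top.1 htop)
  have hinf : Ideal.Quotient.mk J u ∈ (⨅ N : ℕ, Ideal.span {π} ^ N • ⊤ : Submodule R (R ⧸ J)) := by
    refine (Submodule.mem_iInf _).2 fun N => ?_
    have hu := h N
    rw [sup_comm, Ideal.mem_span_singleton_sup] at hu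
    obtain ⟨a, b, hb, rfl⟩ := hu
    rw [map_add, Ideal.Quotient.eq_zero_iff_mem.2 hb, add_zero, pow_succ', ← mul_assoc, mul_comm]
    exact Submodule.smul_mem_smul (Ideal.pow_mem_pow (Ideal.mem_span_singleton_self π) N)
      (Submodule.mem_top (x := Ideal.Quotient.mk J (a * π)))
  rwa [Ideal.iInf_pow_smul_eq_bot_of_isLocalRing _ hproper, Submodule.mem_bot,
    Ideal.Quotient.eq_zero_iff_mem] at hinf

end Descent

section UntiltDescent

variable {p : ℕ} [Fact p.Prime] {E T : Type*} [CommRing E] [CharP E p] [PerfectRing E p]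
  [CommRing T] (P : Untilt p E T) {R : Type*} [CommRing R] {φ : R →+* T}

namespace Untilt

include P in
theorem flatModulo_natCast_pow (hflat : FlatModulo φ (p : R)) (k : ℕ) :
    FlatModulo φ ((p : R) ^ (k + 1)) :=
  hflat.pow (by rw [map_natCast]; exact P.natCast_mem_nonZeroDivisors) k

variable [IsDomain R] [IsNoetherianRing R] [IsLocalRing R]

theorem eq_zero_of_forall_sharp_powRoot_mem (hp : (p : R) ∈ maximalIdeal R)
    (hflat : FlatModulo φ (p : R)) (hfaithful : FaithfulModulo φ (p : R)) {x : R} {δ : E}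
    (hδ : P.sharp δ ∣ φ x) {n : ℕ}
    (h : ∀ r, P.sharp (powRoot p r δ) ^ n ∈ (maximalIdeal R).map φ) : x = 0 := by
  by_contra hx
  obtain ⟨m, hm⟩ := exists_notMem_maximalIdeal_pow (pow_ne_zero n hx)
  refine hm (Ideal.pow_le_pow_right (Nat.lt_pow_self (Fact.out : p.Prime).one_lt).le ?_)
  obtain ⟨k, hk⟩ := Nat.exists_eq_succ_of_ne_zero (pow_pos (Fact.out : p.Prime).pos m).ne'
  have hmem : φ (x ^ n) ∈ (maximalIdeal R ^ p ^ m).map φ := by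
    rw [map_pow, Ideal.map_pow]
    refine Ideal.mem_of_dvd _ (pow_dvd_pow_of_dvd hδ n) ?_
    have hpow := Ideal.pow_mem_pow (h m) (p ^ m)
    rwa [← pow_mul, mul_comm, pow_mul, ← map_pow, powRoot_pow] at hpow
  rw [hk] at hmem ⊢
  exact (P.flatModulo_natCast_pow hflat k).mem_of_map_mem_map
    (hfaithful.map_maximalIdeal_ne_top hp) (Ideal.pow_mem_pow hp _) hmem

/-- The hypotheses on `y₀` and `y i` say that `y₀ / γ♯` and `y i / γ♯` are almost integral over `T`,
so that they almost lie in `T` by the Riemann extension property. -/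
theorem mem_of_mul_eq_sum (hp : (p : R) ∈ maximalIdeal R) (hp0 : (p : R) ≠ 0)
    (hflat : FlatModulo φ (p : R)) (hfaithful : FaithfulModulo φ (p : R)) {J : Ideal R} {m n : ℕ}
    (hJ : (p : R) ^ (m + 1) ∈ J) {u c g : R} (hc : c ∉ maximalIdeal R ^ (n + 1)) (hg : g ≠ 0)
    {γ : E} (hγ : φ g = P.sharp γ) {ι : Type*} [Fintype ι] {j : ι → R} (hj : ∀ i, j i ∈ J)
    {y₀ : T} {y : ι → T} (hy₀ : ∀ r, P.sharp γ ^ (p ^ r - 1) ∣ y₀ ^ p ^ r)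
    (hy : ∀ i r, P.sharp γ ^ (p ^ r - 1) ∣ y i ^ p ^ r)
    (hpow : y₀ ^ (n + 1) = φ g ^ (n + 1) * φ c) (hrel : y₀ * φ u = ∑ i, φ (j i) * y i) :
    u ∈ J := by
  by_contra hu
  obtain ⟨N, hN⟩ := hflat.exists_pow_dvd_of_pow_dvd_mul
    (by rw [map_natCast]; exact P.natCast_mem_nonZeroDivisors) (pow_ne_zero (n + 1) hg)
    (max m n + 1)
  rw [map_pow] at hN
  have hdvd : P.sharp (γ * P.t) ∣ φ (g * p) := by
    rw [map_mul, map_mul, map_natCast, hγ]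
    exact mul_dvd_mul_left _ P.associated_sharp_t.dvd
  refine mul_ne_zero hg hp0 (P.eq_zero_of_forall_sharp_powRoot_mem hp hflat hfaithful hdvd
    (n := n + 1) fun r => ?_)
  obtain ⟨a₀, b₀, hab₀⟩ := P.exists_sharp_powRoot_mul_eq γ y₀ hy₀ r N
  choose a b hab using fun i => P.exists_sharp_powRoot_mul_eq γ (y i) (hy i) r N
  simp only [← hγ, ← map_natCast φ] at hab₀ hab
  have ha₀ : a₀ ∈ (maximalIdeal R).map φ :=
    (P.flatModulo_natCast_pow hflat m).mem_map_maximalIdeal_of_mul_eq_sum hJ hu hj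
      (fun x hx => (pow_dvd_pow _ (by lia)).trans
        (hN x (hx.trans (mul_dvd_mul_right (dvd_pow_self _ n.succ_ne_zero) x)))) hab₀ hab hrel
  exact (P.flatModulo_natCast_pow hflat n).pow_mem_map_maximalIdeal_of_pow_eq hp hc
    (fun x hx => (pow_dvd_pow _ (by lia)).trans (hN x hx)) hab₀ hpow ha₀

end Untilt

end UntiltDescent

section RootsInUntilts

open Polynomial

universe u

variable {p : ℕ} [Fact p.Prime] {E : Type u} {T : Type*} [CommRing E] [CharP E p]
  [PerfectRing E p] [CommRing T] (P : Untilt p E T) {R : Type*} [CommRing R] {φ : R →+* T}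

include P in
theorem Untilt.exists_comp_eval₂_sharp_eq_zero (hp : ¬ IsUnit (p : R))
    (hflat : FlatModulo φ (p : R)) (hfaithful : FaithfulModulo φ (p : R)) {F : T[X]}
    (hF : F.Monic) (hF0 : 0 < F.natDegree) :
    ∃ (E' T' : Type u) (_ : CommRing E') (_ : CharP E' p) (_ : PerfectRing E' p) (_ : CommRing T')
      (P' : Untilt p E' T') (Θ : T →+* T') (z : E'), FlatModulo (Θ.comp φ) (p : R) ∧
      FaithfulModulo (Θ.comp φ) (p : R) ∧ F.eval₂ Θ (P'.sharp z) = 0 := by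
  have hpT : ¬ IsUnit (p : T) := by simpa using hfaithful.not_isUnit_map hp
  obtain ⟨E', T', _, _, _, _, P', Θ, z, hΘflat, hΘfaithful, hz⟩ :=
    P.exists_eval₂_sharp_eq_zero hpT hF hF0
  exact ⟨E', T', _, ‹_›, ‹_›, _, P', Θ, z, hflat.comp (by rwa [map_natCast]),
    hfaithful.comp (by rwa [map_natCast]), hz⟩

include P in
theorem Untilt.exists_eval₂_eq_zero_and_eq_sharp (hp : ¬ IsUnit (p : R))
    (hflat : FlatModulo φ (p : R)) (hfaithful : FaithfulModulo φ (p : R)) {f : R[X]}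
    (hf : f.Monic) (hf0 : 0 < f.natDegree) (g : R) :
    ∃ (E' T' : Type u) (_ : CommRing E') (_ : CharP E' p) (_ : PerfectRing E' p) (_ : CommRing T')
      (P' : Untilt p E' T') (φ' : R →+* T') (z : T') (γ : E'), FlatModulo φ' (p : R) ∧
      FaithfulModulo φ' (p : R) ∧ f.eval₂ φ' z = 0 ∧ φ' g = P'.sharp γ := by
  have := hfaithful.nontrivial hp
  obtain ⟨E₁, T₁, _, _, _, _, P₁, Θ₁, z, hflat₁, hfaithful₁, hz⟩ :=
    P.exists_comp_eval₂_sharp_eq_zero hp hflat hfaithful (hf.map φ)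
      (by rwa [hf.natDegree_map])
  have := hfaithful₁.nontrivial hp
  obtain ⟨E₂, T₂, _, _, _, _, P₂, Θ₂, γ, hflat₂, hfaithful₂, hγ⟩ :=
    P₁.exists_comp_eval₂_sharp_eq_zero hp hflat₁ hfaithful₁ (monic_X_sub_C (Θ₁.comp φ g))
      (by rw [natDegree_X_sub_C]; exact one_pos)
  refine ⟨E₂, T₂, _, ‹_›, ‹_›, _, P₂, _, Θ₂ (P₁.sharp z), γ, hflat₂, hfaithful₂, ?_, ?_⟩
  · rw [eval₂_map] at hz
    rw [← hom_eval₂, hz, map_zero]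
  · rw [eval₂_sub, eval₂_X, eval₂_C, sub_eq_zero] at hγ
    exact hγ.symm

end RootsInUntilts

section ClosureIsTrivial

open Polynomial

variable {p : ℕ} {R : Type} [CommRing R] [IsDomain R] {J : Ideal R} {u : R}

theorem exists_rPlus_pow_eq (c : R) {n : ℕ} (hn : n ≠ 0) :
    ∃ d : RPlus R, d ^ n = algebraMap R (RPlus R) c := by
  obtain ⟨d, hd⟩ := IsAlgClosed.exists_pow_nat_eq
    (algebraMap R (AlgebraicClosure (FractionRing R)) c) (Nat.pos_of_ne_zero hn)
  have hint : IsIntegral R d :=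
    .of_pow (Nat.pos_of_ne_zero hn) (by rw [hd]; exact isIntegral_algebraMap)
  exact ⟨⟨d, hint⟩, Subtype.ext hd⟩

omit [IsDomain R] in
theorem exists_finite_subalgebra_of_mem_map {B : Type*} [CommRing B] [Algebra R B]
    [Algebra.IsIntegral R B] {d : B} (h : d * algebraMap R B u ∈ J.map (algebraMap R B)) :
    ∃ A : Subalgebra R B, Module.Finite R A ∧ d ∈ A ∧
      ∃ (k : ℕ) (j : Fin k → R) (s : Fin k → A), (∀ i, j i ∈ J) ∧
        d * algebraMap R B u = ∑ i, algebraMap R B (j i) * s i := by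
  obtain ⟨k, s, x, hs⟩ := (Submodule.mem_span_set' (R := B)).1 h
  choose j hjJ hj using fun i => (x i).2
  let S : Set B := insert d (Set.range s)
  have hS : S.Finite := (Set.finite_range s).insert d
  refine ⟨Algebra.adjoin R S, ?_, Algebra.subset_adjoin (Set.mem_insert _ _), k, j,
    fun i => ⟨s i, Algebra.subset_adjoin (Set.mem_insert_of_mem _ ⟨i, rfl⟩)⟩, hjJ, ?_⟩
  · exact Module.Finite.iff_fg.2
      (fg_adjoin_of_finite hS fun x _ => Algebra.IsIntegral.isIntegral x)
  · rw [← hs]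
    exact Finset.sum_congr rfl fun i _ => by rw [hj, smul_eq_mul, mul_comm]

theorem exists_finite_subalgebra_of_mem_epfIdeal {N : ℕ} (hJ : (p : R) ^ (N + 1) ∈ J)
    (hu : u ∈ epfIdeal p R J) : ∃ c : R, c ≠ 0 ∧ ∀ n : ℕ, n ≠ 0 →
      ∃ A : Subalgebra R (RPlus R), Module.Finite R A ∧ ∃ d : A, d ^ n = algebraMap R A c ∧
        ∃ (k : ℕ) (j : Fin k → R) (s : Fin k → A), (∀ i, j i ∈ J) ∧ u • d = ∑ i, j i • s i := by
  obtain ⟨c, hc0, hc⟩ := hu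
  refine ⟨c, hc0, fun n hn => ?_⟩
  obtain ⟨d, hd⟩ := exists_rPlus_pow_eq c hn
  have hle : Ideal.span {(p : RPlus R) ^ (N + 1)} ≤ J.map (algebraMap R (RPlus R)) := by
    rw [Ideal.span_singleton_le_iff_mem, ← map_natCast (algebraMap R (RPlus R)), ← map_pow]
    exact Ideal.mem_map_of_mem _ hJ
  have hmem := hc n (N + 1) (Nat.pos_of_ne_zero hn) N.succ_pos d hd
  rw [sup_eq_left.2 hle] at hmem
  obtain ⟨A, hA, hdA, k, j, s, hj, hrel⟩ := exists_finite_subalgebra_of_mem_map hmem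
  refine ⟨A, hA, ⟨d, hdA⟩, Subtype.ext hd, k, j, s, hj, Subtype.ext ?_⟩
  simpa [Algebra.smul_def, mul_comm] using hrel

variable [Fact p.Prime] [CharZero R] [IsNoetherianRing R] [IsLocalRing R] {E T : Type}
  [CommRing E] [CharP E p] [PerfectRing E p] [CommRing T] (P : Untilt p E T) {φ : R →+* T}
  (hp : (p : R) ∈ maximalIdeal R) (hflat : FlatModulo φ (p : R))
  (hfaithful : FaithfulModulo φ (p : R))

include P hp hflat hfaithful

theorem mem_of_mem_epfIdeal {N : ℕ} (hJ : (p : R) ^ (N + 1) ∈ J) (hu : u ∈ epfIdeal p R J) :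
    u ∈ J := by
  obtain ⟨c, hc0, hc⟩ := exists_finite_subalgebra_of_mem_epfIdeal hJ hu
  obtain ⟨n, hn⟩ : ∃ n, c ∉ maximalIdeal R ^ (n + 1) :=
    (exists_notMem_maximalIdeal_pow hc0).imp fun n => mt (Ideal.pow_le_pow_right n.le_succ ·)
  obtain ⟨A, _, d, hd, k, j, s, hj, hrel⟩ := hc (n + 1) n.succ_ne_zero
  obtain ⟨f, hf, hf0, g, hg0, G, hG1, hGmul⟩ := exists_linearMap_adjoinRoot (FractionRing R)
    ((integralClosure R (AlgebraicClosure (FractionRing R))).val.comp A.val)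
  obtain ⟨E', T', _, _, _, _, P', φ', z, γ, hflat', hfaithful', hz, hγ⟩ :=
    P.exists_eval₂_eq_zero_and_eq_sharp ((mem_maximalIdeal _).1 hp) hflat hfaithful hf hf0 g
  let ψ : AdjoinRoot f →+* T' := AdjoinRoot.lift φ' z hz
  have hψalg (r : R) : ψ (algebraMap R _ r) = φ' r := AdjoinRoot.lift_of hz
  have hψ (r : R) (x : AdjoinRoot f) : ψ (r • x) = φ' r * ψ x := by
    rw [Algebra.smul_def, map_mul, hψalg]
  have hpow (x : A) (m : ℕ) : ψ (G x) ^ (m + 1) = φ' g ^ m * ψ (G (x ^ (m + 1))) := by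
    rw [← map_pow, pow_succ_eq_smul_of_mul_eq_smul hGmul, hψ, map_pow]
  have hdvd (x : A) (r : ℕ) : P'.sharp γ ^ (p ^ r - 1) ∣ ψ (G x) ^ p ^ r := by
    have hx := hpow x (p ^ r - 1)
    rw [Nat.sub_add_cancel (Nat.one_le_pow _ _ (Fact.out : p.Prime).pos), hγ] at hx
    exact hx ▸ dvd_mul_right _ _
  refine P'.mem_of_mul_eq_sum hp (Nat.cast_ne_zero.2 (Fact.out : p.Prime).ne_zero) hflat'
    hfaithful' hJ hn hg0 hγ hj (hdvd d) (fun i => hdvd (s i)) ?_ ?_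
  · rw [hpow, hd, Algebra.algebraMap_eq_smul_one, map_smul, hG1, hψ, hψalg, pow_succ (φ' g),
      mul_assoc, mul_comm (φ' g)]
  · rw [mul_comm, ← hψ, ← map_smul, hrel, map_sum, map_sum]
    exact Finset.sum_congr rfl fun i _ => by rw [map_smul, hψ]

theorem wepfIdeal_eq_self_of_untilt (I : Ideal R) : wepfIdeal p R I = I := by
  refine Set.Subset.antisymm (fun u hu => mem_of_forall_mem_sup_span_pow hp fun N => ?_)
    fun u hu N _ => ⟨1, one_ne_zero, fun n N _ _ d _ => ?_⟩
  · exact mem_of_mem_epfIdeal P hp hflat hfaithful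
      (Ideal.mem_sup_right (Ideal.mem_span_singleton_self _)) (hu (N + 1) N.succ_pos)
  · exact Ideal.mem_sup_left
      (Ideal.mul_mem_left _ _ (Ideal.mem_map_of_mem _ (Ideal.mem_sup_left hu)))

end ClosureIsTrivial

/-! ### Regular local rings and adjunction of roots -/

section RegularSystem

universe u

theorem natCast_le_of_natCast_succ_le_add_one {n : ℕ} {d : WithBot ℕ∞}
    (h : ((n + 1 : ℕ) : WithBot ℕ∞) ≤ d + 1) : (n : WithBot ℕ∞) ≤ d := by
  induction d with
  | bot => simp at h
  | coe d =>
    have h' : (n : ℕ∞) + 1 ≤ d + 1 := by exact_mod_cast h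
    exact_mod_cast (ENat.add_le_add_iff_right (by simp)).1 h'

theorem exists_isPrime_le_ringKrullDim_quotient {A : Type*} [CommRing A] {n : ℕ}
    (h : (n : WithBot ℕ∞) ≤ ringKrullDim A) :
    ∃ Q : Ideal A, Q.IsPrime ∧ (n : WithBot ℕ∞) ≤ ringKrullDim (A ⧸ Q) := by
  obtain ⟨l, hl⟩ := Order.le_krullDim_iff.1 h
  refine ⟨l.head.asIdeal, l.head.2, ?_⟩
  rw [ringKrullDim_quotient, Order.le_krullDim_iff]
  exact ⟨{ length := l.length
           toFun := fun i => ⟨l i, (PrimeSpectrum.mem_zeroLocus _ _).2 (LTSeries.head_le l i)⟩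
           step := fun i => l.step i }, hl⟩

theorem le_of_ringKrullDim_quotient_le {A : Type*} [CommRing A] {I J : Ideal A} [I.IsPrime]
    (hIJ : I ≤ J) {n : ℕ} (hI : ringKrullDim (A ⧸ I) ≤ n)
    (hJ : (n : WithBot ℕ∞) ≤ ringKrullDim (A ⧸ J)) : J ≤ I := by
  intro a ha
  by_contra haI
  have hsucc := ringKrullDim_succ_le_of_surjective (Ideal.Quotient.factor hIJ)
    (Ideal.Quotient.factor_surjective hIJ) (r := Ideal.Quotient.mk I a)
    (mem_nonZeroDivisors_of_ne_zero fun h => haI (Ideal.Quotient.eq_zero_iff_mem.1 h))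
    (by rwa [Ideal.Quotient.factor_mk, Ideal.Quotient.eq_zero_iff_mem])
  have hle : ((n + 1 : ℕ) : WithBot ℕ∞) ≤ n := by
    refine le_trans ?_ (hsucc.trans hI)
    push_cast
    gcongr
  have : n + 1 ≤ n := by exact_mod_cast hle
  omega

variable {A : Type*} [CommRing A] [IsLocalRing A] {x : A} {xs : List A}

theorem isLocalRing_quotient {I : Ideal A} (hI : I ≤ maximalIdeal A) : IsLocalRing (A ⧸ I) :=
  have : Nontrivial (A ⧸ I) :=
    Ideal.Quotient.nontrivial_iff.2 (hI.trans_lt (maximalIdeal.isMaximal A).ne_top.lt_top).ne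
  .of_surjective' _ Ideal.Quotient.mk_surjective

theorem ringKrullDim_le_length [IsNoetherianRing A] (h : Ideal.ofList xs = maximalIdeal A) :
    ringKrullDim A ≤ (xs.length : WithBot ℕ∞) := by
  classical
  refine (ringKrullDim_le_spanFinrank_maximalIdeal A).trans ?_
  have hcard : ((maximalIdeal A).spanFinrank : ℕ∞) ≤ xs.toFinset.card := by
    rw [← h, ← Set.encard_coe_eq_coe_finsetCard, List.coe_toFinset]
    exact Submodule.spanFinrank_span_le_encard _
  exact_mod_cast (Nat.cast_le.1 hcard).trans xs.toFinset_card_le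

theorem ringKrullDim_le_ringKrullDim_quotient_singleton_add_one [IsNoetherianRing A]
    (hx : x ∈ maximalIdeal A) : ringKrullDim A ≤ ringKrullDim (A ⧸ Ideal.span {x}) + 1 := by
  have h := ringKrullDim_le_ringKrullDim_quotient_add_encard ({x} : Set A)
    (by rwa [IsLocalRing.ringJacobson_eq_maximalIdeal, Set.singleton_subset_iff])
  rwa [Set.encard_singleton] at h

theorem ofList_map_eq_maximalIdeal {C : Type*} [CommRing C] [IsLocalRing C] {f : A →+* C}
    (hf : Function.Surjective f) (hx : f x = 0) (h : Ideal.ofList (x :: xs) = maximalIdeal A) :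
    Ideal.ofList (xs.map f) = maximalIdeal C := by
  rw [← IsLocalRing.map_maximalIdeal_of_surjective f hf, ← h, Ideal.map_ofList, List.map_cons,
    Ideal.ofList_cons, hx, Ideal.span_singleton_zero, bot_sup_eq]

/-- A regular system of parameters of a local ring, as a list of generators of the maximal ideal
which is no longer than the Krull dimension. -/
structure IsRegularSystem (xs : List A) : Prop where
  ofList_eq : Ideal.ofList xs = maximalIdeal A
  length_le : (xs.length : WithBot ℕ∞) ≤ ringKrullDim A

namespace IsRegularSystem

theorem head_mem (h : IsRegularSystem (x :: xs)) : x ∈ maximalIdeal A :=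
  h.ofList_eq ▸ Ideal.subset_span List.mem_cons_self

theorem span_head_le (h : IsRegularSystem (x :: xs)) : Ideal.span {x} ≤ maximalIdeal A :=
  (Ideal.span_singleton_le_iff_mem _).2 h.head_mem

variable [IsNoetherianRing A]

theorem map_quotient (h : IsRegularSystem (x :: xs)) [IsLocalRing (A ⧸ Ideal.span {x})] :
    IsRegularSystem (xs.map (Ideal.Quotient.mk (Ideal.span {x}))) where
  ofList_eq := ofList_map_eq_maximalIdeal Ideal.Quotient.mk_surjective
    (Ideal.Quotient.eq_zero_iff_mem.2 (Ideal.mem_span_singleton_self x)) h.ofList_eq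
  length_le := by
    rw [List.length_map]
    exact natCast_le_of_natCast_succ_le_add_one
      (h.length_le.trans (ringKrullDim_le_ringKrullDim_quotient_singleton_add_one h.head_mem))

theorem head_notMem_of_length_le (h : IsRegularSystem (x :: xs)) {Q : Ideal A} [Q.IsPrime]
    (hQ : ((x :: xs).length : WithBot ℕ∞) ≤ ringKrullDim (A ⧸ Q)) : x ∉ Q := by
  intro hx
  have := isLocalRing_quotient (le_maximalIdeal (Ideal.IsPrime.ne_top (I := Q) inferInstance))
  have hle := hQ.trans (ringKrullDim_le_length (ofList_map_eq_maximalIdeal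
    Ideal.Quotient.mk_surjective (Ideal.Quotient.eq_zero_iff_mem.2 hx) h.ofList_eq))
  rw [List.length_map, List.length_cons] at hle
  have : xs.length + 1 ≤ xs.length := by exact_mod_cast hle
  omega

theorem length_le_ringKrullDim_quotient_sup (h : IsRegularSystem (x :: xs)) {Q : Ideal A}
    [Q.IsPrime] (hQ : ((x :: xs).length : WithBot ℕ∞) ≤ ringKrullDim (A ⧸ Q)) :
    (xs.length : WithBot ℕ∞) ≤ ringKrullDim (A ⧸ Ideal.span {x} ⊔ Q) := by
  have hQm := le_maximalIdeal (Ideal.IsPrime.ne_top (I := Q) inferInstance)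
  have := isLocalRing_quotient hQm
  have hx : Ideal.Quotient.mk Q x ∈ maximalIdeal (A ⧸ Q) := by
    rw [← IsLocalRing.map_maximalIdeal_of_surjective _ Ideal.Quotient.mk_surjective]
    exact Ideal.mem_map_of_mem _ h.head_mem
  have hdim := ringKrullDim_le_ringKrullDim_quotient_singleton_add_one hx
  rw [← Set.image_singleton, ← Ideal.map_span, ringKrullDim_eq_of_ringEquiv
    (DoubleQuot.quotQuotEquivQuotSup Q (Ideal.span {x})), sup_comm] at hdim
  exact natCast_le_of_natCast_succ_le_add_one (hQ.trans hdim)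

/-- The bottom `Q` of a chain of primes of length `dim A` lies in `(x)`, as `A ⧸ (x)` and
`A ⧸ (x, Q)` have the same dimension; since `x ∉ Q`, Nakayama's lemma gives `Q = 0`. -/
theorem isDomain_of_isDomain_quotient (h : IsRegularSystem (x :: xs))
    [IsDomain (A ⧸ Ideal.span {x})] : IsDomain A := by
  have := isLocalRing_quotient h.span_head_le
  have hspan : (Ideal.span {x}).IsPrime := (Ideal.Quotient.isDomain_iff_prime _).1 inferInstance
  obtain ⟨Q, hQprime, hQdim⟩ := exists_isPrime_le_ringKrullDim_quotient h.length_le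
  have hQx : Q ≤ Ideal.span {x} := by
    refine le_sup_right.trans (le_of_ringKrullDim_quotient_le le_sup_left (n := xs.length) ?_
      (h.length_le_ringKrullDim_quotient_sup hQdim))
    simpa using ringKrullDim_le_length h.map_quotient.ofList_eq
  have hQsmul : Q ≤ maximalIdeal A • Q := by
    intro a ha
    obtain ⟨b, rfl⟩ := Ideal.mem_span_singleton.1 (hQx ha)
    exact Submodule.smul_mem_smul h.head_mem
      ((hQprime.mem_or_mem ha).resolve_left (h.head_notMem_of_length_le hQdim))
  obtain rfl : Q = ⊥ := Submodule.eq_bot_of_le_smul_of_le_jacobson_bot (maximalIdeal A) Q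
    (IsNoetherian.noetherian Q) hQsmul (IsLocalRing.maximalIdeal_le_jacobson _)
  exact IsDomain.of_bot_isPrime A

theorem induction_quotient {motive : ∀ (A : Type u) [CommRing A], Prop}
    (field : ∀ (A : Type u) [CommRing A], IsField A → motive A)
    (cons : ∀ (A : Type u) [CommRing A] [IsLocalRing A] [IsNoetherianRing A] (x : A) (xs : List A),
      IsRegularSystem (x :: xs) → motive (A ⧸ Ideal.span {x}) → motive A)
    {A : Type u} [CommRing A] [IsLocalRing A] [IsNoetherianRing A] {xs : List A}
    (h : IsRegularSystem xs) : motive A := by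
  induction hn : xs.length generalizing A with
  | zero =>
    obtain rfl := List.length_eq_zero_iff.1 hn
    exact field A (IsLocalRing.isField_iff_maximalIdeal_eq.2
      (h.ofList_eq.symm.trans Ideal.ofList_nil))
  | succ n ih =>
    obtain ⟨x, xs, rfl⟩ := List.exists_cons_of_length_eq_add_one hn
    have := isLocalRing_quotient h.span_head_le
    exact cons A x xs h (ih h.map_quotient (by simpa using hn))

theorem isDomain (h : IsRegularSystem xs) : IsDomain A :=
  h.induction_quotient (motive := fun A _ => IsDomain A) (fun _ _ hA => hA.isDomain)
    fun _ _ _ _ _ _ h _ => h.isDomain_of_isDomain_quotient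

theorem head_ne_zero (h : IsRegularSystem (x :: xs)) : x ≠ 0 := by
  obtain ⟨Q, _, hQ⟩ := exists_isPrime_le_ringKrullDim_quotient h.length_le
  rintro rfl
  exact h.head_notMem_of_length_le hQ Q.zero_mem

theorem prime_head (h : IsRegularSystem (x :: xs)) : Prime x := by
  have := isLocalRing_quotient h.span_head_le
  have := h.map_quotient.isDomain
  exact (Ideal.span_singleton_prime h.head_ne_zero).1
    ((Ideal.Quotient.isDomain_iff_prime _).1 inferInstance)

end IsRegularSystem

end RegularSystem

section RootClosed

/-- `IsRootClosed p A` says that `A` is closed under `p`-th roots in `A[1/b]` whenever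
`b ^ p ∣ p`: if `(a / b) ^ p` lies in `A` then so does `a / b`. -/
def IsRootClosed (p : ℕ) (A : Type*) [CommRing A] : Prop :=
  ∀ ⦃a b : A⦄, b ^ p ∣ (p : A) → b ^ p ∣ a ^ p → b ∣ a

variable {p : ℕ} [hp : Fact p.Prime] {A : Type*} [CommRing A]

theorem dvd_add_pow_prime {d u v : A} (hd : d ∣ (p : A)) (hu : d ∣ u ^ p) (hv : d ∣ v ^ p) :
    d ∣ (u + v) ^ p := by
  obtain ⟨r, hr⟩ := exists_add_pow_prime_eq hp.out u v
  rw [hr, mul_assoc, mul_assoc]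
  exact dvd_add (dvd_add hu hv) (hd.mul_right _)

theorem IsRootClosed.of_isField (hA : IsField A) : IsRootClosed p A := by
  intro a b _ hba
  have := hA.isDomain
  rcases eq_or_ne b 0 with rfl | hb
  · rw [zero_pow hp.out.ne_zero, zero_dvd_iff] at hba
    rw [eq_zero_of_pow_eq_zero hba]
  · obtain ⟨c, hc⟩ := hA.mul_inv_cancel hb
    exact (IsUnit.of_mul_eq_one c hc).dvd

variable [IsDomain A] {x : A}

theorem exists_eq_mul_add_mul_of_pow_dvd_pow (hx : Prime x)
    (hquot : IsRootClosed p (A ⧸ Ideal.span {x})) {a b : A} (hxb : ¬ x ∣ b)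
    (hbp : b ^ p ∣ (p : A)) (hba : b ^ p ∣ a ^ p) :
    ∃ a₀ a₁, a = b * a₀ + x * a₁ ∧ b ^ p ∣ a₁ ^ p := by
  obtain ⟨c, hc⟩ := hquot (by simpa using map_dvd (Ideal.Quotient.mk (Ideal.span {x})) hbp)
    (by simpa using map_dvd (Ideal.Quotient.mk (Ideal.span {x})) hba)
  obtain ⟨a₀, rfl⟩ := Ideal.Quotient.mk_surjective c
  rw [← map_mul, Ideal.Quotient.eq, Ideal.mem_span_singleton] at hc
  obtain ⟨a₁, ha₁⟩ := hc
  refine ⟨a₀, a₁, by linear_combination ha₁, ?_⟩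
  have hdvd : b ^ p ∣ (a + b * -a₀) ^ p :=
    dvd_add_pow_prime hbp hba (by rw [mul_pow]; exact dvd_mul_right _ _)
  rw [mul_neg, ← sub_eq_add_neg, ha₁, mul_pow] at hdvd
  obtain ⟨u, hu⟩ := hdvd
  obtain ⟨v, rfl⟩ : x ^ p ∣ u := hx.pow_dvd_of_dvd_mul_left (a := b ^ p) p
    (fun h => hxb (hx.dvd_of_dvd_pow h)) (hu ▸ dvd_mul_right _ _)
  exact ⟨v, mul_left_cancel₀ (pow_ne_zero p hx.ne_zero) (by rw [hu]; ring)⟩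

variable [IsLocalRing A] [IsNoetherianRing A]

omit [IsDomain A] in
theorem finiteMultiplicity_of_mem_maximalIdeal (hx : x ∈ maximalIdeal A) {a : A} (ha : a ≠ 0) :
    FiniteMultiplicity x a := by
  by_contra hinf
  obtain ⟨n, hn⟩ := exists_notMem_maximalIdeal_pow ha
  exact hn (Ideal.mem_of_dvd _ (FiniteMultiplicity.not_iff_forall.1 hinf n)
    (Ideal.pow_mem_pow hx n))

theorem dvd_of_pow_dvd_pow_of_not_dvd (hx : Prime x) (hquot : IsRootClosed p (A ⧸ Ideal.span {x}))
    {a b : A} (hxb : ¬ x ∣ b) (hbp : b ^ p ∣ (p : A)) (hba : b ^ p ∣ a ^ p) : b ∣ a := by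
  have happrox : ∀ k a, b ^ p ∣ a ^ p → ∃ a₀ a₁, a = b * a₀ + x ^ k * a₁ := by
    intro k
    induction k with
    | zero => exact fun a _ => ⟨0, a, by simp⟩
    | succ k ih =>
      intro a ha
      obtain ⟨a₀, a₁, rfl, ha₁⟩ := exists_eq_mul_add_mul_of_pow_dvd_pow hx hquot hxb hbp ha
      obtain ⟨c, d, rfl⟩ := ih a₁ ha₁
      exact ⟨a₀ + x * c, d, by ring⟩
  rw [← Ideal.mem_span_singleton]
  refine mem_of_forall_mem_sup_span_pow ((mem_maximalIdeal x).2 hx.not_isUnit) fun k => ?_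
  obtain ⟨a₀, a₁, rfl⟩ := happrox (k + 1) a hba
  exact Submodule.add_mem_sup (Ideal.mul_mem_right _ _ (Ideal.mem_span_singleton_self b))
    (Ideal.mul_mem_right _ _ (Ideal.mem_span_singleton_self _))

theorem IsRootClosed.of_quotient_prime (hx : Prime x)
    (hquot : IsRootClosed p (A ⧸ Ideal.span {x})) : IsRootClosed p A := by
  have hpow : ∀ n (a b : A), ¬ x ∣ b → (x ^ n * b) ^ p ∣ (p : A) → (x ^ n * b) ^ p ∣ a ^ p →
      x ^ n * b ∣ a := by
    intro n
    induction n with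
    | zero => simpa using fun a b => dvd_of_pow_dvd_pow_of_not_dvd hx hquot
    | succ n ih =>
      intro a b hxb hbp hba
      rw [pow_succ', mul_assoc] at hbp hba ⊢
      obtain ⟨a, rfl⟩ : x ∣ a := hx.dvd_of_dvd_pow
        ((dvd_pow (dvd_mul_right _ _) hp.out.ne_zero).trans hba)
      rw [mul_pow x] at hbp
      rw [mul_pow x, mul_pow x] at hba
      exact mul_dvd_mul_left x (ih a b hxb ((dvd_mul_left _ _).trans hbp)
        ((mul_dvd_mul_iff_left (pow_ne_zero p hx.ne_zero)).1 hba))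
  intro a b hbp hba
  rcases eq_or_ne b 0 with rfl | hb
  · rw [zero_pow hp.out.ne_zero, zero_dvd_iff] at hba
    rw [eq_zero_of_pow_eq_zero hba]
  · obtain ⟨c, hc, hxc⟩ := (finiteMultiplicity_of_mem_maximalIdeal
      ((mem_maximalIdeal x).2 hx.not_isUnit) hb).exists_eq_pow_mul_and_not_dvd
    rw [hc] at hbp hba ⊢
    exact hpow _ a c hxc hbp hba

omit [IsDomain A] in
theorem IsRegularSystem.isRootClosed {xs : List A} (h : IsRegularSystem xs) : IsRootClosed p A :=
  h.induction_quotient (motive := fun A _ => IsRootClosed p A) (fun _ _ => .of_isField)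
    fun _ _ _ _ _ _ h hquot => have := h.isDomain; .of_quotient_prime h.prime_head hquot

end RootClosed

section FiniteExtension

variable {A B : Type*} [CommRing A] [CommRing B] {φ : A →+* B}

theorem ringKrullDim_le_of_isIntegral_of_injective (hφ : φ.IsIntegral)
    (hinj : Function.Injective φ) : ringKrullDim A ≤ ringKrullDim B := by
  algebraize [φ]
  refine iSup_le fun l => ?_
  obtain ⟨P, -, hPl⟩ := Ideal.exists_ideal_over_prime_of_isIntegral l.head.asIdeal (⊥ : Ideal B)
    (by rw [← RingHom.ker_eq_comap_bot,
          (RingHom.injective_iff_ker_eq_bot (algebraMap A B)).1 hinj]; exact bot_le)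
  have : P.LiesOver l.head.asIdeal := ⟨hPl.2.symm⟩
  have := hPl.1
  obtain ⟨L, hL, -⟩ := Ideal.exists_ltSeries_of_hasGoingUp l P
  rw [← hL]
  exact le_iSup (fun L : LTSeries (PrimeSpectrum B) => (L.length : WithBot ℕ∞)) L

theorem isNoetherianRing_of_finite [IsNoetherianRing A] (hφ : φ.Finite) : IsNoetherianRing B := by
  algebraize [φ]
  exact .of_finite A B

theorem map_ofList_le_of_map_eq_map_pow {xs : List A} {ys : List B} {n : ℕ}
    (h : xs.map φ = ys.map (· ^ n)) (hn : n ≠ 0) : (Ideal.ofList xs).map φ ≤ Ideal.ofList ys := by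
  rw [Ideal.map_ofList, h]
  refine Ideal.span_le.2 fun z (hz : z ∈ ys.map (· ^ n)) => ?_
  obtain ⟨y, hy, rfl⟩ := List.mem_map.1 hz
  exact Ideal.pow_mem_of_mem (Ideal.ofList ys) (Ideal.subset_span hy) n (Nat.pos_of_ne_zero hn)

theorem ofList_le_radical_of_map_eq_map_pow {xs : List A} {ys : List B} {n : ℕ}
    (h : xs.map φ = ys.map (· ^ n)) : Ideal.ofList ys ≤ ((Ideal.ofList xs).map φ).radical := by
  rw [Ideal.map_ofList, h]
  exact Ideal.span_le.2 fun y hy =>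
    ⟨n, Ideal.subset_span (List.mem_map_of_mem (f := (· ^ n)) hy)⟩

variable [IsLocalRing A]

theorem isLocalRing_of_le_radical_map (hφ : φ.IsIntegral) {J : Ideal B} (hJ : J.IsMaximal)
    (hrad : J ≤ ((maximalIdeal A).map φ).radical) : IsLocalRing B := by
  refine .of_unique_max_ideal ⟨J, hJ, fun M (hM : M.IsMaximal) => ?_⟩
  have hcomap : M.comap φ = maximalIdeal A :=
    eq_maximalIdeal (Ideal.isMaximal_comap_of_isIntegral_of_isMaximal' φ hφ M)
  refine (hJ.eq_of_le hM.ne_top (hrad.trans ?_)).symm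
  exact hM.isPrime.isRadical.radical_le_iff.2 (Ideal.map_le_iff_le_comap.2 hcomap.ge)

theorem isMaximal_of_le_radical_map (hφ : φ.IsIntegral) (hinj : Function.Injective φ) {J : Ideal B}
    (hmap : (maximalIdeal A).map φ ≤ J) (hrad : J ≤ ((maximalIdeal A).map φ).radical)
    (hsurj : ∀ b, ∃ a, b - φ a ∈ J) : J.IsMaximal := by
  have hJ : J ≠ ⊤ := by
    rintro rfl
    rw [top_le_iff, Ideal.radical_eq_top, Ideal.map_eq_top_iff φ hinj hφ] at hrad
    exact (maximalIdeal.isMaximal A).ne_top hrad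
  refine Ideal.isMaximal_iff.2
    ⟨fun h => hJ ((Ideal.eq_top_iff_one J).2 h), fun K b hJK hbJ hbK => ?_⟩
  obtain ⟨a, ha⟩ := hsurj b
  have haunit : IsUnit a := by
    by_contra hau
    have hφa : φ a ∈ J := hmap (Ideal.mem_map_of_mem φ ((mem_maximalIdeal a).2 hau))
    exact hbJ (by simpa using add_mem ha hφa)
  have haK : φ a ∈ K := by simpa using sub_mem hbK (hJK ha)
  exact (Ideal.eq_top_iff_one K).1 (Ideal.eq_top_of_isUnit_mem K haK (haunit.map φ))

theorem IsRegularSystem.of_finite [IsLocalRing B] {xs : List A} (h : IsRegularSystem xs)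
    (hφ : φ.IsIntegral) (hinj : Function.Injective φ) {ys : List B}
    (hys : Ideal.ofList ys = maximalIdeal B) (hlen : ys.length = xs.length) :
    IsRegularSystem ys where
  ofList_eq := hys
  length_le := hlen ▸ h.length_le.trans (ringKrullDim_le_of_isIntegral_of_injective hφ hinj)

end FiniteExtension

section RootExtension

open Polynomial

universe u

/-- A finite flat extension `φ : A → B` such that the `p`-th power of any element of `B` lies in
the image of `A` modulo `p`, like the extensions obtained by adjoining `p`-th roots. -/
structure IsRootExtension (p : ℕ) {A B : Type*} [CommRing A] [CommRing B] (φ : A →+* B) :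
    Prop where
  finite : φ.Finite
  flat : φ.Flat
  injective : Function.Injective φ
  exists_dvd_pow_sub : ∀ b, ∃ a, (p : B) ∣ b ^ p - φ a

variable {p : ℕ} [hp : Fact p.Prime] {A B : Type*} [CommRing A] [CommRing B] {φ : A →+* B}

omit hp in
theorem IsRootExtension.id : IsRootExtension p (RingHom.id A) where
  finite := .id A
  flat := .id A
  injective := Function.injective_id
  exists_dvd_pow_sub b := ⟨b ^ p, by simp⟩

theorem finite_adjoinRoot_of {f : B[X]} (hf : f.Monic) : (AdjoinRoot.of f).Finite := by
  rw [← AdjoinRoot.algebraMap_eq, RingHom.finite_algebraMap]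
  exact hf.finite_adjoinRoot

theorem flat_adjoinRoot_of {f : B[X]} (hf : f.Monic) : (AdjoinRoot.of f).Flat := by
  have := hf.free_adjoinRoot
  rw [← AdjoinRoot.algebraMap_eq, RingHom.flat_algebraMap_iff]
  infer_instance

theorem injective_adjoinRoot_of {f : B[X]} (hf : f.Monic) (hf1 : f ≠ 1) :
    Function.Injective (AdjoinRoot.of f) := by
  have := hf.free_adjoinRoot
  have : Nontrivial (AdjoinRoot f) := Ideal.Quotient.nontrivial_iff.2 fun h =>
    hf1 (hf.eq_one_of_isUnit (Ideal.span_singleton_eq_top.1 h))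
  rw [← AdjoinRoot.algebraMap_eq]
  exact FaithfulSMul.algebraMap_injective B (AdjoinRoot f)

theorem injective_adjoinRoot_of_X_pow_sub_C {n : ℕ} (hn : n ≠ 0) (b : B) :
    Function.Injective (AdjoinRoot.of (X ^ n - C b)) := by
  nontriviality B
  refine injective_adjoinRoot_of (monic_X_pow_sub_C b hn) fun h => hn ?_
  rw [← natDegree_X_pow_sub_C (n := n) (r := b), h, natDegree_one]

theorem adjoinRoot_root_pow (b : B) (n : ℕ) :
    AdjoinRoot.root (X ^ n - C b) ^ n = AdjoinRoot.of (X ^ n - C b) b := by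
  have h := AdjoinRoot.eval₂_root (X ^ n - C b)
  rwa [eval₂_sub, eval₂_pow, eval₂_X, eval₂_C, sub_eq_zero] at h

theorem exists_dvd_pow_sub_adjoinRoot (h : ∀ b, ∃ a, (p : B) ∣ b ^ p - φ a) (s : A)
    (z : AdjoinRoot (X ^ p - C (φ s))) :
    ∃ a, (p : AdjoinRoot (X ^ p - C (φ s))) ∣ z ^ p - AdjoinRoot.of _ (φ a) := by
  induction z using AdjoinRoot.induction_on with | _ f
  induction f using Polynomial.induction_on' with
  | add f g hf hg =>
    obtain ⟨a, u, ha⟩ := hf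
    obtain ⟨b, v, hb⟩ := hg
    obtain ⟨r, hr⟩ := exists_add_pow_prime_eq hp.out (AdjoinRoot.mk (X ^ p - C (φ s)) f)
      (AdjoinRoot.mk _ g)
    refine ⟨a + b, u + v + AdjoinRoot.mk _ f * AdjoinRoot.mk _ g * r, ?_⟩
    rw [map_add, map_add, map_add, hr]
    linear_combination ha + hb
  | monomial n b =>
    obtain ⟨a, ha⟩ := h b
    refine ⟨a * s ^ n, ?_⟩
    have hmonomial : AdjoinRoot.mk (X ^ p - C (φ s)) (monomial n b) ^ p =
        AdjoinRoot.of _ (b ^ p * φ s ^ n) := by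
      rw [← C_mul_X_pow_eq_monomial, map_mul, map_pow, AdjoinRoot.mk_X, AdjoinRoot.mk_C, mul_pow,
        pow_right_comm, adjoinRoot_root_pow, map_mul, map_pow, map_pow]
    have hdvd := map_dvd (AdjoinRoot.of (X ^ p - C (φ s))) (ha.mul_right (φ s ^ n))
    rwa [map_natCast, sub_mul, map_sub, ← hmonomial, ← map_pow φ, ← map_mul φ] at hdvd

theorem IsRootExtension.comp_adjoinRoot (h : IsRootExtension p φ) (s : A) :
    IsRootExtension p ((AdjoinRoot.of (X ^ p - C (φ s))).comp φ) where
  finite := (finite_adjoinRoot_of (monic_X_pow_sub_C _ hp.out.ne_zero)).comp h.finite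
  flat := h.flat.comp (flat_adjoinRoot_of (monic_X_pow_sub_C _ hp.out.ne_zero))
  injective := by
    rw [RingHom.coe_comp]
    exact (injective_adjoinRoot_of_X_pow_sub_C hp.out.ne_zero _).comp h.injective
  exists_dvd_pow_sub := exists_dvd_pow_sub_adjoinRoot h.exists_dvd_pow_sub s

theorem isMaximal_map_adjoinRoot {I : Ideal B} [hI : I.IsMaximal] {b : B}
    (hb : ∀ c, b - c ^ p ∉ I) : (I.map (AdjoinRoot.of (X ^ p - C b))).IsMaximal := by
  let _ := Ideal.Quotient.field I
  have hirr : Irreducible (X ^ p - C (Ideal.Quotient.mk I b)) := by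
    refine X_pow_sub_C_irreducible_of_prime hp.out fun c hc => ?_
    obtain ⟨c, rfl⟩ := Ideal.Quotient.mk_surjective c
    exact hb c (Ideal.Quotient.eq.1 (by rw [← hc, map_pow]))
  have hmax := PrincipalIdealRing.isMaximal_of_irreducible hirr
  refine Ideal.Quotient.maximal_of_isField _ ((AdjoinRoot.quotAdjoinRootEquivQuotPolynomialQuot I
    (X ^ p - C b)).toMulEquiv.isField ?_)
  rw [← Ideal.Quotient.maximal_ideal_iff_isField_quotient]
  simpa using hmax

/-- The maximal ideal of `A[X] / (X ^ p - s)` is generated by that of `A` if `s` is not a `p`-th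
power in the residue field. -/
theorem IsRegularSystem.exists_isRootExtension_residue {A : Type u} [CommRing A] [IsLocalRing A]
    {xs : List A} (h : IsRegularSystem xs) (l : List A) :
    ∃ (B : Type u) (_ : CommRing B) (_ : IsLocalRing B) (φ : A →+* B),
      IsRegularSystem (xs.map φ) ∧ IsRootExtension p φ ∧
        ∀ s ∈ l, ∃ c, φ s - c ^ p ∈ maximalIdeal B := by
  induction l with
  | nil => exact ⟨A, inferInstance, inferInstance, RingHom.id A, by simpa using h, .id, by simp⟩
  | cons s l ih =>
    obtain ⟨B, _, _, φ, hreg, hφ, hl⟩ := ih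
    by_cases hs : ∃ c, φ s - c ^ p ∈ maximalIdeal B
    · exact ⟨B, _, inferInstance, φ, hreg, hφ, List.forall_mem_cons.2 ⟨hs, hl⟩⟩
    push Not at hs
    set ψ := AdjoinRoot.of (X ^ p - C (φ s))
    have hψφ : IsRootExtension p (ψ.comp φ) := hφ.comp_adjoinRoot s
    have hψ : ψ.IsIntegral := .tower_top φ ψ hψφ.finite.to_isIntegral
    have hmax := isMaximal_map_adjoinRoot hs
    have hlocal := isLocalRing_of_le_radical_map hψ hmax Ideal.le_radical
    have hmap := eq_maximalIdeal hmax
    refine ⟨_, inferInstance, hlocal, ψ.comp φ,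
      h.of_finite hψφ.finite.to_isIntegral hψφ.injective ?_ (List.length_map _), hψφ,
      List.forall_mem_cons.2 ⟨⟨AdjoinRoot.root _, ?_⟩, fun t ht => ?_⟩⟩
    · rw [← hmap, ← hreg.ofList_eq, Ideal.map_ofList, List.map_map, RingHom.coe_comp]
    · rw [adjoinRoot_root_pow, RingHom.comp_apply, sub_self]
      exact zero_mem _
    · obtain ⟨c, hc⟩ := hl t ht
      exact ⟨ψ c, by simpa [← hmap] using Ideal.mem_map_of_mem ψ hc⟩

omit hp in
theorem exists_sub_mem_ofList_cons_root {b : B} {ys : List B}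
    (hys : ∀ b, ∃ a, b - φ a ∈ Ideal.ofList ys) (z : AdjoinRoot (X ^ p - C b)) :
    ∃ a, z - AdjoinRoot.of _ (φ a) ∈
      Ideal.ofList (AdjoinRoot.root (X ^ p - C b) :: ys.map (AdjoinRoot.of (X ^ p - C b))) := by
  rw [Ideal.ofList_cons, ← Ideal.map_ofList]
  induction z using AdjoinRoot.induction_on with | _ f
  obtain ⟨a, ha⟩ := hys (f.coeff 0)
  refine ⟨a, ?_⟩
  have hsplit : AdjoinRoot.mk (X ^ p - C b) f - AdjoinRoot.of _ (φ a) =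
      AdjoinRoot.root _ * AdjoinRoot.mk _ f.divX + AdjoinRoot.of _ (f.coeff 0 - φ a) := by
    nth_rw 1 [← f.X_mul_divX_add]
    simp only [map_add, map_mul, map_sub, AdjoinRoot.mk_X, AdjoinRoot.mk_C]
    ring
  rw [hsplit]
  exact Submodule.add_mem_sup (Ideal.mul_mem_right _ _ (Ideal.mem_span_singleton_self _))
    (Ideal.mem_map_of_mem _ ha)

theorem IsRootExtension.exists_pow_roots {B : Type u} [CommRing B] {φ : A →+* B}
    (h : IsRootExtension p φ) (l : List A) :
    ∃ (C : Type u) (_ : CommRing C) (ψ : B →+* C) (ys : List C),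
      IsRootExtension p (ψ.comp φ) ∧ Function.Injective ψ ∧ l.map (ψ.comp φ) = ys.map (· ^ p) ∧
        ∀ c, ∃ b, c - ψ b ∈ Ideal.ofList ys := by
  induction l with
  | nil => exact ⟨B, inferInstance, RingHom.id B, [], h, Function.injective_id, rfl,
      fun c => ⟨c, by simp⟩⟩
  | cons s l ih =>
    obtain ⟨C, _, ψ, ys, hψφ, hinj, hpow, hsurj⟩ := ih
    set χ := AdjoinRoot.of (X ^ p - Polynomial.C (ψ.comp φ s))
    refine ⟨_, inferInstance, χ.comp ψ, AdjoinRoot.root _ :: ys.map χ, hψφ.comp_adjoinRoot s,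
      ?_, ?_, fun c => exists_sub_mem_ofList_cons_root hsurj c⟩
    · rw [RingHom.coe_comp χ ψ]
      exact (injective_adjoinRoot_of_X_pow_sub_C hp.out.ne_zero _).comp hinj
    rw [List.map_cons, List.map_cons, adjoinRoot_root_pow]
    have hmap := congrArg (List.map χ) hpow
    simp only [List.map_map] at hmap ⊢
    congr 1
    simpa [Function.comp_def] using hmap

theorem IsRegularSystem.exists_isRootExtension {A : Type u} [CommRing A] [IsLocalRing A]
    {xs : List A} (h : IsRegularSystem xs) (l : List A) :
    ∃ (B : Type u) (_ : CommRing B) (_ : IsLocalRing B) (φ : A →+* B) (ys : List B),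
      IsRootExtension p φ ∧ IsRegularSystem ys ∧ xs.map φ = ys.map (· ^ p) ∧
        ∀ s ∈ l, ∃ c, φ s - c ^ p ∈ maximalIdeal B := by
  obtain ⟨B, _, _, φ, hreg, hφ, hl⟩ := h.exists_isRootExtension_residue (p := p) l
  obtain ⟨C, _, ψ, ys, hψφ, hinj, hpow, hsurj⟩ := hφ.exists_pow_roots xs
  have hint : ψ.IsIntegral := .tower_top φ ψ hψφ.finite.to_isIntegral
  have hmap : (maximalIdeal B).map ψ = (Ideal.ofList (xs.map φ)).map ψ := by rw [hreg.ofList_eq]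
  have hpow' : (xs.map φ).map ψ = ys.map (· ^ p) := by rw [← hpow, List.map_map, RingHom.coe_comp]
  have hle := hmap.trans_le (map_ofList_le_of_map_eq_map_pow hpow' hp.out.ne_zero)
  have hrad : Ideal.ofList ys ≤ ((maximalIdeal B).map ψ).radical :=
    hmap ▸ ofList_le_radical_of_map_eq_map_pow hpow'
  have hmax := isMaximal_of_le_radical_map hint hinj hle hrad hsurj
  have hlocal := isLocalRing_of_le_radical_map hint hmax hrad
  have hys := eq_maximalIdeal hmax
  refine ⟨C, _, hlocal, ψ.comp φ, ys, hψφ, h.of_finite hψφ.finite.to_isIntegral hψφ.injective hys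
    (by simpa using (congrArg List.length hpow).symm), hpow, fun s hs => ?_⟩
  obtain ⟨c, hc⟩ := hl s hs
  exact ⟨ψ c, by simpa using hys.le (hle (Ideal.mem_map_of_mem ψ hc))⟩

end RootExtension

section Precomplete

variable {A : Type*} [CommRing A] {I J : Ideal A}

theorem isPrecomplete_of_finite (M : Type*) [AddCommGroup M] [Module A M] [Module.Finite A M]
    [IsPrecomplete I A] : IsPrecomplete I M := by
  rw [← AdicCompletion.of_surjective_iff]
  intro y
  obtain ⟨z, rfl⟩ := AdicCompletion.ofTensorProduct_surjective_of_finite I M y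
  induction z using TensorProduct.induction_on with
  | zero => exact ⟨0, by simp⟩
  | tmul r m =>
    obtain ⟨a, rfl⟩ := AdicCompletion.of_surjective I A r
    refine ⟨a • m, ?_⟩
    rw [AdicCompletion.ofTensorProduct_tmul, map_smul]
    ext n
    rfl
  | add y z hy hz =>
    obtain ⟨m, hm⟩ := hy
    obtain ⟨n, hn⟩ := hz
    exact ⟨m + n, by rw [map_add, map_add, hm, hn]⟩

theorem isPrecomplete_of_pow_le [IsPrecomplete I A] (hIJ : I ≤ J) {n : ℕ} (hn : n ≠ 0)
    (hJI : J ^ n ≤ I) : IsPrecomplete J A := by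
  refine ⟨fun f hf => ?_⟩
  simp only [SModEq.sub_mem, smul_eq_mul, Ideal.mul_top] at hf ⊢
  obtain ⟨L, hL⟩ := IsPrecomplete.prec (I := I) (M := A) inferInstance (f := fun k => f (n * k))
    fun {k l} hkl => by
      rw [SModEq.sub_mem, smul_eq_mul, Ideal.mul_top]
      have h := hf (Nat.mul_le_mul_left n hkl)
      rw [pow_mul] at h
      exact Ideal.pow_right_mono hJI k h
  simp only [SModEq.sub_mem, smul_eq_mul, Ideal.mul_top] at hL
  refine ⟨L, fun k => ?_⟩
  have hsub := hf (Nat.le_mul_of_pos_left k (Nat.pos_of_ne_zero hn))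
  simpa using add_mem hsub (Ideal.pow_right_mono hIJ k (hL k))

theorem isPrecomplete_of_finite_of_le_radical [IsPrecomplete I A] {B : Type*} [CommRing B]
    {φ : A →+* B} (hφ : φ.Finite) {J : Ideal B} (hIJ : I.map φ ≤ J) (hJ : J.FG)
    (hJI : J ≤ (I.map φ).radical) : IsPrecomplete J B := by
  algebraize [φ]
  have : IsPrecomplete (I.map φ) B :=
    IsPrecomplete.map_algebraMap_iff.2 (isPrecomplete_of_finite (I := I) B)
  obtain ⟨n, hn⟩ := Ideal.exists_pow_le_of_le_radical_of_fg hJI hJ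
  exact isPrecomplete_of_pow_le hIJ n.succ_ne_zero ((Ideal.pow_le_pow_right n.le_succ).trans hn)

theorem surjective_of_map_maximalIdeal_eq {B S : Type*} [CommRing B] [IsLocalRing B]
    [IsPrecomplete (maximalIdeal B) B] [CommRing S] [IsLocalRing S] [IsNoetherianRing S]
    {f : B →+* S} (hmap : (maximalIdeal B).map f = maximalIdeal S)
    (hf : ∀ s, ∃ b, f b - s ∈ maximalIdeal S) : Function.Surjective f := by
  have : IsHausdorff ((maximalIdeal B).map f) S := hmap ▸ inferInstance
  refine surjective_of_mk_map_comp_surjective f (I := maximalIdeal B) fun s => ?_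
  obtain ⟨s, rfl⟩ := Ideal.Quotient.mk_surjective s
  obtain ⟨b, hb⟩ := hf s
  exact ⟨b, Ideal.Quotient.eq.2 (hmap ▸ hb)⟩

end Precomplete

section FrobeniusExtension

variable {p : ℕ} [hp : Fact p.Prime]

theorem charP_quotient_span_natCast {B : Type*} [CommRing B] (h : ¬ IsUnit (p : B)) :
    CharP (B ⧸ Ideal.span {(p : B)}) p := by
  have : Nontrivial (B ⧸ Ideal.span {(p : B)}) :=
    Ideal.Quotient.nontrivial_iff.2 (mt Ideal.span_singleton_eq_top.1 h)
  refine (CharP.charP_iff_prime_eq_zero hp.out).2 ?_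
  rw [← map_natCast (Ideal.Quotient.mk _)]
  exact Ideal.Quotient.eq_zero_iff_mem.2 (Ideal.mem_span_singleton_self _)

theorem charP_residueField {B : Type*} [CommRing B] [IsLocalRing B]
    (h : (p : B) ∈ maximalIdeal B) : CharP (ResidueField B) p := by
  refine (CharP.charP_iff_prime_eq_zero hp.out).2 ?_
  rwa [← map_natCast (residue B), residue_eq_zero_iff]

section

variable {A B : Type*} [CommRing A] [CommRing B] {φ : A →+* B}

theorem exists_map_eq_pow_add_natCast_mul (hpow : ∀ a, ∃ c, (p : B) ∣ φ a - c ^ p) {xs : List A}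
    {ys : List B} (h : xs.map φ = ys.map (· ^ p)) {x : A} (hx : x ∈ Ideal.ofList xs) :
    ∃ w ∈ Ideal.ofList ys, ∃ μ ∈ Ideal.ofList ys, φ x = w ^ p + p * μ := by
  induction hx using Submodule.span_induction with
  | mem x hx =>
    obtain ⟨y, hy, hyx⟩ := List.mem_map.1 (h ▸ List.mem_map_of_mem (f := φ) hx)
    exact ⟨y, Ideal.subset_span hy, 0, zero_mem _, by simpa using hyx.symm⟩
  | zero => exact ⟨0, zero_mem _, 0, zero_mem _, by simp [hp.out.ne_zero]⟩
  | add u v _ _ hu hv =>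
    obtain ⟨w, hw, μ, hμ, hu⟩ := hu
    obtain ⟨w', hw', μ', hμ', hv⟩ := hv
    obtain ⟨r, hr⟩ := exists_add_pow_prime_eq hp.out w w'
    refine ⟨w + w', add_mem hw hw', μ + μ' - w * (w' * r),
      sub_mem (add_mem hμ hμ') (Ideal.mul_mem_right _ _ hw), ?_⟩
    rw [map_add, hu, hv, hr]
    ring
  | smul r u _ hu =>
    obtain ⟨w, hw, μ, hμ, hu⟩ := hu
    obtain ⟨c, e, hc⟩ := hpow r
    refine ⟨c * w, Ideal.mul_mem_left _ _ hw, e * w ^ p + φ r * μ,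
      add_mem (Ideal.mul_mem_left _ _ (Ideal.pow_mem_of_mem _ hw _ hp.out.pos))
        (Ideal.mul_mem_left _ _ hμ), ?_⟩
    rw [smul_eq_mul, map_mul, hu]
    linear_combination w ^ p * hc

variable [IsLocalRing A] [IsLocalRing B]

theorem exists_sub_pow_mem_maximalIdeal [IsLocalHom φ] (hpB : (p : B) ∈ maximalIdeal B) {ι : Type*}
    [Fintype ι] {s : ι → A}
    (hs : ∀ a : ResidueField A, ∃ c : ι → ResidueField A, a = ∑ i, c i ^ p * residue A (s i))
    (hroot : ∀ i, ∃ d, φ (s i) - d ^ p ∈ maximalIdeal B) (a : A) :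
    ∃ c, φ a - c ^ p ∈ maximalIdeal B := by
  have := charP_residueField hpB
  simp only [← residue_eq_zero_iff, map_sub, sub_eq_zero, map_pow] at hroot ⊢
  choose d hd using hroot
  obtain ⟨c, hc⟩ := hs (residue A a)
  choose c' hc' using fun i => residue_surjective (c i)
  refine ⟨∑ i, φ (c' i) * d i, ?_⟩
  rw [← ResidueField.map_residue, hc, map_sum, map_sum, sum_pow_char]
  refine Finset.sum_congr rfl fun i _ => ?_
  rw [map_mul, map_mul, map_pow, ← hc', ResidueField.map_residue, ResidueField.map_residue, hd,
    mul_pow]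

theorem IsRootExtension.exists_dvd_sub_pow [IsNoetherianRing A] [IsPrecomplete (maximalIdeal B) B]
    (hφ : IsRootExtension p φ) (hpB : (p : B) ∈ maximalIdeal B)
    {xs : List A} {ys : List B} (hxs : Ideal.ofList xs = maximalIdeal A)
    (hys : Ideal.ofList ys = maximalIdeal B) (h : xs.map φ = ys.map (· ^ p))
    (hres : ∀ a, ∃ c, φ a - c ^ p ∈ maximalIdeal B) (a : A) : ∃ c, (p : B) ∣ φ a - c ^ p := by
  have := charP_quotient_span_natCast hpB
  let mk := Ideal.Quotient.mk (Ideal.span {(p : B)})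
  have mk_eq_iff {b c : B} : mk b = mk c ↔ (p : B) ∣ b - c := by
    rw [Ideal.Quotient.eq, Ideal.mem_span_singleton]
  let g : A →+* (mk.comp φ).range := (mk.comp φ).rangeRestrict
  have hg : Function.Surjective g := RingHom.rangeRestrict_surjective _
  let f : B →+* (mk.comp φ).range := ((frobenius _ p).comp mk).codRestrict _ fun b => by
    obtain ⟨a, ha⟩ := hφ.exists_dvd_pow_sub b
    exact ⟨a, (mk_eq_iff.2 ha).symm⟩
  have f_eq_g_iff {b : B} {a : A} : f b = g a ↔ (p : B) ∣ b ^ p - φ a := by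
    rw [Subtype.ext_iff, ← mk_eq_iff, map_pow]
    rfl
  have := isNoetherianRing_of_surjective A _ g hg
  have : Nontrivial (B ⧸ Ideal.span {(p : B)}) := CharP.nontrivial_of_char_ne_one hp.out.ne_one
  have := IsLocalRing.of_surjective' g hg
  have hmapg := IsLocalRing.map_maximalIdeal_of_surjective g hg
  have hlist : ys.map f = xs.map g := by
    refine List.map_injective_iff.2 Subtype.val_injective ?_
    have hmk := congrArg (List.map mk) h
    simp only [List.map_map, Function.comp_def, map_pow] at hmk ⊢
    exact hmk.symm
  have hmapf : (maximalIdeal B).map f = maximalIdeal (mk.comp φ).range := by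
    rw [← hmapg, ← hxs, ← hys, Ideal.map_ofList, Ideal.map_ofList, hlist]
  have hf : Function.Surjective f := surjective_of_map_maximalIdeal_eq hmapf fun s => by
    obtain ⟨a, rfl⟩ := hg s
    obtain ⟨c, hc⟩ := hres a
    obtain ⟨b, hb⟩ := hφ.exists_dvd_pow_sub c
    refine ⟨c, ?_⟩
    rw [f_eq_g_iff.2 hb, ← map_sub, ← hmapg]
    refine Ideal.mem_map_of_mem g ?_
    have hab : φ (b - a) ∈ maximalIdeal B := by
      have hpdvd := Ideal.mem_of_dvd _ hb hpB
      simpa using neg_mem (add_mem hc hpdvd)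
    exact fun hu => hab (hu.map φ)
  obtain ⟨c, hc⟩ := hf (g a)
  exact ⟨c, by simpa using (f_eq_g_iff.1 hc).neg_right⟩

end

/-- A finite flat extension `φ : A → B` such that all elements of `A` become `p`-th powers modulo
`p` in `B`, and `p` itself becomes the `p`-th power of an element up to a unit. -/
structure IsFrobeniusExtension (p : ℕ) {A B : Type*} [CommRing A] [CommRing B] (φ : A →+* B) :
    Prop where
  finite : φ.Finite
  flat : φ.Flat
  injective : Function.Injective φ
  exists_dvd_sub_pow : ∀ a, ∃ c, (p : B) ∣ φ a - c ^ p
  exists_pow_eq : ∃ w u : B, IsUnit u ∧ w ^ p = p * u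

/-- The complete regular local rings with residue field F-finite of characteristic `p`. -/
structure IsCompleteRegular (p : ℕ) (A : Type) [CommRing A] [IsLocalRing A] : Prop where
  isNoetherianRing : IsNoetherianRing A
  exists_isRegularSystem : ∃ xs : List A, IsRegularSystem xs
  isPrecomplete : IsPrecomplete (maximalIdeal A) A
  fFinite : FFinite p (ResidueField A)
  natCast_mem : (p : A) ∈ maximalIdeal A

variable {A : Type} [CommRing A] [IsLocalRing A]

omit hp in
theorem fFinite_residueField_of_finite {A : Type*} [CommRing A] {B : Type} [CommRing B]
    [IsLocalRing B] {φ : A →+* B} (hφ : φ.Finite)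
    (h : ∀ a, ∃ c, φ a - c ^ p ∈ maximalIdeal B) : FFinite p (ResidueField B) := by
  algebraize [φ]
  obtain ⟨n, e, he⟩ := Module.Finite.exists_fin (R := A) (M := B)
  refine ⟨n, fun i => residue B (e i), fun b => ?_⟩
  obtain ⟨b, rfl⟩ := residue_surjective b
  obtain ⟨a, rfl⟩ := (Submodule.mem_span_range_iff_exists_fun A).1 (he ▸ Submodule.mem_top (x := b))
  choose c hc using fun i => h (a i)
  refine ⟨fun i => residue B (c i), ?_⟩
  rw [map_sum]
  refine Finset.sum_congr rfl fun i _ => ?_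
  rw [Algebra.smul_def, map_mul, ← map_pow, ← sub_eq_zero, ← sub_mul, ← map_sub]
  exact mul_eq_zero_of_left ((residue_eq_zero_iff _).2 (hc i)) _

theorem IsCompleteRegular.exists_isFrobeniusExtension (hA : IsCompleteRegular p A) :
    ∃ (B : Type) (_ : CommRing B) (_ : IsLocalRing B) (φ : A →+* B),
      IsCompleteRegular p B ∧ IsFrobeniusExtension p φ := by
  obtain ⟨m, s, hs⟩ := hA.fFinite
  obtain ⟨s, rfl⟩ := residue_surjective.comp_left s
  obtain ⟨xs, hxs⟩ := hA.exists_isRegularSystem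
  obtain ⟨B, _, _, φ, ys, hφ, hys, h, hroot⟩ := hxs.exists_isRootExtension (p := p) (List.ofFn s)
  have := hA.isNoetherianRing
  have := hA.isPrecomplete
  have hnoeth : IsNoetherianRing B := isNoetherianRing_of_finite hφ.finite
  have hmap : (maximalIdeal A).map φ ≤ maximalIdeal B :=
    hxs.ofList_eq ▸ hys.ofList_eq ▸ map_ofList_le_of_map_eq_map_pow h hp.out.ne_zero
  have hrad : maximalIdeal B ≤ ((maximalIdeal A).map φ).radical :=
    hxs.ofList_eq ▸ hys.ofList_eq ▸ ofList_le_radical_of_map_eq_map_pow h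
  have : IsLocalHom φ := ((IsLocalRing.local_hom_TFAE φ).out 0 2).2 hmap
  have hpB : (p : B) ∈ maximalIdeal B := by
    simpa using hmap (Ideal.mem_map_of_mem φ hA.natCast_mem)
  have hprec : IsPrecomplete (maximalIdeal B) B :=
    isPrecomplete_of_finite_of_le_radical hφ.finite hmap (IsNoetherian.noetherian _) hrad
  have hres := exists_sub_pow_mem_maximalIdeal (φ := φ) hpB hs fun i => hroot (s i) (by simp)
  have hpow := hφ.exists_dvd_sub_pow hpB hxs.ofList_eq hys.ofList_eq h hres
  refine ⟨B, _, inferInstance, φ, ⟨hnoeth, ⟨ys, hys⟩, hprec,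
    fFinite_residueField_of_finite hφ.finite hres, hpB⟩, hφ.finite, hφ.flat, hφ.injective, hpow, ?_⟩
  obtain ⟨w, -, μ, hμ, hw⟩ := exists_map_eq_pow_add_natCast_mul hpow h
    (hxs.ofList_eq ▸ hA.natCast_mem)
  rw [map_natCast] at hw
  rw [hys.ofList_eq] at hμ
  exact ⟨w, 1 - μ, (isUnit_or_isUnit_one_sub_self μ).resolve_left hμ, by linear_combination -hw⟩

end FrobeniusExtension

/-! ### The perfectoid tower -/

section DirectedUnion

variable {A : ℕ → Type*} [∀ n, CommRing (A n)] {H : Type*} [CommRing H] {j : ∀ n, A n →+* H}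

/-- The ring `H` is the increasing union of the rings `A n`, embedded by `j n`. -/
structure IsDirectedUnion (j : ∀ n, A n →+* H) : Prop where
  injective : ∀ n, Function.Injective (j n)
  monotone_range : Monotone fun n => (j n).range
  exists_mem_range : ∀ h, ∃ n, h ∈ (j n).range

theorem isDirectedUnion_codRestrict_iSup {Ω : Type*} [CommRing Ω] {ι : ∀ n, A n →+* Ω}
    (hinj : ∀ n, Function.Injective (ι n)) (hmono : Monotone fun n => (ι n).range) :
    IsDirectedUnion fun n => (ι n).codRestrict (⨆ n, (ι n).range)
      fun a => le_iSup (fun n => (ι n).range) n ⟨a, rfl⟩ where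
  injective n _ _ h := hinj n (congrArg Subtype.val h)
  monotone_range m n hmn := by
    rintro _ ⟨a, rfl⟩
    obtain ⟨b, hb⟩ := hmono hmn ⟨a, rfl⟩
    exact ⟨b, Subtype.ext hb⟩
  exists_mem_range h := by
    obtain ⟨n, a, ha⟩ := (Subring.mem_iSup_of_directed hmono.directed_le).1 h.2
    exact ⟨n, a, Subtype.ext ha⟩

namespace IsDirectedUnion

theorem exists_comp_eq (hj : IsDirectedUnion j) {κ : Type*} [Finite κ] (h : κ → H) :
    ∃ n, ∃ a : κ → A n, j n ∘ a = h := by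
  have := Fintype.ofFinite κ
  choose m hm using fun i => hj.exists_mem_range (h i)
  choose a ha using fun i => hj.monotone_range (Finset.le_sup (f := m) (Finset.mem_univ i)) (hm i)
  exact ⟨_, a, funext ha⟩

theorem isRootClosed (hj : IsDirectedUnion j) {p : ℕ} (h : ∀ n, IsRootClosed p (A n)) :
    IsRootClosed p H := by
  rintro a b ⟨c, hc⟩ ⟨d, hd⟩
  obtain ⟨n, x, hx⟩ := hj.exists_comp_eq ![a, b, c, d]
  obtain rfl : j n (x 0) = a := congrFun hx 0
  obtain rfl : j n (x 1) = b := congrFun hx 1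
  obtain rfl : j n (x 2) = c := congrFun hx 2
  obtain rfl : j n (x 3) = d := congrFun hx 3
  refine map_dvd (j n) (h n ⟨x 2, hj.injective n ?_⟩ ⟨x 3, hj.injective n ?_⟩)
  · rw [map_natCast, hc, map_mul, map_pow]
  · rw [map_pow, hd, map_mul, map_pow]

theorem natCast_mem_jacobson_bot [∀ n, IsLocalRing (A n)] (hj : IsDirectedUnion j) {p : ℕ}
    (h : ∀ n, (p : A n) ∈ maximalIdeal (A n)) : (p : H) ∈ (⊥ : Ideal H).jacobson := by
  refine Ideal.mem_jacobson_bot.2 fun z => ?_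
  obtain ⟨n, a, rfl⟩ := hj.exists_mem_range z
  have hpA := (jacobson_eq_maximalIdeal (⊥ : Ideal (A n)) bot_ne_top).symm ▸ h n
  have hu := Ideal.mem_jacobson_bot.1 hpA a
  simpa using hu.map (j n)

variable {R : Type*} [CommRing R] {f : ∀ n, R →+* A n} {g : R →+* H}

theorem isIntegral (hj : IsDirectedUnion j) (hg : ∀ n, (j n).comp (f n) = g)
    (h : ∀ n, (f n).IsIntegral) : g.IsIntegral := by
  intro x
  obtain ⟨n, a, rfl⟩ := hj.exists_mem_range x
  obtain ⟨P, hP, hPa⟩ := h n a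
  exact ⟨P, hP, by rw [← hg n, ← Polynomial.hom_eval₂, hPa, map_zero]⟩

theorem flatModulo (hj : IsDirectedUnion j) (hg : ∀ n, (j n).comp (f n) = g) {π : R}
    (h : ∀ n, FlatModulo (f n) π) : FlatModulo g π := by
  intro ι _ a b ⟨y, hy⟩
  obtain ⟨n, x, hx⟩ := hj.exists_comp_eq (fun i : Option ι => i.elim y b)
  obtain rfl : j n (x none) = y := congrFun hx none
  obtain rfl : j n ∘ x ∘ some = b := funext fun i => congrFun hx (some i)
  have hgf (r : R) : g r = j n (f n r) := (RingHom.congr_fun (hg n) r).symm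
  have hgf' (r : ι → R) : g ∘ r = j n ∘ f n ∘ r := funext fun i => hgf (r i)
  obtain ⟨κ, _, α, w, e, hx', hα⟩ := h n ι a (x ∘ some) ⟨x none, hj.injective n (by
    rw [map_mul, ← hgf, ← hy, RingHom.map_dotProduct, hgf'])⟩
  refine ⟨κ, inferInstance, α, j n ∘ w, j n ∘ e, ?_, hα⟩
  ext i
  simp [hx', hgf, Matrix.mulVec, dotProduct]

end IsDirectedUnion

end DirectedUnion

section Tower

theorem FaithfulModulo.of_isIntegral {A B : Type*} [CommRing A] [CommRing B] {f : A →+* B}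
    (hf : f.IsIntegral) (hinj : Function.Injective f) (π : A) : FaithfulModulo f π :=
  fun _ _ h => (Ideal.map_eq_top_iff f hinj hf).1 h

theorem exists_injective_comp_eq_of_finite {A B Ω : Type*} [CommRing A] [CommRing B] [IsDomain A]
    [IsDomain B] [Field Ω] [IsAlgClosed Ω] {φ : A →+* B} (hfin : φ.Finite)
    (hinj : Function.Injective φ) {ι : A →+* Ω} (hι : Function.Injective ι) :
    ∃ κ : B →+* Ω, Function.Injective κ ∧ κ.comp φ = ι := by
  algebraize [φ, ι]
  have : FaithfulSMul A B := (faithfulSMul_iff_algebraMap_injective A B).2 hinj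
  have : FaithfulSMul A Ω := (faithfulSMul_iff_algebraMap_injective A Ω).2 hι
  let κ : B →ₐ[A] Ω := IsAlgClosed.lift
  have hκ : (κ : B →+* Ω).comp φ = ι := RingHom.ext κ.commutes
  refine ⟨κ, ?_, hκ⟩
  rw [RingHom.injective_iff_ker_eq_bot]
  refine Ideal.eq_bot_of_comap_eq_bot (R := A) (eq_bot_iff.2 fun a ha => ?_)
  have hιa : ι a = 0 := by rw [← hκ]; exact ha
  exact (map_eq_zero_iff ι hι).1 hιa

/-- A ring of characteristic `0` at `p` whose `p`-adic completion is perfectoid: `p` is a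
nonzerodivisor in the Jacobson radical, equal to a `p`-th power up to a unit, Frobenius is
surjective modulo `p`, and certain `p`-th roots exist. -/
structure IsPreperfectoid (p : ℕ) (H : Type*) [CommRing H] : Prop where
  natCast_mem_nonZeroDivisors : (p : H) ∈ H⁰
  natCast_mem_jacobson_bot : (p : H) ∈ (⊥ : Ideal H).jacobson
  exists_pow_eq : ∃ w u : H, IsUnit u ∧ w ^ p = p * u
  exists_dvd_sub_pow : ∀ h : H, ∃ c, (p : H) ∣ h - c ^ p
  isRootClosed : IsRootClosed p H

variable {p : ℕ} [hp : Fact p.Prime]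

theorem IsDirectedUnion.isPreperfectoid {A : ℕ → Type} [∀ n, CommRing (A n)]
    [∀ n, IsLocalRing (A n)] {H : Type*} [CommRing H] {j : ∀ n, A n →+* H}
    (hj : IsDirectedUnion j) (hA : ∀ n, IsCompleteRegular p (A n)) {φ : ∀ n, A n →+* A (n + 1)}
    (hφ : ∀ n, IsFrobeniusExtension p (φ n)) (hjφ : ∀ n, (j (n + 1)).comp (φ n) = j n)
    (hpH : (p : H) ∈ H⁰) : IsPreperfectoid p H where
  natCast_mem_nonZeroDivisors := hpH
  natCast_mem_jacobson_bot := hj.natCast_mem_jacobson_bot fun n => (hA n).natCast_mem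
  exists_pow_eq := by
    obtain ⟨w, u, hu, hw⟩ := (hφ 0).exists_pow_eq
    exact ⟨j 1 w, j 1 u, hu.map (j 1), by rw [← map_pow, hw, map_mul, map_natCast]⟩
  exists_dvd_sub_pow h := by
    obtain ⟨n, a, rfl⟩ := hj.exists_mem_range h
    obtain ⟨c, hc⟩ := (hφ n).exists_dvd_sub_pow a
    refine ⟨j (n + 1) c, ?_⟩
    rw [← hjφ n, RingHom.comp_apply, ← map_pow, ← map_sub, ← map_natCast (j (n + 1))]
    exact map_dvd _ hc
  isRootClosed := hj.isRootClosed fun n => by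
    have := (hA n).isNoetherianRing
    obtain ⟨xs, hxs⟩ := (hA n).exists_isRegularSystem
    exact hxs.isRootClosed

/-- A complete regular local ring together with an embedding into `Ω`. -/
structure EmbeddedCompleteRegular (p : ℕ) (Ω : Type*) [CommRing Ω] where
  carrier : Type
  [commRing : CommRing carrier]
  [isLocalRing : IsLocalRing carrier]
  isCompleteRegular : IsCompleteRegular p carrier
  embedding : carrier →+* Ω
  injective : Function.Injective embedding

namespace EmbeddedCompleteRegular

attribute [instance] commRing isLocalRing

variable {Ω : Type*} [Field Ω]

omit hp in
theorem isDomain (S : EmbeddedCompleteRegular p Ω) : IsDomain S.carrier :=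
  S.injective.isDomain S.embedding

theorem exists_isFrobeniusExtension [IsAlgClosed Ω] (S : EmbeddedCompleteRegular p Ω) :
    ∃ (S' : EmbeddedCompleteRegular p Ω) (φ : S.carrier →+* S'.carrier),
      IsFrobeniusExtension p φ ∧ S'.embedding.comp φ = S.embedding := by
  obtain ⟨B, _, _, φ, hB, hφ⟩ := S.isCompleteRegular.exists_isFrobeniusExtension
  have := S.isDomain
  have := hB.isNoetherianRing
  obtain ⟨ys, hys⟩ := hB.exists_isRegularSystem
  have := hys.isDomain
  obtain ⟨κ, hκ, hκφ⟩ := exists_injective_comp_eq_of_finite hφ.finite hφ.injective S.injective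
  exact ⟨⟨B, hB, κ, hκ⟩, φ, hφ, hκφ⟩

end EmbeddedCompleteRegular

theorem IsCompleteRegular.exists_tower {R Ω : Type} [CommRing R] [IsLocalRing R] [Field Ω]
    [IsAlgClosed Ω] (hR : IsCompleteRegular p R) {i : R →+* Ω} (hi : Function.Injective i) :
    ∃ (A : ℕ → Type) (_ : ∀ n, CommRing (A n)) (_ : ∀ n, IsLocalRing (A n))
      (φ : ∀ n, A n →+* A (n + 1)) (ι : ∀ n, A n →+* Ω) (f : ∀ n, R →+* A n),
      (∀ n, IsCompleteRegular p (A n)) ∧ (∀ n, IsFrobeniusExtension p (φ n)) ∧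
      (∀ n, Function.Injective (ι n)) ∧ (∀ n, (ι (n + 1)).comp (φ n) = ι n) ∧
      (∀ n, (ι n).comp (f n) = i) ∧ ∀ n, (f n).Flat ∧ (f n).Finite := by
  choose next φ hφ hcomp using
    EmbeddedCompleteRegular.exists_isFrobeniusExtension (p := p) (Ω := Ω)
  let S (n : ℕ) : EmbeddedCompleteRegular p Ω :=
    n.rec (motive := fun _ => EmbeddedCompleteRegular p Ω) ⟨R, hR, i, hi⟩ fun _ => next
  let f (n : ℕ) : R →+* (S n).carrier :=
    n.rec (motive := fun n => R →+* (S n).carrier) (RingHom.id R) fun n => (φ (S n)).comp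
  refine ⟨fun n => (S n).carrier, inferInstance, inferInstance, fun n => φ (S n),
    fun n => (S n).embedding, f, fun n => (S n).isCompleteRegular, fun n => hφ (S n),
    fun n => (S n).injective, fun n => hcomp (S n), fun n => ?_, fun n => ?_⟩
  · induction n with
    | zero => exact RingHom.comp_id i
    | succ n ih =>
      change (next (S n)).embedding.comp ((φ (S n)).comp (f n)) = i
      rw [← RingHom.comp_assoc, hcomp, ih]
  · induction n with
    | zero => exact ⟨RingHom.Flat.id R, RingHom.Finite.id R⟩
    | succ n ih => exact ⟨ih.1.comp (hφ (S n)).flat, (hφ (S n)).finite.comp ih.2⟩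

theorem IsCompleteRegular.exists_isPreperfectoid {R : Type} [CommRing R] [IsLocalRing R]
    [IsDomain R] [CharZero R] (hR : IsCompleteRegular p R) :
    ∃ (H : Type) (_ : CommRing H) (φ : R →+* H),
      IsPreperfectoid p H ∧ FlatModulo φ (p : R) ∧ FaithfulModulo φ (p : R) := by
  have hinj : Function.Injective (algebraMap R (AlgebraicClosure (FractionRing R))) :=
    (algebraMap (FractionRing R) _).injective.comp (IsFractionRing.injective R _)
  obtain ⟨A, _, _, φ, ι, f, hA, hφ, hι, hιφ, hιf, hf⟩ := hR.exists_tower hinj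
  have hj := isDirectedUnion_codRestrict_iSup hι <| monotone_nat_of_le_succ fun n => by
    rintro _ ⟨a, rfl⟩
    exact ⟨φ n a, RingHom.congr_fun (hιφ n) a⟩
  let H : Subring (AlgebraicClosure (FractionRing R)) := ⨆ n, (ι n).range
  let j n : A n →+* H := (ι n).codRestrict H fun a => le_iSup (fun n => (ι n).range) n ⟨a, rfl⟩
  have hjf (n) : (j n).comp (f n) = (j 0).comp (f 0) :=
    RingHom.ext fun r => Subtype.ext (RingHom.congr_fun ((hιf n).trans (hιf 0).symm) r)
  have hinjH : Function.Injective ((j 0).comp (f 0)) := fun a b hab =>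
    hinj (hιf 0 ▸ congrArg Subtype.val hab)
  have hpH : (p : H) ∈ nonZeroDivisors H := mem_nonZeroDivisors_of_ne_zero fun h0 =>
    hp.out.ne_zero (Nat.cast_injective (R := R) (hinjH (by simpa using h0)))
  refine ⟨H, inferInstance, (j 0).comp (f 0), hj.isPreperfectoid hA hφ (fun n => ?_) hpH,
    hj.flatModulo hjf fun n => .of_flat (hf n).1 _,
    .of_isIntegral (hj.isIntegral hjf fun n => (hf n).2.to_isIntegral) hinjH _⟩
  exact RingHom.ext fun a => Subtype.ext (RingHom.congr_fun (hιφ n) a)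

end Tower

/-! ### Completion and tilting -/

section Completion

variable {H D : Type*} [CommRing H] [CommRing D] {g : H →+* D} {π : H}

section BijectiveModulo

variable (hsurj : ∀ d, ∃ h, g π ∣ d - g h) (hinj : ∀ h, g π ∣ g h → π ∣ h)

include hsurj hinj

theorem dvd_of_map_dvd_map {x y : H} (hx : x ∣ π) (h : g x ∣ g y) : x ∣ y := by
  obtain ⟨d, hd⟩ := h
  obtain ⟨k, r, hr⟩ := hsurj d
  have hk : π ∣ y - x * k := hinj _ ⟨g x * r, by
    rw [map_sub, map_mul]
    linear_combination hd + g x * hr⟩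
  exact (dvd_sub_left (dvd_mul_right x k)).1 (hx.trans hk)

theorem dvd_of_map_dvd_map_self (hreg : g π ∈ D⁰) (hjac : π ∈ (⊥ : Ideal H).jacobson) {x : H}
    (h : g x ∣ g π) : x ∣ π := by
  obtain ⟨d, hd⟩ := h
  obtain ⟨k, r, hr⟩ := hsurj d
  obtain ⟨k', r', hr'⟩ := hsurj r
  have hmap : g (π - x * (k + π * k')) = g π * (g π * (g x * r')) := by
    simp only [map_sub, map_mul, map_add]
    linear_combination hd + g x * hr + g π * g x * hr'
  obtain ⟨l, hl⟩ := hinj _ ⟨_, hmap⟩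
  obtain ⟨l', rfl⟩ := hinj l ⟨g x * r', (mul_cancel_left_mem_nonZeroDivisors hreg).1 (by
    rw [← map_mul, ← hl, hmap])⟩
  have hu : IsUnit (π * -l' + 1) := Ideal.mem_jacobson_bot.1 hjac (-l')
  exact (hu.dvd_mul_right).1 ⟨k + π * k', by linear_combination hl⟩

end BijectiveModulo

theorem associated_of_dvd_sub_of_pow_dvd {π b c : D} (hjac : π ∈ (⊥ : Ideal D).jacobson)
    (hbc : π ∣ b - c) {n : ℕ} (hn : 2 ≤ n) (hb : b ^ n ∣ π) : Associated b c := by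
  obtain ⟨e, he⟩ := hbc
  obtain ⟨s, rfl⟩ := hb
  obtain ⟨m, rfl⟩ := Nat.exists_eq_add_of_le' hn
  have hmem : b ^ (m + 1) * s * e ∈ (⊥ : Ideal D).jacobson := by
    refine Ideal.isRadical_jacobson ⊥ ⟨2, Ideal.mem_of_dvd _ ⟨b ^ m * s * e ^ 2, ?_⟩ hjac⟩
    ring
  have hu : IsUnit (1 - b ^ (m + 1) * s * e) := by
    simpa [sub_eq_neg_add] using Ideal.mem_jacobson_bot.1 hmem (-1)
  exact ⟨hu.unit, by rw [IsUnit.unit_spec]; linear_combination he⟩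

variable {p : ℕ} [hp : Fact p.Prime]

theorem IsRootClosed.of_bijective_mod (h : IsRootClosed p H) (hH : (p : H) ∈ (⊥ : Ideal H).jacobson)
    (hD : (p : D) ∈ (⊥ : Ideal D).jacobson) (hreg : (p : D) ∈ D⁰)
    (hsurj : ∀ d, ∃ h, (p : D) ∣ d - g h) (hinj : ∀ h, (p : D) ∣ g h → (p : H) ∣ h) :
    IsRootClosed p D := by
  rw [← map_natCast g] at hreg hsurj hinj
  intro a b hb hba
  obtain ⟨β, hβ⟩ := hsurj b
  obtain ⟨α, hα⟩ := hsurj a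
  rw [map_natCast] at hα hβ
  have hbβ : Associated b (g β) := associated_of_dvd_sub_of_pow_dvd hD hβ hp.out.two_le hb
  have hβp : β ^ p ∣ (p : H) := dvd_of_map_dvd_map_self hsurj hinj hreg hH <| by
    rwa [map_pow, map_natCast, ← (hbβ.pow_pow (n := p)).dvd_iff_dvd_left]
  have hβα : β ∣ α := h hβp <| dvd_of_map_dvd_map hsurj hinj hβp <| by
    rw [map_pow, map_pow, ← (hbβ.pow_pow (n := p)).dvd_iff_dvd_left]
    exact (dvd_iff_dvd_of_dvd_sub (hb.trans (hα.trans (sub_dvd_pow_sub_pow _ _ p)))).1 hba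
  have hbp : b ∣ a - g α := ((dvd_pow_self b hp.out.ne_zero).trans hb).trans hα
  exact (dvd_iff_dvd_of_dvd_sub hbp).2 (hbβ.dvd_iff_dvd_left.2 (map_dvd g hβα))

theorem IsPreperfectoid.of_bijective_mod (h : IsPreperfectoid p H)
    (hD : (p : D) ∈ (⊥ : Ideal D).jacobson) (hreg : (p : D) ∈ D⁰)
    (hsurj : ∀ d, ∃ h, (p : D) ∣ d - g h) (hinj : ∀ h, (p : D) ∣ g h → (p : H) ∣ h) :
    IsPreperfectoid p D where
  natCast_mem_nonZeroDivisors := hreg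
  natCast_mem_jacobson_bot := hD
  exists_pow_eq := by
    obtain ⟨w, u, hu, hw⟩ := h.exists_pow_eq
    exact ⟨g w, g u, hu.map g, by rw [← map_pow, hw, map_mul, map_natCast]⟩
  exists_dvd_sub_pow d := by
    obtain ⟨x, hx⟩ := hsurj d
    obtain ⟨c, hc⟩ := h.exists_dvd_sub_pow x
    have hgc : (p : D) ∣ g x - g c ^ p := by simpa using map_dvd g hc
    exact ⟨g c, by simpa using dvd_add hx hgc⟩
  isRootClosed := h.isRootClosed.of_bijective_mod h.natCast_mem_jacobson_bot hD hreg hsurj hinj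

end Completion

section PrincipalCompletion

variable {H : Type*} [CommRing H]

/-- The completion of a ring along the principal ideal generated by `π`. -/
abbrev PrincipalCompletion (π : H) : Type _ :=
  AdicCompletion (Ideal.span {π}) H

namespace PrincipalCompletion

/-- The canonical map from a ring to its completion along `π`. -/
noncomputable abbrev of (π : H) : H →+* PrincipalCompletion π :=
  algebraMap H (PrincipalCompletion π)

variable {π : H}

theorem map_of_span_singleton : (Ideal.span {π}).map (of π) = Ideal.span {of π π} := by
  rw [Ideal.map_span, Set.image_singleton]

theorem of_self_dvd_iff {x : PrincipalCompletion π} :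
    of π π ∣ x ↔ AdicCompletion.evalOneₐ (Ideal.span {π}) x = 0 := by
  rw [← Ideal.mem_span_singleton, ← map_of_span_singleton,
    ← AdicCompletion.ker_evalOneₐ_eq_map _ (Submodule.fg_span_singleton π), RingHom.mem_ker]
  rfl

theorem exists_of_self_dvd_sub (x : PrincipalCompletion π) : ∃ h, of π π ∣ x - of π h := by
  obtain ⟨h, hh⟩ := Ideal.Quotient.mk_surjective (AdicCompletion.evalOneₐ _ x)
  refine ⟨h, of_self_dvd_iff.2 ?_⟩
  rw [map_sub, ← hh]
  exact sub_self _

theorem dvd_of_of_self_dvd_of {h : H} (hh : of π π ∣ of π h) : π ∣ h := by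
  rw [← Ideal.mem_span_singleton, ← Ideal.Quotient.eq_zero_iff_mem]
  exact of_self_dvd_iff.1 hh

theorem isAdicComplete_span_of_self :
    IsAdicComplete (Ideal.span {of π π}) (PrincipalCompletion π) := by
  rw [← map_of_span_singleton]
  exact AdicCompletion.isAdicComplete_self _ (Submodule.fg_span_singleton π)

theorem of_self_mem_nonZeroDivisors (hπ : π ∈ H⁰) : of π π ∈ (PrincipalCompletion π)⁰ := by
  refine mem_nonZeroDivisors_iff_left.2 fun a ha => ?_
  obtain ⟨s, rfl⟩ := AdicCompletion.mk_surjective _ _ a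
  refine AdicCompletion.ext_evalₐ fun n => ?_
  have hdvd : π ^ (n + 1) ∣ π * s (n + 1) := by
    rw [← Ideal.mem_span_singleton, ← Ideal.span_singleton_pow, ← Ideal.Quotient.eq_zero_iff_mem,
      map_mul, ← AdicCompletion.evalₐ_mk]
    simpa using congrArg (AdicCompletion.evalₐ (Ideal.span {π}) (n + 1)) ha
  rw [pow_succ', dvd_cancel_left_mem_nonZeroDivisors hπ] at hdvd
  have hsub : π ^ n ∣ s n - s (n + 1) := by
    simpa [SModEq.sub_mem, Ideal.span_singleton_pow, Ideal.mem_span_singleton] using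
      s.2 n.le_succ
  rw [map_zero, AdicCompletion.evalₐ_mk, Ideal.Quotient.eq_zero_iff_mem,
    Ideal.span_singleton_pow, Ideal.mem_span_singleton]
  exact (dvd_iff_dvd_of_dvd_sub hsub).2 hdvd

theorem flatModulo_of : FlatModulo (of π) π :=
  .of_bijective_mod exists_of_self_dvd_sub fun _ => dvd_of_of_self_dvd_of

theorem faithfulModulo_of : FaithfulModulo (of π) π := by
  intro 𝔞 hπ h
  have hmk : 𝔞.map (Ideal.Quotient.mk (Ideal.span {π})) = ⊤ := by
    have := congrArg (Ideal.map (AdicCompletion.evalOneₐ (Ideal.span {π})).toRingHom) h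
    rwa [Ideal.map_map, Ideal.map_top] at this
  have hsurj := Ideal.Quotient.mk_surjective (I := Ideal.span {π})
  refine (Ideal.map_eq_top_iff_of_ker_le _ ?_ (RingHom.isIntegral_of_surjective _ hsurj)).1 hmk
  rwa [Ideal.mk_ker, Ideal.span_singleton_le_iff_mem]

end PrincipalCompletion

variable {p : ℕ}

theorem isAdicComplete_principalCompletion_natCast :
    IsAdicComplete (Ideal.span {(p : PrincipalCompletion (p : H))})
      (PrincipalCompletion (p : H)) := by
  simpa only [map_natCast] using PrincipalCompletion.isAdicComplete_span_of_self (π := (p : H))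

theorem IsPreperfectoid.principalCompletion [Fact p.Prime] (h : IsPreperfectoid p H) :
    IsPreperfectoid p (PrincipalCompletion (p : H)) := by
  have := isAdicComplete_principalCompletion_natCast (H := H) (p := p)
  refine h.of_bijective_mod (g := PrincipalCompletion.of (p : H))
    (IsAdicComplete.le_jacobson_bot _ (Ideal.mem_span_singleton_self _)) ?_ ?_ ?_
  · simpa only [map_natCast] using
      PrincipalCompletion.of_self_mem_nonZeroDivisors h.natCast_mem_nonZeroDivisors
  · simpa only [map_natCast] using PrincipalCompletion.exists_of_self_dvd_sub (π := (p : H))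
  · simpa only [map_natCast] using
      fun h => PrincipalCompletion.dvd_of_of_self_dvd_of (π := (p : H)) (h := h)

end PrincipalCompletion

section KernelGenerator

variable {A : Type*} [CommRing A] {I : Ideal A}

theorem isHausdorff_ideal (J : Ideal A) [IsHausdorff I A] : IsHausdorff I J where
  haus' x hx := by
    refine Subtype.ext (IsHausdorff.haus (I := I) inferInstance (x : A) fun n => ?_)
    have := Submodule.mem_map_of_mem (f := J.subtype) (SModEq.zero.1 (hx n))
    rw [Submodule.map_smul''] at this
    exact SModEq.zero.2 (Submodule.smul_mono le_rfl le_top this)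

theorem le_span_singleton_of_isAdicComplete [IsAdicComplete I A] {J : Ideal A} {ξ : A}
    (hξ : ξ ∈ J) (h : ∀ x ∈ J, ∃ b, x - b * ξ ∈ I • J) : J ≤ Ideal.span {ξ} := by
  have := isHausdorff_ideal (I := I) J
  let f : A →ₗ[A] J := LinearMap.toSpanSingleton A J ⟨ξ, hξ⟩
  have hf : Function.Surjective f := by
    refine surjective_of_mkQ_comp_surjective (I := I) fun y => ?_
    obtain ⟨⟨x, hx⟩, rfl⟩ := Submodule.mkQ_surjective _ y
    obtain ⟨b, hb⟩ := h x hx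
    refine ⟨b, ((Submodule.Quotient.eq _).2 ?_).symm⟩
    have hmap : (I • ⊤ : Submodule A J).map J.subtype = I • J := by
      rw [Submodule.map_smul'', Submodule.map_top, Submodule.range_subtype]
    rw [← hmap] at hb
    obtain ⟨z, hz, hzx⟩ := hb
    rwa [show (⟨x, hx⟩ - f b : J) = z from Subtype.ext hzx.symm]
  intro x hx
  obtain ⟨b, hb⟩ := hf ⟨x, hx⟩
  exact Ideal.mem_span_singleton'.2 ⟨b, congrArg Subtype.val hb⟩

end KernelGenerator

section Tilt

variable {p : ℕ} [hp : Fact p.Prime] {D : Type*} [CommRing D] [Fact ¬IsUnit (p : D)]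

theorem exists_preTilt_coeff_eq {f : ℕ → ModP D p} (hf : ∀ n, f (n + 1) ^ p = f n) :
    ∃ x : PreTilt D p, ∀ n, PreTilt.coeff n x = f n :=
  ⟨(⟨f, hf⟩ : Perfection (ModP D p) p), fun _ => rfl⟩

theorem preTilt_ext {x y : PreTilt D p} (h : ∀ n, PreTilt.coeff n x = PreTilt.coeff n y) :
    x = y :=
  Perfection.ext h

theorem isUnit_of_isUnit_coeff_zero {x : PreTilt D p} (h : IsUnit (PreTilt.coeff 0 x)) :
    IsUnit x := by
  have hu (n : ℕ) : IsUnit (PreTilt.coeff n x) := by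
    induction n with
    | zero => exact h
    | succ n ih =>
      rw [← PreTilt.coeff_pow_p] at ih
      exact (isUnit_pow_iff hp.out.ne_zero).1 ih
  choose inv hinv using fun n => (hu n).exists_right_inv
  have hpow (n : ℕ) : inv (n + 1) ^ p = inv n := by
    refine (hu n).mul_left_cancel ?_
    rw [hinv, ← PreTilt.coeff_pow_p, ← mul_pow, hinv, one_pow]
  obtain ⟨y, hy⟩ := exists_preTilt_coeff_eq hpow
  refine IsUnit.of_mul_eq_one y (preTilt_ext fun n => ?_)
  rw [map_mul, map_one, hy, hinv]

omit hp [Fact ¬IsUnit (p : D)] in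
theorem mk_modP_eq_zero_iff {a : D} :
    (Ideal.Quotient.mk (Ideal.span {(p : D)}) a : ModP D p) = 0 ↔ (p : D) ∣ a :=
  Ideal.Quotient.eq_zero_iff_mem.trans Ideal.mem_span_singleton

theorem surjective_frobenius_modP (h : ∀ d : D, ∃ c, (p : D) ∣ d - c ^ p) :
    Function.Surjective (frobenius (ModP D p) p) := by
  intro x
  obtain ⟨d, rfl⟩ := Ideal.Quotient.mk_surjective x
  obtain ⟨c, hc⟩ := h d
  refine ⟨Ideal.Quotient.mk _ c, (sub_eq_zero.1 ?_).symm⟩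
  rw [frobenius_def, ← map_pow, ← map_sub]
  exact mk_modP_eq_zero_iff.2 hc

variable [IsAdicComplete (Ideal.span {(p : D)}) D]

/-- The `p^n`-th root `(x^♯)^(1/p^n) = (x^(1/p^n))^♯` of the untilt of `x`. -/
noncomputable def untiltRoot (n : ℕ) : PreTilt D p →* D :=
  PreTilt.untilt.comp (powRoot p n : PreTilt D p ≃+* PreTilt D p).toMonoidHom

theorem untiltRoot_apply (n : ℕ) (x : PreTilt D p) :
    untiltRoot n x = PreTilt.untilt (powRoot p n x) :=
  rfl

theorem mk_untiltRoot (n : ℕ) (x : PreTilt D p) :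
    (Ideal.Quotient.mk (Ideal.span {(p : D)}) (untiltRoot n x) : ModP D p) =
      PreTilt.coeff n x := by
  rw [untiltRoot_apply, PreTilt.mk_untilt_eq_coeff_zero]
  conv_rhs => rw [← powRoot_pow (p := p) n x, ← iterate_frobenius]
  simpa only [zero_add] using (PreTilt.coeff_iterate_frobenius 0 n (powRoot p n x)).symm

theorem untiltRoot_succ_pow (n : ℕ) (x : PreTilt D p) :
    untiltRoot (n + 1) x ^ p = untiltRoot n x := by
  rw [untiltRoot_apply, untiltRoot_apply, ← map_pow, ← powRoot_add_pow n 1, pow_one]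

theorem untiltRoot_zero (n : ℕ) : untiltRoot n (0 : PreTilt D p) = 0 := by
  rw [untiltRoot_apply, map_zero, ← WittVector.fontaineTheta_teichmuller,
    WittVector.teichmuller_zero, map_zero]

theorem untiltRoot_dvd_untilt (n : ℕ) (x : PreTilt D p) : untiltRoot n x ∣ PreTilt.untilt x :=
  map_dvd PreTilt.untilt (powRoot_dvd_self n x)

variable {t : PreTilt D p}

theorem untiltRoot_mem_nonZeroDivisors (hreg : (p : D) ∈ D⁰)
    (ht : Associated (PreTilt.untilt t) (p : D)) (n : ℕ) : untiltRoot n t ∈ D⁰ :=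
  let ⟨_, hc⟩ := (untiltRoot_dvd_untilt n t).trans ht.dvd
  (mul_mem_nonZeroDivisors.1 (hc ▸ hreg)).1

theorem mem_nonZeroDivisors_preTilt (hreg : (p : D) ∈ D⁰)
    (ht : Associated (PreTilt.untilt t) (p : D)) : t ∈ (PreTilt D p)⁰ := by
  refine mem_nonZeroDivisors_iff_left.2 fun a ha => preTilt_ext fun n => ?_
  have hzero : untiltRoot n t * untiltRoot n a = 0 := by rw [← map_mul, ha, untiltRoot_zero]
  rw [map_zero, ← mk_untiltRoot,
    mem_nonZeroDivisors_iff_left.1 (untiltRoot_mem_nonZeroDivisors hreg ht n) _ hzero]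
  exact map_zero _

theorem untiltRoot_dvd_untiltRoot (hroot : IsRootClosed p D)
    (ht : Associated (PreTilt.untilt t) (p : D)) {a : PreTilt D p}
    (ha : PreTilt.coeff 0 a = 0) (n : ℕ) : untiltRoot n t ∣ untiltRoot n a := by
  have hdvd (n : ℕ) : untiltRoot n t ∣ (p : D) := (untiltRoot_dvd_untilt n t).trans ht.dvd
  induction n with
  | zero => exact (hdvd 0).trans (mk_modP_eq_zero_iff.1 ((mk_untiltRoot 0 a).trans ha))
  | succ n ih =>
    refine hroot ?_ ?_
    · rw [untiltRoot_succ_pow]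
      exact hdvd n
    · rwa [untiltRoot_succ_pow, untiltRoot_succ_pow]

theorem dvd_of_coeff_zero_eq_zero (hroot : IsRootClosed p D) (hreg : (p : D) ∈ D⁰)
    (ht : Associated (PreTilt.untilt t) (p : D)) {a : PreTilt D p}
    (ha : PreTilt.coeff 0 a = 0) : t ∣ a := by
  choose q hq using untiltRoot_dvd_untiltRoot hroot ht ha
  have hpow (n : ℕ) : q (n + 1) ^ p = q n := by
    refine (mul_cancel_left_mem_nonZeroDivisors (untiltRoot_mem_nonZeroDivisors hreg ht n)).1 ?_
    rw [← hq n, ← untiltRoot_succ_pow n t, ← mul_pow, ← hq (n + 1), untiltRoot_succ_pow]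
  obtain ⟨y, hy⟩ := exists_preTilt_coeff_eq (D := D) (p := p)
    (f := fun n => Ideal.Quotient.mk _ (q n)) fun n => by rw [← map_pow, hpow]
  refine ⟨y, preTilt_ext fun n => ?_⟩
  rw [map_mul, hy, ← mk_untiltRoot, ← mk_untiltRoot, hq n, map_mul]

theorem IsPreperfectoid.exists_associated_untilt (h : IsPreperfectoid p D) :
    ∃ t : PreTilt D p, Associated (PreTilt.untilt t) (p : D) := by
  obtain ⟨w, u, hu, hw⟩ := h.exists_pow_eq
  obtain ⟨t, ht⟩ : ∃ t : PreTilt D p, PreTilt.coeff 1 t = Ideal.Quotient.mk _ w :=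
    Perfection.coeff_surjective (surjective_frobenius_modP h.exists_dvd_sub_pow) 1 _
  have hdvd : (p : D) ∣ untiltRoot 1 t - w := by
    rw [← mk_modP_eq_zero_iff, map_sub, sub_eq_zero]
    exact (mk_untiltRoot 1 t).trans ht
  have huntilt : untiltRoot 1 t ^ p = PreTilt.untilt t := by
    rw [untiltRoot_succ_pow, untiltRoot_apply, powRoot_zero_apply]
  obtain ⟨s, hs⟩ := dvd_sub_pow_of_dvd_sub hdvd 1
  rw [pow_one, huntilt] at hs
  have hunit : IsUnit (u + p * s) := by
    obtain ⟨u, rfl⟩ := hu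
    have := (Ideal.mem_jacobson_bot.1 h.natCast_mem_jacobson_bot (s * ↑u⁻¹)).mul u.isUnit
    convert this using 1
    linear_combination (-p * s : D) * u.inv_mul
  refine ⟨t, ?_⟩
  rw [show PreTilt.untilt t = p * (u + p * s) by linear_combination hs + hw]
  exact associated_mul_unit_left (p : D) _ hunit

theorem ker_fontaineTheta_eq_span (hroot : IsRootClosed p D) (hreg : (p : D) ∈ D⁰)
    (ht : Associated (PreTilt.untilt t) (p : D)) {w : WittVector p (PreTilt D p)} (hw : IsUnit w)
    (hgen : WittVector.fontaineTheta D p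
      ((p : WittVector p (PreTilt D p)) + WittVector.teichmuller p t * w) = 0) :
    RingHom.ker (WittVector.fontaineTheta D p) =
      Ideal.span {(p : WittVector p (PreTilt D p)) + WittVector.teichmuller p t * w} := by
  set ξ := (p : WittVector p (PreTilt D p)) + WittVector.teichmuller p t * w
  refine le_antisymm (le_span_singleton_of_isAdicComplete
    (I := Ideal.span {(p : WittVector p (PreTilt D p))}) hgen fun x hx => ?_)
    ((Ideal.span_singleton_le_iff_mem _).2 hgen)
  rw [RingHom.mem_ker] at hx
  obtain ⟨y, hy⟩ := exists_eq_teichmuller_add_natCast_mul x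
  have hcoeff : PreTilt.coeff 0 (WittVector.constantCoeff x) = 0 := by
    have := WittVector.mk_fontaineTheta x
    rw [hx, map_zero] at this
    exact this.symm
  obtain ⟨q, hq⟩ := dvd_of_coeff_zero_eq_zero hroot hreg ht hcoeff
  obtain ⟨v, hv⟩ := hw.exists_right_inv
  rw [hq, map_mul] at hy
  set b := v * WittVector.teichmuller p q
  have hsub : x - b * ξ = p * (y - b) := by
    linear_combination hy - WittVector.teichmuller p t * WittVector.teichmuller p q * hv
  refine ⟨b, hsub ▸ Submodule.smul_mem_smul (Ideal.mem_span_singleton_self _) ?_⟩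
  refine mem_nonZeroDivisors_iff_left.1 hreg _ ?_
  have := congrArg (WittVector.fontaineTheta D p) hsub
  rwa [map_sub, map_mul, hx, hgen, mul_zero, sub_zero, map_mul, map_natCast, eq_comm] at this

theorem IsPreperfectoid.nonempty_untilt (h : IsPreperfectoid p D) :
    Nonempty (Untilt p (PreTilt D p) D) := by
  obtain ⟨t, ht⟩ := h.exists_associated_untilt
  obtain ⟨v, hv⟩ := ht
  have hsurj : Function.Surjective (WittVector.fontaineTheta D p) :=
    surjective_fontaineTheta (surjective_frobenius_modP h.exists_dvd_sub_pow)
  obtain ⟨w, hw⟩ := hsurj (-v)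
  have hwu : IsUnit w := by
    refine isUnit_of_isUnit_constantCoeff (isUnit_of_isUnit_coeff_zero ?_)
    have := WittVector.mk_fontaineTheta w
    rw [hw] at this
    exact this ▸ v.isUnit.neg.map (Ideal.Quotient.mk (Ideal.span {(p : D)}))
  have hgen : WittVector.fontaineTheta D p
      ((p : WittVector p (PreTilt D p)) + WittVector.teichmuller p t * hwu.unit) = 0 := by
    rw [map_add, map_mul, IsUnit.unit_spec, hw, map_natCast,
      WittVector.fontaineTheta_teichmuller, mul_neg, hv, add_neg_cancel]
  exact ⟨{
    theta := WittVector.fontaineTheta D p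
    t := t
    w := hwu.unit
    theta_surjective := hsurj
    ker_theta := ker_fontaineTheta_eq_span h.isRootClosed h.natCast_mem_nonZeroDivisors ⟨v, hv⟩
      hwu.unit.isUnit hgen
    t_mem_nonZeroDivisors :=
      mem_nonZeroDivisors_preTilt h.natCast_mem_nonZeroDivisors ⟨v, hv⟩ }⟩

end Tilt

theorem isCompleteRegular_of_span_range {R : Type} [CommRing R] [IsNoetherianRing R]
    [IsLocalRing R] [IsPrecomplete (maximalIdeal R) R] {d : ℕ} {x : Fin d → R}
    (hd : ringKrullDim R = d) (hx : Ideal.span (Set.range x) = maximalIdeal R) {p : ℕ}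
    (hp : (p : R) ∈ maximalIdeal R) (hk : FFinite p (ResidueField R)) :
    IsCompleteRegular p R where
  isNoetherianRing := inferInstance
  exists_isRegularSystem := ⟨List.ofFn x,
    { ofList_eq := by rw [← hx, Ideal.ofList]; simp only [List.mem_ofFn]; rfl
      length_le := by rw [List.length_ofFn, hd] }⟩
  isPrecomplete := inferInstance
  fFinite := hk
  natCast_mem := hp

/-- The wepf closure is trivial on complete regular local domains of mixed
characteristic `p` with F-finite residue field. Regularity is expressed by the maximal
ideal being generated by `d = dim R` elements. -/
theorem stmt3 (R : Type) [CommRing R] [IsDomain R] [IsNoetherianRing R] [IsLocalRing R]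
    [IsAdicComplete (maximalIdeal R) R]
    (hreg : ∃ (d : ℕ) (x : Fin d → R), ringKrullDim R = d ∧
      Ideal.span (Set.range x) = maximalIdeal R)
    (p : ℕ) [Fact p.Prime] [CharZero R] (hp : (p : R) ∈ maximalIdeal R)
    (hk : FFinite p (ResidueField R)) (I : Ideal R) :
    wepfIdeal p R I = ↑I := by
  obtain ⟨d, x, hd, hx⟩ := hreg
  obtain ⟨H, _, φ, hH, hflat, hfaithful⟩ :=
    (isCompleteRegular_of_span_range hd hx hp hk).exists_isPreperfectoid
  let ψ : R →+* PrincipalCompletion (p : H) := (PrincipalCompletion.of (p : H)).comp φ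
  have hψflat : FlatModulo ψ (p : R) :=
    hflat.comp (by rw [map_natCast]; exact PrincipalCompletion.flatModulo_of)
  have hψfaithful : FaithfulModulo ψ (p : R) :=
    hfaithful.comp (by rw [map_natCast]; exact PrincipalCompletion.faithfulModulo_of)
  have : IsAdicComplete (Ideal.span {(p : PrincipalCompletion (p : H))}) _ :=
    isAdicComplete_principalCompletion_natCast
  have : Fact ¬IsUnit (p : PrincipalCompletion (p : H)) :=
    ⟨by simpa only [map_natCast] using hψfaithful.not_isUnit_map ((mem_maximalIdeal _).1 hp)⟩
  obtain ⟨P⟩ := hH.principalCompletion.nonempty_untilt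
  exact wepfIdeal_eq_self_of_untilt P hp hψflat hψfaithful I
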